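/- (Glimm's global existence theorem.) Let f : ℝⁿ → ℝⁿ be twice continuously differentiable and assume: there exist continuously differentiable maps λ₁,…,λₙ : ℝⁿ → ℝ and r₁,…,rₙ : ℝⁿ → ℝⁿ∖{0} with λ₁(u) < λ₂(u) < ⋯ < λₙ(u) and Df(u) rᵢ(u) = λᵢ(u) rᵢ(u) for all u (strict hyperbolicity), and for each i ∈ {1,…,n} either ∇λᵢ(u)·rᵢ(u) > 0 for all u (genuine nonlinearity) or ∇λᵢ(u)·rᵢ(u) = 0 for all u (linear degeneracy). Then there exists δ > 0 such that for every initial datum ū ∈ L¹(ℝ;ℝⁿ) of bounded variation with Tot.Var.{ū} ≤ δ, the Cauchy problem u_t + f(u)_x = 0, u(0,·) = ū has a weak solution u = u(t,x) defined for all t ≥ 0: the map t ↦ u(t,·) is continuous with values in L¹(ℝ;ℝⁿ), u(0,·) = ū, and ∫₀^∞ ∫_ℝ ( u φ_t + f(u) φ_x ) dx dt = 0 for all φ ∈ C¹_c((0,∞)×ℝ). -/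

import Mathlib

open MeasureTheory Filter Set Topology

noncomputable section

/-- Partial derivative of a test function in the time variable. -/
def ptime (φ : ℝ × ℝ → ℝ) (p : ℝ × ℝ) : ℝ := deriv (fun s => φ (s, p.2)) p.1

/-- Partial derivative of a test function in the space variable. -/
def pspace (φ : ℝ × ℝ → ℝ) (p : ℝ × ℝ) : ℝ := deriv (fun y => φ (p.1, y)) p.2

/-- `u : (t,x) ↦ u(t,x)` is a weak solution of `u_t + f(u)_x = 0` for `t ≥ 0`:
the map `t ↦ u(t,·)` takes values in `L¹`, is continuous into `L¹`, and the
integral identity `∫∫ (u φ_t + f(u) φ_x) dx dt = 0` holds for every test function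
`φ ∈ C¹_c((0,∞) × ℝ)`. -/
def IsWeakSolution {n : ℕ} (f : EuclideanSpace ℝ (Fin n) → EuclideanSpace ℝ (Fin n))
    (u : ℝ → ℝ → EuclideanSpace ℝ (Fin n)) : Prop :=
  Measurable (Function.uncurry u) ∧
  (∀ t : ℝ, 0 ≤ t → Integrable (u t)) ∧
  (∀ t : ℝ, 0 ≤ t →
    Tendsto (fun s => ∫ x : ℝ, ‖u s x - u t x‖) (𝓝[Set.Ici 0] t) (𝓝 0)) ∧
  (∀ φ : ℝ × ℝ → ℝ, ContDiff ℝ 1 φ → HasCompactSupport φ →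
    tsupport φ ⊆ Set.Ioi (0 : ℝ) ×ˢ Set.univ →
    ∫ p : ℝ × ℝ, (ptime φ p • u p.1 p.2 + pspace φ p • f (u p.1 p.2)) = 0)

namespace Glimm

variable {E : Type*} [NormedAddCommGroup E] [InnerProductSpace ℝ E] [FiniteDimensional ℝ E]

/-- Successive composition of the elementary wave maps `T 0 (σ 0)`, …, `T (m-1) (σ (m-1))`. -/
def Phi (T : ℕ → ℝ → E → E) : ℕ → (ℕ → ℝ) → E → E
  | 0, _, u => u
  | m + 1, σ, u => T m (σ m) (Phi T m σ u)

/-- Riemann solver data (discontinuous waves only) for the flux `g`. -/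
structure RData (g : E → E) (n : ℕ) where
  T : ℕ → ℝ → E → E
  lam : ℕ → ℝ → E → ℝ
  C : ℝ
  s0 : ℝ
  hC : 1 ≤ C
  hs0 : 0 < s0
  T_zero : ∀ i u, T i 0 u = u
  T_sub : ∀ i s u, ‖T i s u - u‖ ≤ C * |s|
  T_lip : ∀ i s u u', ‖T i s u - T i s u'‖ ≤ C * ‖u - u'‖
  comm : ∀ i j a b u, |a| ≤ s0 → |b| ≤ s0 →
    ‖T j b (T i a u) - T i a (T j b u)‖ ≤ C * (|a| * |b|)
  merge : ∀ i a b u, |a| ≤ s0 → |b| ≤ s0 →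
    ‖T i b (T i a u) - T i (a + b) u‖ ≤ C * (|a| * |b|)
  rh : ∀ i s u, i < n → |s| ≤ s0 → ‖u‖ ≤ s0 → g (T i s u) - g u = lam i s u • (T i s u - u)
  lam_pos : ∀ i s u, i < n → 0 < lam i s u
  lam_lt : ∀ i s u, i < n → lam i s u < 1
  lam_mono : ∀ i j s s' u u', i < j → j < n → lam i s u < lam j s' u'
  surj : ∀ u w, ∃ σ, Phi T n σ u = w
  inv : ∀ u σ σ', ∑ i ∈ Finset.range n, |σ i - σ' i| ≤ C * ‖Phi T n σ u - Phi T n σ' u‖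

/-- clipping -/
def clip (S s : ℝ) : ℝ := max (-S) (min S s)

lemma clip_abs {S : ℝ} (hS : 0 ≤ S) (s : ℝ) : |clip S s| ≤ S := by
  unfold clip; rw [abs_le]; constructor
  · exact le_max_left _ _
  · exact max_le (by linarith) (min_le_left _ _)

lemma clip_of {S s : ℝ} (h : |s| ≤ S) : clip S s = s := by
  unfold clip; rw [abs_le] at h; rw [min_eq_right h.2, max_eq_right h.1]

lemma clip_lip (S s s' : ℝ) : |clip S s - clip S s'| ≤ |s - s'| := by
  unfold clip
  refine (abs_max_sub_max_le_max _ _ _ _).trans ?_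
  simp only [sub_self, abs_zero]
  refine max_le (abs_nonneg _) ?_
  refine (abs_min_sub_min_le_max _ _ _ _).trans ?_
  simp

/-- existence of the elementary wave map -/
lemma exists_T (rh : E → E → E) (r0 : E) (L S : ℝ) (hS : 0 ≤ S) (hL0 : 0 ≤ L)
    (hSL : S * L ≤ 1 / 4)
    (hL : ∀ u v u' v', ‖rh u v - rh u' v'‖ ≤ L * (‖u - u'‖ + ‖v - v'‖)) :
    ∃ T : ℝ → E → E, ∀ s u, T s u = u + s • r0 + clip S s • (rh u (T s u) - r0) := by
  have : ∀ s u, ∃ v, v = u + s • r0 + clip S s • (rh u v - r0) := by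
    intro s u
    have hc : ContractingWith (1 / 2) (fun v => u + s • r0 + clip S s • (rh u v - r0)) := by
      constructor
      · rw [← NNReal.coe_lt_coe]; norm_num
      · refine LipschitzWith.of_dist_le_mul fun v v' => ?_
        rw [dist_eq_norm, dist_eq_norm]
        have : u + s • r0 + clip S s • (rh u v - r0) - (u + s • r0 + clip S s • (rh u v' - r0))
            = clip S s • (rh u v - rh u v') := by module
        rw [this, norm_smul, Real.norm_eq_abs]
        have h1 := hL u v u v'
        simp only [sub_self, norm_zero, zero_add] at h1
        have h2 := clip_abs hS s
        calc |clip S s| * ‖rh u v - rh u v'‖ ≤ S * (L * ‖v - v'‖) := by gcongr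
          _ = (S * L) * ‖v - v'‖ := by ring
          _ ≤ (1 / 2) * ‖v - v'‖ := by gcongr; linarith
          _ = _ := by norm_num
    exact ⟨_, (hc.fixedPoint_isFixedPt).symm⟩
  choose T hT using this
  exact ⟨T, hT⟩

lemma T_approx {rh : E → E → E} {r0 : E} {L S η B : ℝ} {T : ℝ → E → E} (hS : 0 ≤ S)
    (hL0 : 0 ≤ L) (hB : ‖r0‖ ≤ B)
    (hSL : S * L ≤ 1 / 4)
    (hL : ∀ u v u' v', ‖rh u v - rh u' v'‖ ≤ L * (‖u - u'‖ + ‖v - v'‖))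
    (hη : ∀ u v, ‖rh u v - r0‖ ≤ η)
    (hT : ∀ s u, T s u = u + s • r0 + clip S s • (rh u (T s u) - r0))
    {ε : ℝ} (h1 : η ≤ ε / 4) (h2 : S * L * (B + 1) ≤ ε / 4) (s s' u u') :
    ‖T s u - T s' u' - (u - u') - (s - s') • r0‖ ≤ ε * (‖u - u'‖ + |s - s'|) := by
  set d := T s u - T s' u' - (u - u') - (s - s') • r0 with hd
  have e1 : d = (clip S s - clip S s') • (rh u (T s u) - r0)
      + clip S s' • (rh u (T s u) - rh u' (T s' u')) := by
    have a1 := hT s u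
    have a2 := hT s' u'
    have : d = (T s u - u - s • r0) - (T s' u' - u' - s' • r0) := by rw [hd]; module
    have b1 : T s u - u - s • r0 = clip S s • (rh u (T s u) - r0) := by
      nth_rw 1 [a1]; module
    have b2 : T s' u' - u' - s' • r0 = clip S s' • (rh u' (T s' u') - r0) := by
      nth_rw 1 [a2]; module
    rw [this, b1, b2]; module
  have e2 : ‖T s u - T s' u'‖ ≤ ‖d‖ + ‖u - u'‖ + |s - s'| * B := by
    have : T s u - T s' u' = d + (u - u') + (s - s') • r0 := by rw [hd]; module
    rw [this]
    refine (norm_add₃_le).trans ?_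
    rw [norm_smul, Real.norm_eq_abs]
    gcongr
  have e3 : ‖d‖ ≤ |s - s'| * η + S * (L * (‖u - u'‖ + ‖T s u - T s' u'‖)) := by
    rw [e1]
    refine (norm_add_le _ _).trans ?_
    rw [norm_smul, norm_smul, Real.norm_eq_abs, Real.norm_eq_abs]
    exact add_le_add (mul_le_mul (clip_lip _ _ _) (hη _ _) (norm_nonneg _) (abs_nonneg _))
      (mul_le_mul (clip_abs hS _) (hL _ _ _ _) (norm_nonneg _) hS)
  have hB0 : 0 ≤ B := (norm_nonneg _).trans hB
  have hSL0 : 0 ≤ S * L := by positivity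
  have n1 := norm_nonneg (u - u')
  have n2 := abs_nonneg (s - s')
  have n3 := norm_nonneg d
  have e4 : ‖d‖ ≤ |s - s'| * η + (S * L) * (‖u - u'‖ + (‖d‖ + ‖u - u'‖ + |s - s'| * B)) := by
    refine e3.trans ?_
    rw [← mul_assoc]; gcongr
  have f1 : S * L * ‖d‖ ≤ 1 / 4 * ‖d‖ := by gcongr
  have hSLε : S * L ≤ ε / 4 := by nlinarith
  have f2 : S * L * ‖u - u'‖ ≤ ε / 4 * ‖u - u'‖ := by gcongr
  have f3 : S * L * B ≤ ε / 4 := by nlinarith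
  have f4 : S * L * B * |s - s'| ≤ ε / 4 * |s - s'| := by gcongr
  have f5 : |s - s'| * η ≤ |s - s'| * (ε / 4) := by gcongr
  have hε : 0 ≤ ε := by linarith
  have f6 : 0 ≤ ε * ‖u - u'‖ := by positivity
  have f7 : 0 ≤ ε * |s - s'| := by positivity
  nlinarith

lemma comm_est {L S B : ℝ} (hL0 : 0 ≤ L) (hSL : S * L ≤ 1 / 4)
    {r1 r2 : E → E → E}
    (hL1 : ∀ u v u' v', ‖r1 u v - r1 u' v'‖ ≤ L * (‖u - u'‖ + ‖v - v'‖))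
    (hL2 : ∀ u v u' v', ‖r2 u v - r2 u' v'‖ ≤ L * (‖u - u'‖ + ‖v - v'‖))
    (hB1 : ∀ u v, ‖r1 u v‖ ≤ B) (hB2 : ∀ u v, ‖r2 u v‖ ≤ B)
    {a b : ℝ} (ha : |a| ≤ S) (hb : |b| ≤ S) {u v w v' w' : E}
    (h1 : v = u + a • r1 u v) (h2 : w = v + b • r2 v w)
    (h3 : v' = u + b • r2 u v') (h4 : w' = v' + a • r1 v' w') :
    ‖w - w'‖ ≤ 8 * L * B * (|a| * |b|) := by
  have e1 : w - w' = a • (r1 u v - r1 v' w') + b • (r2 v w - r2 u v') := by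
    nth_rw 1 [h2, h4, h1, h3]; module
  have k1 : ‖v - u‖ ≤ |a| * B := by
    have : v - u = a • r1 u v := by nth_rw 1 [h1]; module
    rw [this, norm_smul, Real.norm_eq_abs]; gcongr; exact hB1 _ _
  have k2 : ‖w - v‖ ≤ |b| * B := by
    have : w - v = b • r2 v w := by nth_rw 1 [h2]; module
    rw [this, norm_smul, Real.norm_eq_abs]; gcongr; exact hB2 _ _
  have k3 : ‖u - v'‖ ≤ |b| * B := by
    have : v' - u = b • r2 u v' := by nth_rw 1 [h3]; module
    rw [norm_sub_rev, this, norm_smul, Real.norm_eq_abs]; gcongr; exact hB2 _ _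
  have k4 : ‖w' - v'‖ ≤ |a| * B := by
    have : w' - v' = a • r1 v' w' := by nth_rw 1 [h4]; module
    rw [this, norm_smul, Real.norm_eq_abs]; gcongr; exact hB1 _ _
  have k5 : ‖v - w'‖ ≤ |b| * B + ‖w - w'‖ := by
    calc ‖v - w'‖ = ‖(w - w') - (w - v)‖ := by congr 1; module
      _ ≤ ‖w - w'‖ + ‖w - v‖ := norm_sub_le _ _
      _ ≤ _ := by linarith
  have k6 : ‖w - v'‖ ≤ |a| * B + ‖w - w'‖ := by
    calc ‖w - v'‖ = ‖(w - w') + (w' - v')‖ := by congr 1; module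
      _ ≤ ‖w - w'‖ + ‖w' - v'‖ := norm_add_le _ _
      _ ≤ _ := by linarith
  have e2 : ‖w - w'‖ ≤ |a| * (L * (|b| * B + (|b| * B + ‖w - w'‖)))
      + |b| * (L * (|a| * B + (|a| * B + ‖w - w'‖))) := by
    nth_rw 1 [e1]
    refine (norm_add_le _ _).trans ?_
    rw [norm_smul, norm_smul, Real.norm_eq_abs, Real.norm_eq_abs]
    gcongr
    · refine (hL1 _ _ _ _).trans ?_
      gcongr
    · refine (hL2 _ _ _ _).trans ?_
      gcongr
  have n := norm_nonneg (w - w')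
  have m1 : |a| * L * ‖w - w'‖ ≤ 1 / 4 * ‖w - w'‖ := by
    gcongr; refine le_trans ?_ hSL; gcongr
  have m2 : |b| * L * ‖w - w'‖ ≤ 1 / 4 * ‖w - w'‖ := by
    gcongr; refine le_trans ?_ hSL; gcongr
  nlinarith

lemma merge_est {L S B : ℝ} (hL0 : 0 ≤ L) (hSL : S * L ≤ 1 / 4)
    {r1 : E → E → E}
    (hL1 : ∀ u v u' v', ‖r1 u v - r1 u' v'‖ ≤ L * (‖u - u'‖ + ‖v - v'‖))
    (hB1 : ∀ u v, ‖r1 u v‖ ≤ B)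
    {a b : ℝ} (ha : |a| ≤ S) (hb : |b| ≤ S) {u v w w' : E}
    (h1 : v = u + a • r1 u v) (h2 : w = v + b • r1 v w)
    (h3 : w' = u + (a + b) • r1 u w') :
    ‖w - w'‖ ≤ 8 * L * B * (|a| * |b|) := by
  have e1 : w - w' = a • (r1 u v - r1 u w') + b • (r1 v w - r1 u w') := by
    nth_rw 1 [h2, h1, h3]; module
  have k1 : ‖v - u‖ ≤ |a| * B := by
    have : v - u = a • r1 u v := by nth_rw 1 [h1]; module
    rw [this, norm_smul, Real.norm_eq_abs]; gcongr; exact hB1 _ _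
  have k2 : ‖w - v‖ ≤ |b| * B := by
    have : w - v = b • r1 v w := by nth_rw 1 [h2]; module
    rw [this, norm_smul, Real.norm_eq_abs]; gcongr; exact hB1 _ _
  have k5 : ‖v - w'‖ ≤ |b| * B + ‖w - w'‖ := by
    calc ‖v - w'‖ = ‖(w - w') - (w - v)‖ := by congr 1; module
      _ ≤ ‖w - w'‖ + ‖w - v‖ := norm_sub_le _ _
      _ ≤ _ := by linarith
  have hB0 : 0 ≤ B := (norm_nonneg _).trans (hB1 u u)
  have e2 : ‖w - w'‖ ≤ |a| * (L * (|b| * B + ‖w - w'‖))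
      + |b| * (L * (|a| * B + ‖w - w'‖)) := by
    nth_rw 1 [e1]
    refine (norm_add_le _ _).trans ?_
    rw [norm_smul, norm_smul, Real.norm_eq_abs, Real.norm_eq_abs]
    gcongr
    · refine (hL1 _ _ _ _).trans ?_
      simp only [sub_self, norm_zero, zero_add]
      gcongr
    · refine (hL1 _ _ _ _).trans ?_
      gcongr
  have n := norm_nonneg (w - w')
  have m1 : |a| * L * ‖w - w'‖ ≤ 1 / 4 * ‖w - w'‖ := by
    gcongr; refine le_trans ?_ hSL; gcongr
  have m2 : |b| * L * ‖w - w'‖ ≤ 1 / 4 * ‖w - w'‖ := by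
    gcongr; refine le_trans ?_ hSL; gcongr
  have m3 : 0 ≤ L * B * (|a| * |b|) := by positivity
  nlinarith

/-- `Phi` is approximately linear in the strengths. -/
lemma Phi_approx {r : ℕ → E} {B : ℝ} (hB : ∀ i, ‖r i‖ ≤ B) (m : ℕ) :
    ∃ K, 0 ≤ K ∧ ∀ ε, 0 ≤ ε → ε ≤ 1 → ∀ T : ℕ → ℝ → E → E,
    (∀ i s s' u u', ‖T i s u - T i s' u' - (u - u') - (s - s') • r i‖
      ≤ ε * (‖u - u'‖ + |s - s'|)) → ∀ u σ σ',
    ‖Phi T m σ u - Phi T m σ' u - ∑ i ∈ Finset.range m, (σ i - σ' i) • r i‖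
      ≤ K * ε * ∑ i ∈ Finset.range m, |σ i - σ' i| := by
  have hB0 : 0 ≤ B := (norm_nonneg _).trans (hB 0)
  induction m with
  | zero => exact ⟨0, le_rfl, by intros; simp [Phi]⟩
  | succ m ih =>
    obtain ⟨K, hK, ih⟩ := ih
    refine ⟨2 * K + B + 1, by positivity, fun ε hε hε1 T hT u σ σ' => ?_⟩
    have h1 := ih ε hε hε1 T hT u σ σ'
    rw [Finset.sum_range_succ, Finset.sum_range_succ]
    simp only [Phi]
    set x := Phi T m σ u
    set x' := Phi T m σ' u
    set Z1 := ∑ i ∈ Finset.range m, (σ i - σ' i) • r i with hZ1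
    set Z2 := ∑ i ∈ Finset.range m, |σ i - σ' i| with hZ2
    have hZ : ‖Z1‖ ≤ B * Z2 := by
      rw [hZ1, hZ2, Finset.mul_sum]
      refine (norm_sum_le _ _).trans (Finset.sum_le_sum fun i _ => ?_)
      rw [norm_smul, Real.norm_eq_abs, mul_comm]
      gcongr; exact hB i
    have hZ20 : 0 ≤ Z2 := Finset.sum_nonneg fun i _ => abs_nonneg _
    have h2 := hT m (σ m) (σ' m) x x'
    have h3 : ‖x - x'‖ ≤ K * ε * Z2 + B * Z2 := by
      calc ‖x - x'‖ = ‖(x - x' - Z1) + Z1‖ := by congr 1; module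
        _ ≤ _ := (norm_add_le _ _).trans (by linarith)
    have h4 : K * ε * Z2 ≤ K * Z2 := by
      have : K * ε * Z2 = K * Z2 * ε := by ring
      rw [this]; exact mul_le_of_le_one_right (by positivity) hε1
    have n2 := abs_nonneg (σ m - σ' m)
    calc _ = ‖(T m (σ m) x - T m (σ' m) x' - (x - x') - (σ m - σ' m) • r m)
            + (x - x' - Z1)‖ := by congr 1; module
      _ ≤ ε * (‖x - x'‖ + |σ m - σ' m|) + K * ε * Z2 :=
          (norm_add_le _ _).trans (add_le_add h2 h1)
      _ ≤ ε * ((K * Z2 + B * Z2) + |σ m - σ' m|) + K * ε * Z2 := by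
          gcongr; linarith
      _ ≤ _ := by
          have : 0 ≤ ε * Z2 := by positivity
          have : 0 ≤ ε * |σ m - σ' m| := by positivity
          have : 0 ≤ K * (ε * |σ m - σ' m|) := by positivity
          have : 0 ≤ B * (ε * |σ m - σ' m|) := by positivity
          nlinarith

lemma surj_of_near_id {G : E → E}
    (h : ∀ y y', ‖G y - G y' - (y - y')‖ ≤ 1 / 2 * ‖y - y'‖) (w : E) : ∃ y, G y = w := by
  have hc : ContractingWith (1 / 2) (fun y => y + w - G y) := by
    constructor
    · rw [← NNReal.coe_lt_coe]; norm_num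
    · refine LipschitzWith.of_dist_le_mul fun v v' => ?_
      rw [dist_eq_norm, dist_eq_norm]
      have e : v + w - G v - (v' + w - G v') = - (G v - G v' - (v - v')) := by module
      rw [e, norm_neg]
      refine (h v v').trans (le_of_eq ?_)
      norm_num
  obtain ⟨y, hy⟩ : ∃ y, y + w - G y = y := ⟨_, hc.fixedPoint_isFixedPt⟩
  refine ⟨y, ?_⟩
  have h3 : w - G y = 0 := by
    have : w - G y = (y + w - G y) - y := by abel
    rw [this, hy, sub_self]
  exact (sub_eq_zero.1 h3).symm

/-- Construction of the Riemann data out of the Lipschitz eigenvector fields. -/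
lemma exists_RData {g : E → E} {n : ℕ} {r : ℕ → E} {l : ℕ → ℝ} {B : ℝ} (hB : ∀ i, ‖r i‖ ≤ B)
    (hl0 : ∀ i < n, 0 < l i) (hl1 : ∀ i < n, l i < 1) (hlm : ∀ i j, i < j → j < n → l i < l j)
    (coord : ℕ → E →L[ℝ] ℝ) (hc1 : ∀ y, ∑ i ∈ Finset.range n, coord i y • r i = y)
    (hc2 : ∀ c : ℕ → ℝ, ∀ i < n, coord i (∑ j ∈ Finset.range n, c j • r j) = c i)
    {L : ℝ} (hL0 : 0 ≤ L)
    (hmain : ∀ η > 0, ∃ ρ > 0, ∃ rh : ℕ → E → E → E, ∃ lh : ℕ → E → E → ℝ,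
      (∀ i u v u' v', ‖rh i u v - rh i u' v'‖ ≤ L * (‖u - u'‖ + ‖v - v'‖)) ∧
      (∀ i u v, ‖rh i u v - r i‖ ≤ η) ∧ (∀ i u v, i < n → |lh i u v - l i| ≤ η) ∧
      (∀ (i : ℕ) (u v : E) (s : ℝ), i < n → ‖u‖ ≤ ρ → ‖v‖ ≤ ρ → v = u + s • rh i u v →
        g v - g u = lh i u v • (v - u))) : Nonempty (RData g n) := by
  have hB0 : 0 ≤ B := (norm_nonneg _).trans (hB 0)
  obtain ⟨K, hK, hPhi⟩ := Phi_approx hB n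
  -- constant of the coordinates
  set K0 : ℝ := ∑ i ∈ Finset.range n, ‖coord i‖ with hK0
  have hK00 : 0 ≤ K0 := Finset.sum_nonneg fun i _ => norm_nonneg _
  have hcoord : ∀ y, ∑ i ∈ Finset.range n, |coord i y| ≤ K0 * ‖y‖ := by
    intro y
    rw [hK0, Finset.sum_mul]
    exact Finset.sum_le_sum fun i _ => (coord i).le_opNorm y
  -- smallness
  obtain ⟨ε, hε0, hε1, hεK⟩ : ∃ ε : ℝ, 0 < ε ∧ ε ≤ 1 ∧ K * ε * K0 ≤ 1 / 2 := by
    refine ⟨1 / (2 * (K * K0 + 1)), by positivity, ?_, ?_⟩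
    · rw [div_le_one (by positivity)]; nlinarith [mul_nonneg hK hK00]
    · rw [mul_one_div, div_mul_eq_mul_div, div_le_iff₀ (by positivity)]
      nlinarith [mul_nonneg hK hK00]
  obtain ⟨gap, hgap0, hgapa, hgapb, hgapc⟩ : ∃ gap : ℝ, 0 < gap ∧ (∀ i < n, gap < l i) ∧
      (∀ i < n, gap < 1 - l i) ∧ (∀ i j, i < j → j < n → 2 * gap < l j - l i) := by
    have h1 : ∀ᶠ x : ℝ in 𝓝[>] 0, ∀ i ∈ Finset.range n, x < l i := by
      rw [Filter.eventually_all_finset]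
      intro i hi
      exact nhdsWithin_le_nhds (eventually_lt_nhds (hl0 i (Finset.mem_range.1 hi)))
    have h2 : ∀ᶠ x : ℝ in 𝓝[>] 0, ∀ i ∈ Finset.range n, x < 1 - l i := by
      rw [Filter.eventually_all_finset]
      intro i hi
      exact nhdsWithin_le_nhds (eventually_lt_nhds
        (by linarith [hl1 i (Finset.mem_range.1 hi)]))
    have h3 : ∀ᶠ x : ℝ in 𝓝[>] 0, ∀ i ∈ Finset.range n, ∀ j ∈ Finset.range n, i < j →
        x < (l j - l i) / 2 := by
      rw [Filter.eventually_all_finset]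
      intro i hi
      rw [Filter.eventually_all_finset]
      intro j hj
      by_cases hij : i < j
      · filter_upwards [nhdsWithin_le_nhds (eventually_lt_nhds (a := (0:ℝ))
          (b := (l j - l i) / 2) (by linarith [hlm i j hij (Finset.mem_range.1 hj)]))]
          with x hx _ using hx
      · exact Filter.Eventually.of_forall fun x h => absurd h hij
    obtain ⟨x, ⟨⟨hx1, hx2⟩, hx3⟩, hx0⟩ := (((h1.and h2).and h3).and self_mem_nhdsWithin).exists
    refine ⟨x, hx0, fun i hi => hx1 i (by simpa using hi), fun i hi => hx2 i (by simpa using hi),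
      fun i j hij hj => ?_⟩
    have := hx3 i (by simp; omega) j (by simpa using hj) hij
    linarith
  set η := min (ε / 4) gap with hη
  have hη0 : 0 < η := by rw [hη]; positivity
  obtain ⟨ρ, hρ, rh, lh, hLip, hclose, hlclose, hRH⟩ := hmain η hη0
  set S : ℝ := ε / (4 * (L + 1) * (B + 1)) with hS
  have hS0 : 0 < S := by rw [hS]; positivity
  have hSL2 : S * L * (B + 1) ≤ ε / 4 := by
    rw [hS]
    have : ε / (4 * (L + 1) * (B + 1)) * L * (B + 1) = ε / 4 * (L / (L + 1)) := by
      field_simp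
    rw [this]
    refine mul_le_of_le_one_right (by positivity) ?_
    rw [div_le_one (by positivity)]; linarith
  have hSL : S * L ≤ 1 / 4 := by
    have : 0 ≤ S * L := by positivity
    nlinarith
  choose T hT using fun i => exists_T (rh i) (r i) L S hS0.le hL0 hSL (hLip i)
  have hTa : ∀ i s s' u u', ‖T i s u - T i s' u' - (u - u') - (s - s') • r i‖
      ≤ ε * (‖u - u'‖ + |s - s'|) := fun i s s' u u' =>
    T_approx hS0.le hL0 (hB i) hSL (hLip i) (hclose i) (hT i) (by rw [hη]; exact min_le_left _ _)
      hSL2 s s' u u'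
  have hTe : ∀ i s u, |s| ≤ S → T i s u = u + s • rh i u (T i s u) := by
    intro i s u hs
    have := hT i s u
    rw [clip_of hs] at this
    nth_rw 1 [this]; module
  have hrB : ∀ i u v, ‖rh i u v‖ ≤ B + 1 := by
    intro i u v
    calc ‖rh i u v‖ = ‖(rh i u v - r i) + r i‖ := by congr 1; module
      _ ≤ ‖rh i u v - r i‖ + ‖r i‖ := norm_add_le _ _
      _ ≤ 1 + B := by
        gcongr
        · refine (hclose i u v).trans ((min_le_left _ _).trans ?_); linarith
        · exact hB i
      _ = _ := by ring
  have hT0 : ∀ i u, T i 0 u = u := by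
    intro i u
    rw [hTe i 0 u (by simpa using hS0.le)]; simp
  have hTsub : ∀ i s u, ‖T i s u - u‖ ≤ (B + 1) * |s| := by
    intro i s u
    have := hTa i s 0 u u
    rw [hT0] at this
    simp only [sub_self, sub_zero, norm_zero, zero_add] at this
    calc ‖T i s u - u‖ = ‖(T i s u - u - s • r i) + s • r i‖ := by congr 1; module
      _ ≤ ε * |s| + |s| * ‖r i‖ := by
        refine (norm_add_le _ _).trans ?_
        rw [norm_smul, Real.norm_eq_abs]; gcongr
      _ ≤ 1 * |s| + |s| * B := by gcongr; exact hB i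
      _ = _ := by ring
  have hTlip : ∀ i s u u', ‖T i s u - T i s u'‖ ≤ 2 * ‖u - u'‖ := by
    intro i s u u'
    have := hTa i s s u u'
    simp only [sub_self, zero_smul, sub_zero, abs_zero, add_zero] at this
    calc ‖T i s u - T i s u'‖ = ‖(T i s u - T i s u' - (u - u')) + (u - u')‖ := by
          congr 1; module
      _ ≤ ε * ‖u - u'‖ + ‖u - u'‖ := (norm_add_le _ _).trans (by gcongr)
      _ ≤ 1 * ‖u - u'‖ + ‖u - u'‖ := by gcongr
      _ = _ := by ring
  have hPa := fun u => hPhi ε hε0.le hε1 T hTa u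
  set C : ℝ := 8 * L * (B + 1) + B + 2 + 2 * K0 with hC
  have hC1 : B + 1 ≤ C := by rw [hC]; nlinarith [mul_nonneg hL0 hB0]
  have hC2 : 2 ≤ C := by rw [hC]; nlinarith [mul_nonneg hL0 hB0]
  have hC3 : 8 * L * (B + 1) ≤ C := by rw [hC]; linarith
  have hC4 : 2 * K0 ≤ C := by rw [hC]; nlinarith [mul_nonneg hL0 hB0]
  set s0 : ℝ := min (S / 2) (ρ / (B + 2)) with hs0
  have hs0S : s0 ≤ S / 2 := min_le_left _ _
  have hs0ρ : s0 * (B + 2) ≤ ρ := by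
    have : s0 ≤ ρ / (B + 2) := min_le_right _ _
    rwa [le_div_iff₀ (by positivity)] at this
  have hs00 : 0 < s0 := by rw [hs0]; positivity
  refine ⟨⟨T, fun i s u => lh i u (T i s u), C, s0, by linarith, hs00, hT0, ?_, ?_, ?_, ?_,
    ?_, ?_, ?_, ?_, ?_, ?_⟩⟩
  · intro i s u
    exact (hTsub i s u).trans (by gcongr)
  · intro i s u u'
    exact (hTlip i s u u').trans (by gcongr)
  · intro i j a b u ha hb
    refine (comm_est hL0 hSL (hLip i) (hLip j) (hrB i) (hrB j) (a := a) (b := b)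
      (by linarith) (by linarith) (hTe i a u (by linarith)) (hTe j b _ (by linarith))
      (hTe j b u (by linarith)) (hTe i a _ (by linarith))).trans (by gcongr)
  · intro i a b u ha hb
    refine (merge_est hL0 hSL (hLip i) (hrB i) (a := a) (b := b)
      (by linarith) (by linarith) (hTe i a u (by linarith)) (hTe i b _ (by linarith))
      (hTe i (a + b) u ((abs_add_le _ _).trans (by linarith)))).trans (by gcongr)
  · intro i s u hi hs hu
    refine hRH i u _ s hi ?_ ?_ (hTe i s u (by linarith))
    · nlinarith
    · have h1 := hTsub i s u
      calc ‖T i s u‖ = ‖(T i s u - u) + u‖ := by congr 1; module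
        _ ≤ (B + 1) * |s| + ‖u‖ := (norm_add_le _ _).trans (by gcongr)
        _ ≤ (B + 1) * s0 + s0 := by gcongr
        _ ≤ ρ := by linarith
  · intro i s u hi
    have h1 := abs_le.1 (hlclose i u (T i s u) hi)
    have h2 := hgapa i hi
    have h3 : η ≤ gap := min_le_right _ _
    linarith [h1.1]
  · intro i s u hi
    have h1 := abs_le.1 (hlclose i u (T i s u) hi)
    have h2 := hgapb i hi
    have h3 : η ≤ gap := min_le_right _ _
    linarith [h1.2]
  · intro i j s s' u u' hij hj
    have h1 := abs_le.1 (hlclose i u (T i s u) (hij.trans hj))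
    have h1' := abs_le.1 (hlclose j u' (T j s' u') hj)
    have h2 := hgapc i j hij hj
    have h3 : η ≤ gap := min_le_right _ _
    linarith [h1.2, h1'.1]
  · intro u w
    obtain ⟨y, hy⟩ := surj_of_near_id (G := fun y => Phi T n (fun i => coord i y) u) (w := w) (by
      intro y y'
      have h1 := hPa u (fun i => coord i y) (fun i => coord i y')
      have h2 : ∑ i ∈ Finset.range n, (coord i y - coord i y') • r i = y - y' := by
        rw [← hc1 (y - y')]; simp
      rw [h2] at h1
      refine h1.trans ?_
      have h3 := hcoord (y - y')
      simp only [map_sub] at h3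
      calc _ ≤ K * ε * (K0 * ‖y - y'‖) := by gcongr
        _ = K * ε * K0 * ‖y - y'‖ := by ring
        _ ≤ _ := by gcongr)
    exact ⟨_, hy⟩
  · intro u σ σ'
    have h1 := hPa u σ σ'
    have h3 := hcoord (∑ i ∈ Finset.range n, (σ i - σ' i) • r i)
    have h4 : ∑ i ∈ Finset.range n, |coord i (∑ j ∈ Finset.range n, (σ j - σ' j) • r j)|
        = ∑ i ∈ Finset.range n, |σ i - σ' i| :=
      Finset.sum_congr rfl fun i hi => by
        rw [hc2 (fun j => σ j - σ' j) i (Finset.mem_range.1 hi)]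
    rw [h4] at h3
    set Z := ∑ i ∈ Finset.range n, (σ i - σ' i) • r i
    set D := ∑ i ∈ Finset.range n, |σ i - σ' i|
    set P := Phi T n σ u - Phi T n σ' u
    have h5 : ‖Z‖ ≤ K * ε * D + ‖P‖ := by
      calc ‖Z‖ = ‖P - (P - Z)‖ := by congr 1; module
        _ ≤ ‖P‖ + ‖P - Z‖ := norm_sub_le _ _
        _ ≤ _ := by linarith
    have hD0 : 0 ≤ D := Finset.sum_nonneg fun i _ => abs_nonneg _
    have h6 : D ≤ K0 * (K * ε * D + ‖P‖) := h3.trans (by gcongr)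
    have h7 : K * ε * K0 * D ≤ 1 / 2 * D := by gcongr
    have h8 : D ≤ 2 * K0 * ‖P‖ := by nlinarith
    exact h8.trans (by gcongr)

end Glimm

namespace Glimm

variable {E : Type*} [NormedAddCommGroup E] [InnerProductSpace ℝ E] [FiniteDimensional ℝ E]
variable {g : E → E} {n : ℕ}

namespace RData

lemma hC0 (R : RData g n) : 0 ≤ R.C := by linarith [R.hC]

lemma Phi_lip (R : RData g n) (m : ℕ) (σ u u') :
    ‖Phi R.T m σ u - Phi R.T m σ u'‖ ≤ R.C ^ m * ‖u - u'‖ := by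
  have h0 := R.hC0
  induction m with
  | zero => simp [Phi]
  | succ m ih =>
    simp only [Phi]
    refine (R.T_lip _ _ _ _).trans ?_
    rw [pow_succ', mul_assoc]; gcongr

lemma Phi_sub (R : RData g n) (m : ℕ) (σ u) :
    ‖Phi R.T m σ u - u‖ ≤ R.C * ∑ i ∈ Finset.range m, |σ i| := by
  induction m with
  | zero => simp [Phi]
  | succ m ih =>
    simp only [Phi]
    rw [Finset.sum_range_succ]
    calc _ = ‖(R.T m (σ m) (Phi R.T m σ u) - Phi R.T m σ u) + (Phi R.T m σ u - u)‖ := by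
          congr 1; abel
      _ ≤ R.C * |σ m| + R.C * ∑ i ∈ Finset.range m, |σ i| :=
          (norm_add_le _ _).trans (add_le_add (R.T_sub _ _ _) ih)
      _ = _ := by ring

lemma Phi_zero (R : RData g n) (m : ℕ) (u) : Phi R.T m (fun _ => 0) u = u := by
  induction m with
  | zero => rfl
  | succ m ih => simp only [Phi, ih, R.T_zero]

lemma Phi_congr (R : RData g n) (m : ℕ) (σ σ' : ℕ → ℝ) (h : ∀ i < m, σ i = σ' i) (u) :
    Phi R.T m σ u = Phi R.T m σ' u := by
  induction m with
  | zero => rfl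
  | succ m ih =>
    simp only [Phi]
    rw [ih (fun i hi => h i (by omega)), h m (by omega)]

lemma Phi_lo (R : RData g n) (m k : ℕ) (σ : ℕ → ℝ) (u) :
    Phi R.T (m + k) (fun i => if i < m then σ i else 0) u = Phi R.T m σ u := by
  induction k with
  | zero =>
    exact R.Phi_congr m _ _ (fun i hi => if_pos hi) u
  | succ k ih =>
    rw [← add_assoc]
    simp only [Phi]
    rw [ih, if_neg (by omega), R.T_zero]

lemma Phi_hi (R : RData g n) (m k : ℕ) (σ : ℕ → ℝ) (u) :
    Phi R.T (m + k) (fun i => if i < m then 0 else σ i) (Phi R.T m σ u) = Phi R.T (m + k) σ u := by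
  induction k with
  | zero =>
    have : Phi R.T m (fun i => if i < m then 0 else σ i) (Phi R.T m σ u) = Phi R.T m σ u := by
      rw [R.Phi_congr m _ (fun _ => 0) (fun i hi => if_pos hi), R.Phi_zero]
    exact this
  | succ k ih =>
    rw [← add_assoc]
    simp only [Phi]
    rw [ih, if_neg (by omega)]

lemma Phi_comm (R : RData g n) (k m : ℕ) (σ : ℕ → ℝ) (a : ℝ) (ha : |a| ≤ R.s0)
    (hσ : ∀ i < k, |σ i| ≤ R.s0) (u) :
    ‖Phi R.T k σ (R.T m a u) - R.T m a (Phi R.T k σ u)‖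
      ≤ R.C ^ (k + 1) * ((∑ l ∈ Finset.range k, |σ l|) * |a|) := by
  have h0 := R.hC0
  induction k with
  | zero => simp [Phi]
  | succ k ih =>
    have h1 := ih (fun i hi => hσ i (by omega))
    simp only [Phi]
    rw [Finset.sum_range_succ]
    set Z := ∑ l ∈ Finset.range k, |σ l|
    have hZ : 0 ≤ Z := Finset.sum_nonneg fun i _ => abs_nonneg _
    calc _ ≤ ‖R.T k (σ k) (Phi R.T k σ (R.T m a u)) - R.T k (σ k) (R.T m a (Phi R.T k σ u))‖
          + ‖R.T k (σ k) (R.T m a (Phi R.T k σ u)) - R.T m a (R.T k (σ k) (Phi R.T k σ u))‖ :=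
          norm_sub_le_norm_sub_add_norm_sub _ _ _
      _ ≤ R.C * (R.C ^ (k + 1) * (Z * |a|)) + R.C * (|a| * |σ k|) := by
          refine add_le_add ((R.T_lip _ _ _ _).trans (by gcongr)) ?_
          exact R.comm m k a (σ k) _ ha (hσ k (by omega))
      _ ≤ R.C * (R.C ^ (k + 1) * (Z * |a|)) + R.C ^ (k + 2) * (|a| * |σ k|) := by
          gcongr
          exact le_self_pow₀ R.hC (by omega)
      _ = _ := by ring

/-- interaction potential of two wave fans -/
def DD (m : ℕ) (x y : ℕ → ℝ) : ℝ :=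
  ∑ i ∈ Finset.range m, x i * ∑ l ∈ Finset.range (i + 1), y l

lemma interaction (R : RData g n) (m : ℕ) (σ τ : ℕ → ℝ)
    (hσ : ∀ i < m, |σ i| ≤ R.s0) (hτ : ∀ i < m, |τ i| ≤ R.s0) (u) :
    ‖Phi R.T m τ (Phi R.T m σ u) - Phi R.T m (fun i => σ i + τ i) u‖
      ≤ R.C ^ (m + 1) * DD m (fun i => |σ i|) (fun i => |τ i|) := by
  have h0 := R.hC0
  induction m with
  | zero => simp [Phi, DD]
  | succ m ih =>
    have h1 := ih (fun i hi => hσ i (by omega)) (fun i hi => hτ i (by omega))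
    have h2 := R.Phi_comm m m τ (σ m) (hσ m (by omega)) (fun i hi => hτ i (by omega))
      (Phi R.T m σ u)
    simp only [Phi]
    have hD : DD (m + 1) (fun i => |σ i|) (fun i => |τ i|)
      = DD m (fun i => |σ i|) (fun i => |τ i|) +
        |σ m| * ((∑ l ∈ Finset.range m, |τ l|) + |τ m|) := by
      unfold DD; rw [Finset.sum_range_succ, Finset.sum_range_succ _ m]
    rw [hD]
    set D := DD m (fun i => |σ i|) (fun i => |τ i|)
    set Z := ∑ l ∈ Finset.range m, |τ l|
    have hZ : 0 ≤ Z := Finset.sum_nonneg fun i _ => abs_nonneg _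
    set x := Phi R.T m σ u
    set y := Phi R.T m (fun i => σ i + τ i) u
    have e1 : ‖R.T m (τ m) (Phi R.T m τ (R.T m (σ m) x))
        - R.T m (τ m) (R.T m (σ m) (Phi R.T m τ x))‖ ≤ R.C * (R.C ^ (m + 1) * (Z * |σ m|)) :=
      (R.T_lip _ _ _ _).trans (by gcongr)
    have e2 := R.merge m (σ m) (τ m) (Phi R.T m τ x) (hσ m (by omega)) (hτ m (by omega))
    have e3 : ‖R.T m (σ m + τ m) (Phi R.T m τ x) - R.T m (σ m + τ m) y‖
        ≤ R.C * (R.C ^ (m + 1) * D) := (R.T_lip _ _ _ _).trans (by gcongr)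
    calc _ ≤ R.C * (R.C ^ (m + 1) * (Z * |σ m|)) + R.C * (|σ m| * |τ m|)
          + R.C * (R.C ^ (m + 1) * D) := by
          refine (norm_sub_le_norm_sub_add_norm_sub _
            (R.T m (σ m + τ m) (Phi R.T m τ x)) _).trans (add_le_add ?_ e3)
          exact (norm_sub_le_norm_sub_add_norm_sub _ _ _).trans (add_le_add e1 e2)
      _ ≤ R.C * (R.C ^ (m + 1) * (Z * |σ m|)) + R.C ^ (m + 2) * (|σ m| * |τ m|)
          + R.C * (R.C ^ (m + 1) * D) := by
          gcongr
          exact le_self_pow₀ R.hC (by omega)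
      _ = _ := by ring

lemma interaction' (R : RData g n) (σ τ a : ℕ → ℝ)
    (hσ : ∀ i < n, |σ i| ≤ R.s0) (hτ : ∀ i < n, |τ i| ≤ R.s0) (u)
    (ha : Phi R.T n a u = Phi R.T n τ (Phi R.T n σ u)) :
    ∑ i ∈ Finset.range n, |a i - (σ i + τ i)|
      ≤ R.C ^ (n + 2) * DD n (fun i => |σ i|) (fun i => |τ i|) := by
  refine (R.inv u a (fun i => σ i + τ i)).trans ?_
  rw [ha, pow_succ' _ (n+1), mul_assoc]
  have h0 := R.hC0
  gcongr
  exact R.interaction n σ τ hσ hτ u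

end RData

section functional
open RData

def vv (n : ℕ) (x : ℕ → ℝ) : ℝ := ∑ i ∈ Finset.range n, x i

lemma DD_add_left (m : ℕ) (x x' y : ℕ → ℝ) :
    DD m (fun i => x i + x' i) y = DD m x y + DD m x' y := by
  simp only [DD, ← Finset.sum_add_distrib, add_mul]

lemma DD_add_right (m : ℕ) (x y y' : ℕ → ℝ) :
    DD m x (fun i => y i + y' i) = DD m x y + DD m x y' := by
  simp only [DD, Finset.sum_add_distrib, mul_add]

lemma DD_nonneg (m : ℕ) {x y : ℕ → ℝ} (hx : ∀ i, 0 ≤ x i) (hy : ∀ i, 0 ≤ y i) :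
    0 ≤ DD m x y :=
  Finset.sum_nonneg fun i _ => mul_nonneg (hx i) (Finset.sum_nonneg fun j _ => hy j)

lemma DD_mono (m : ℕ) {x y x' y' : ℕ → ℝ} (hx : ∀ i, 0 ≤ x i) (hy : ∀ i, 0 ≤ y i)
    (hx' : ∀ i, i < m → x i ≤ x' i) (hy' : ∀ i, i < m → y i ≤ y' i) : DD m x y ≤ DD m x' y' := by
  refine Finset.sum_le_sum fun i hi => ?_
  have hi' := Finset.mem_range.1 hi
  refine mul_le_mul (hx' i hi') (Finset.sum_le_sum fun l hl => hy' l ?_)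
    (Finset.sum_nonneg fun j _ => hy j) ((hx i).trans (hx' i hi'))
  have := Finset.mem_range.1 hl
  omega

lemma DD_le (m : ℕ) {x y : ℕ → ℝ} (hx : ∀ i, 0 ≤ x i) (hy : ∀ i, 0 ≤ y i) :
    DD m x y ≤ vv m x * vv m y := by
  unfold vv DD
  rw [Finset.sum_mul]
  refine Finset.sum_le_sum fun i hi => ?_
  refine mul_le_mul_of_nonneg_left ?_ (hx i)
  refine Finset.sum_le_sum_of_subset_of_nonneg ?_ (fun j _ _ => hy j)
  intro l hl
  have := Finset.mem_range.1 hl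
  have := Finset.mem_range.1 hi
  exact Finset.mem_range.2 (by omega)

/-- accumulated strengths -/
def AA (a : ℕ → ℕ → ℝ) (N i : ℕ) : ℝ := ∑ j ∈ Finset.range N, a j i

/-- total interaction potential -/
def QQ (n : ℕ) (a : ℕ → ℕ → ℝ) (N : ℕ) : ℝ := ∑ k ∈ Finset.range N, DD n (AA a k) (a k)

lemma AA_succ (a : ℕ → ℕ → ℝ) (N : ℕ) : AA a (N + 1) = fun i => AA a N i + a N i := by
  funext i; exact Finset.sum_range_succ _ _

lemma QQ_succ (a : ℕ → ℕ → ℝ) (N : ℕ) : QQ n a (N + 1) = QQ n a N + DD n (AA a N) (a N) :=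
  Finset.sum_range_succ _ _

lemma AA_nonneg {a : ℕ → ℕ → ℝ} (ha : ∀ j i, 0 ≤ a j i) (N i : ℕ) : 0 ≤ AA a N i :=
  Finset.sum_nonneg fun j _ => ha j i

lemma vv_nonneg {x : ℕ → ℝ} (hx : ∀ i, 0 ≤ x i) : 0 ≤ vv n x :=
  Finset.sum_nonneg fun j _ => hx j

lemma vv_add (x y : ℕ → ℝ) : vv n (fun i => x i + y i) = vv n x + vv n y :=
  Finset.sum_add_distrib

lemma vv_AA (a : ℕ → ℕ → ℝ) (N : ℕ) : vv n (AA a N) = ∑ j ∈ Finset.range N, vv n (a j) :=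
  Finset.sum_comm

lemma QQ_nonneg {a : ℕ → ℕ → ℝ} (ha : ∀ j i, 0 ≤ a j i) (N : ℕ) : 0 ≤ QQ n a N :=
  Finset.sum_nonneg fun j _ => DD_nonneg n (AA_nonneg ha j) (ha j)

lemma QQ_le {a : ℕ → ℕ → ℝ} (ha : ∀ j i, 0 ≤ a j i) (N : ℕ) : QQ n a N ≤ vv n (AA a N) ^ 2 := by
  induction N with
  | zero => simp [QQ]; positivity
  | succ N ih =>
    rw [QQ_succ, AA_succ, vv_add]
    have h1 := DD_le n (AA_nonneg ha N) (ha N)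
    have h2 := vv_nonneg (n := n) (AA_nonneg ha N)
    have h3 := vv_nonneg (n := n) (ha N)
    nlinarith [mul_nonneg h2 h3]

lemma QQ_mono {a a' : ℕ → ℕ → ℝ} (ha : ∀ j i, 0 ≤ a j i) (h : ∀ j i, i < n → a j i ≤ a' j i)
    (N : ℕ) : QQ n a N ≤ QQ n a' N :=
  Finset.sum_le_sum fun j _ => DD_mono n (AA_nonneg ha j) (ha j)
    (fun i hi => Finset.sum_le_sum fun k _ => h k i hi) (h j)

lemma QQ_add {b e : ℕ → ℕ → ℝ} (hb : ∀ j i, 0 ≤ b j i) (he : ∀ j i, 0 ≤ e j i) (N : ℕ) :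
    QQ n (fun j i => b j i + e j i) N ≤ QQ n b N + vv n (AA b N) * vv n (AA e N)
      + vv n (AA e N) ^ 2 := by
  have hAA : ∀ N, AA (fun j i => b j i + e j i) N = fun i => AA b N i + AA e N i := by
    intro N; funext i; exact Finset.sum_add_distrib
  induction N with
  | zero => simp [QQ, AA, vv]
  | succ N ih =>
    rw [QQ_succ, QQ_succ, hAA, AA_succ, AA_succ, vv_add, vv_add, DD_add_left, DD_add_right,
      DD_add_right]
    have h1 := DD_le n (AA_nonneg hb N) (he N)
    have h2 := DD_le n (AA_nonneg he N) (hb N)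
    have h3 := DD_le n (AA_nonneg he N) (he N)
    have k1 := vv_nonneg (n := n) (AA_nonneg hb N)
    have k2 := vv_nonneg (n := n) (AA_nonneg he N)
    have k3 := vv_nonneg (n := n) (hb N)
    have k4 := vv_nonneg (n := n) (he N)
    nlinarith [mul_nonneg k3 k4, mul_nonneg k2 k4]

/-- slow part and shifted fast part -/
def slow (a : ℕ → ℕ → ℝ) (m : ℕ → ℕ) (j i : ℕ) : ℝ := if i < m j then a j i else 0
def fast (a : ℕ → ℕ → ℝ) (m : ℕ → ℕ) (j i : ℕ) : ℝ := if i < m j then 0 else a j i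
def shf (F : ℕ → ℕ → ℝ) : ℕ → ℕ → ℝ
  | 0, _ => 0
  | j + 1, i => F j i

lemma slow_add_fast (a : ℕ → ℕ → ℝ) (m : ℕ → ℕ) (j i : ℕ) : slow a m j i + fast a m j i = a j i := by
  unfold slow fast; split_ifs <;> simp

lemma QQ_split (a : ℕ → ℕ → ℝ) (m : ℕ → ℕ) (N : ℕ) :
    QQ n (fun j i => shf (fast a m) j i + slow a m j i) N
      + ∑ j ∈ Finset.range N, DD n (shf (fast a m) j) (slow a m j)
      + DD n (AA (fun j i => shf (fast a m) j i + slow a m j i) N) (shf (fast a m) N) = QQ n a N ∧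
    (∀ i, AA (fun j i => shf (fast a m) j i + slow a m j i) N i + shf (fast a m) N i = AA a N i) := by
  set b := fun j i => shf (fast a m) j i + slow a m j i with hb
  induction N with
  | zero => simp [QQ, DD, AA, shf]
  | succ N ih =>
    obtain ⟨ih1, ih2⟩ := ih
    have hSF : DD n (slow a m N) (fast a m N) = 0 := by
      refine Finset.sum_eq_zero fun i _ => ?_
      by_cases hi : i < m N
      · rw [Finset.sum_eq_zero, mul_zero]
        intro l hl
        have := Finset.mem_range.1 hl
        exact if_pos (by omega)
      · simp [slow, hi]
    have hA : AA a N = fun i => AA b N i + shf (fast a m) N i := by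
      funext i; exact (ih2 i).symm
    have ha : a N = fun i => slow a m N i + fast a m N i := by
      funext i; exact (slow_add_fast a m N i).symm
    constructor
    · have e1 : QQ n a (N + 1) = QQ n a N + (DD n (AA b N) (slow a m N)
          + DD n (AA b N) (fast a m N) + (DD n (shf (fast a m) N) (slow a m N)
          + DD n (shf (fast a m) N) (fast a m N))) := by
        have e0 : DD n (AA a N) (a N) = DD n (fun i => AA b N i + shf (fast a m) N i)
            (fun i => slow a m N i + fast a m N i) := by rw [← hA, ← ha]
        rw [QQ_succ, e0, DD_add_left, DD_add_right, DD_add_right]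
      rw [e1, ← ih1, QQ_succ, Finset.sum_range_succ, AA_succ, DD_add_left]
      have e2 : shf (fast a m) (N + 1) = fast a m N := rfl
      have e3 : b N = fun i => shf (fast a m) N i + slow a m N i := rfl
      rw [e2, e3, DD_add_right, DD_add_left, hSF]
      ring
    · intro i
      have e5 := slow_add_fast a m N i
      have e6 := ih2 i
      rw [AA_succ, AA_succ]
      show AA b N i + (shf (fast a m) N i + slow a m N i) + fast a m N i = AA a N i + a N i
      linarith

/-- The Glimm functional does not increase. -/
lemma glimm_functional {a a' e : ℕ → ℕ → ℝ} {m : ℕ → ℕ} {C1 : ℝ} (hC1 : 0 ≤ C1)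
    (ha : ∀ j i, 0 ≤ a j i) (ha' : ∀ j i, 0 ≤ a' j i) (he : ∀ j i, 0 ≤ e j i)
    (h1 : ∀ j i, i < n → a' j i ≤ shf (fast a m) j i + slow a m j i + e j i)
    (h2 : ∀ j, vv n (e j) ≤ C1 * DD n (shf (fast a m) j) (slow a m j)) (N : ℕ)
    (hV : C1 * vv n (AA a N) ≤ 1 / 4) :
    vv n (AA a' N) + 2 * C1 * QQ n a' N ≤ vv n (AA a N) + 2 * C1 * QQ n a N := by
  set b := fun j i => shf (fast a m) j i + slow a m j i with hbdef
  have hs : ∀ j i, 0 ≤ slow a m j i := by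
    intro j i; unfold slow; split_ifs <;> simp [ha]
  have hf : ∀ j i, 0 ≤ fast a m j i := by
    intro j i; unfold fast; split_ifs <;> simp [ha]
  have hsf : ∀ j i, 0 ≤ shf (fast a m) j i := by
    intro j i; cases j with
    | zero => exact le_rfl
    | succ j => exact hf j i
  have hb : ∀ j i, 0 ≤ b j i := fun j i => add_nonneg (hsf j i) (hs j i)
  obtain ⟨q1, q2⟩ := QQ_split (n := n) a m N
  have q3 := DD_nonneg n (AA_nonneg hb N) (hsf N)
  set Δ := ∑ j ∈ Finset.range N, DD n (shf (fast a m) j) (slow a m j) with hΔ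
  have hΔ0 : 0 ≤ Δ := Finset.sum_nonneg fun j _ => DD_nonneg n (hsf j) (hs j)
  have hE : vv n (AA e N) ≤ C1 * Δ := by
    rw [vv_AA, hΔ, Finset.mul_sum]; exact Finset.sum_le_sum fun j _ => h2 j
  have hE0 := vv_nonneg (n := n) (AA_nonneg he N)
  have hB : vv n (AA b N) ≤ vv n (AA a N) :=
    Finset.sum_le_sum fun i _ => by rw [← q2 i]; exact le_add_of_nonneg_right (hsf N i)
  have hB0 := vv_nonneg (n := n) (AA_nonneg hb N)
  have hQ0 := QQ_nonneg (n := n) hb N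
  have hA' : vv n (AA a' N) ≤ vv n (AA b N) + vv n (AA e N) := by
    rw [← vv_add]
    refine Finset.sum_le_sum fun i hi => ?_
    have : AA b N i + AA e N i = AA (fun j i => b j i + e j i) N i :=
      Finset.sum_add_distrib.symm
    show AA a' N i ≤ AA b N i + AA e N i
    rw [this]
    exact Finset.sum_le_sum fun j _ => h1 j i (Finset.mem_range.1 hi)
  have hQ' : QQ n a' N ≤ QQ n b N + vv n (AA b N) * vv n (AA e N) + vv n (AA e N) ^ 2 :=
    (QQ_mono ha' h1 N).trans (QQ_add hb he N)
  have hQ := QQ_le (n := n) ha N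
  have hΔQ : QQ n b N + Δ ≤ QQ n a N := by linarith
  have hA0 := vv_nonneg (n := n) (AA_nonneg ha N)
  set V := vv n (AA a N)
  set w := vv n (AA e N)
  set B := vv n (AA b N)
  -- `w ≤ C1 Δ ≤ C1 V²`
  have f1 : C1 * (B * w) ≤ 1 / 4 * w := by
    have : C1 * B ≤ 1 / 4 := le_trans (by gcongr) hV
    calc C1 * (B * w) = (C1 * B) * w := by ring
      _ ≤ _ := by gcongr
  have f2 : C1 * w ≤ 1 / 4 := by
    have : Δ ≤ V ^ 2 := by linarith
    calc C1 * w ≤ C1 * (C1 * V ^ 2) := by gcongr; exact hE.trans (by gcongr)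
      _ = (C1 * V) ^ 2 := by ring
      _ ≤ (1 / 4) ^ 2 := by gcongr
      _ ≤ _ := by norm_num
  have f3 : C1 * w ^ 2 ≤ 1 / 4 * w := by
    calc C1 * w ^ 2 = (C1 * w) * w := by ring
      _ ≤ _ := by gcongr
  have f4 : C1 * QQ n a' N ≤ C1 * (QQ n a N - Δ + B * w + w ^ 2) := by
    gcongr; linarith
  nlinarith

end functional

end Glimm

namespace Glimm
open RData

variable {E : Type*} [NormedAddCommGroup E] [InnerProductSpace ℝ E] [FiniteDimensional ℝ E]
variable {g : E → E} {n : ℕ}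

/-- waves solving the Riemann problems at the interfaces -/
def wave (R : RData g n) (U : ℕ → E) (j : ℕ) : ℕ → ℝ := (R.surj (U j) (U (j + 1))).choose

lemma wave_spec (R : RData g n) (U : ℕ → E) (j : ℕ) :
    Phi R.T n (wave R U j) (U j) = U (j + 1) := (R.surj (U j) (U (j + 1))).choose_spec

/-- strengths -/
def aw (R : RData g n) (U : ℕ → E) (j i : ℕ) : ℝ := |wave R U j i|

lemma aw_nonneg (R : RData g n) (U : ℕ → E) (j i : ℕ) : 0 ≤ aw R U j i := abs_nonneg _

/-- wave speeds -/
def sp (R : RData g n) (σ : ℕ → ℝ) (u : E) (i : ℕ) : ℝ := R.lam i (σ i) (Phi R.T i σ u)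

/-- sampled value of the Riemann solution -/
def fan (R : RData g n) (σ : ℕ → ℝ) (u : E) (θ : ℝ) : E :=
  u + ∑ i ∈ Finset.range n, if sp R σ u i ≤ θ then Phi R.T (i + 1) σ u - Phi R.T i σ u else 0

lemma fan_eq (R : RData g n) (σ : ℕ → ℝ) (u : E) (θ : ℝ) :
    ∃ m ≤ n, fan R σ u θ = Phi R.T m σ u := by
  classical
  have hex : ∃ m, m = n ∨ (m < n ∧ θ < sp R σ u m) := ⟨n, Or.inl rfl⟩
  set m := Nat.find hex with hm
  have hspec := Nat.find_spec hex
  rw [← hm] at hspec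
  have hmn : m ≤ n := by rcases hspec with h | h <;> omega
  have key : ∀ i < n, (sp R σ u i ≤ θ ↔ i < m) := by
    intro i hi
    constructor
    · intro h
      by_contra hlt
      rcases hspec with h1 | ⟨h1, h2⟩
      · omega
      · rcases (not_lt.1 hlt).eq_or_lt with h3 | h3
        · rw [h3] at h2; linarith
        · have := R.lam_mono m i (σ m) (σ i) (Phi R.T m σ u) (Phi R.T i σ u) h3 hi
          unfold sp at h2 h
          linarith
    · intro h
      have := Nat.find_min hex h
      push Not at this
      exact this.2 hi
  refine ⟨m, hmn, ?_⟩
  unfold fan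
  have h1 : ∑ i ∈ Finset.range n, (if sp R σ u i ≤ θ then Phi R.T (i + 1) σ u - Phi R.T i σ u else 0)
      = ∑ i ∈ Finset.range m, (Phi R.T (i + 1) σ u - Phi R.T i σ u) := by
    rw [← Finset.sum_filter]
    refine Finset.sum_congr ?_ fun _ _ => rfl
    ext i
    simp only [Finset.mem_filter, Finset.mem_range]
    constructor
    · rintro ⟨h1, h2⟩; exact (key i h1).1 h2
    · intro h; exact ⟨by omega, (key i (by omega)).2 h⟩
  rw [h1, Finset.sum_range_sub (fun i => Phi R.T i σ u)]
  simp [Phi]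

/-- one step of the scheme -/
def step (R : RData g n) (θ : ℝ) (U : ℕ → E) : ℕ → E
  | 0 => 0
  | j + 1 => fan R (wave R U j) (U j) θ

/-- states with small Glimm functional -/
def Good (R : RData g n) (η : ℝ) (U : ℕ → E) : Prop :=
  U 0 = 0 ∧ ∀ N, vv n (AA (aw R U) N) + 2 * R.C ^ (n + 2) * QQ n (aw R U) N ≤ η

lemma Good.vle {R : RData g n} {η : ℝ} {U : ℕ → E} (h : Good R η U) (N : ℕ) :
    vv n (AA (aw R U) N) ≤ η := by
  have h0 := R.hC0
  have := QQ_nonneg (n := n) (aw_nonneg R U) N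
  have h2 : 0 ≤ 2 * R.C ^ (n + 2) * QQ n (aw R U) N := by positivity
  linarith [h.2 N]

lemma Good.wle {R : RData g n} {η : ℝ} {U : ℕ → E} (h : Good R η U) (j : ℕ) :
    vv n (aw R U j) ≤ η := by
  have h1 := h.vle (j + 1)
  rw [AA_succ, vv_add] at h1
  linarith [vv_nonneg (n := n) (AA_nonneg (aw_nonneg R U) j)]

lemma Good.ale {R : RData g n} {η : ℝ} {U : ℕ → E} (h : Good R η U) (j i : ℕ) (hi : i < n) :
    |wave R U j i| ≤ η :=
  (Finset.single_le_sum (f := aw R U j) (fun i _ => aw_nonneg R U j i)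
    (Finset.mem_range.2 hi)).trans (h.wle j)

lemma step_good {R : RData g n} {η : ℝ} {U : ℕ → E} (h : Good R η U) (θ : ℝ)
    (hη1 : R.C ^ (n + 2) * η ≤ 1 / 4) (hη2 : η ≤ R.s0) : Good R η (step R θ U) := by
  refine ⟨rfl, fun N => ?_⟩
  have h0 := R.hC0
  refine le_trans ?_ (h.2 N)
  choose m hmn hm using fun j => fan_eq R (wave R U j) (U j) θ
  set w := wave R U with hw
  set w' := wave R (step R θ U) with hw'
  have hs0 : 0 < R.s0 := R.hs0
  have hslow : ∀ j i, i < n → |slow w m j i| ≤ R.s0 := by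
    intro j i hi; unfold slow; split_ifs
    · exact (h.ale j i hi).trans hη2
    · simpa using hs0.le
  have hfast : ∀ j i, i < n → |shf (fast w m) j i| ≤ R.s0 := by
    intro j i hi
    cases j with
    | zero => simpa [shf] using hs0.le
    | succ j =>
      show |fast w m j i| ≤ R.s0
      unfold fast; split_ifs
      · simpa using hs0.le
      · exact (h.ale j i hi).trans hη2
  have habs1 : ∀ j, (fun i => |slow w m j i|) = slow (aw R U) m j := by
    intro j; funext i; unfold slow; split_ifs
    · rfl
    · simp
  have habs2 : ∀ j, (fun i => |shf (fast w m) j i|) = shf (fast (aw R U) m) j := by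
    intro j; funext i
    cases j with
    | zero => simp [shf]
    | succ j =>
      show |fast w m j i| = fast (aw R U) m j i
      unfold fast; split_ifs
      · simp
      · rfl
  have hF : ∀ j, Phi R.T n (shf (fast w m) j) (step R θ U j) = U j := by
    intro j
    cases j with
    | zero =>
      have : shf (fast w m) 0 = fun _ => 0 := rfl
      rw [this, R.Phi_zero, h.1]; rfl
    | succ j =>
      show Phi R.T n (fast w m j) (fan R (wave R U j) (U j) θ) = U (j + 1)
      rw [hm j, ← wave_spec R U j]
      obtain ⟨k, hk⟩ := Nat.exists_eq_add_of_le (hmn j)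
      have := R.Phi_hi (m j) k (w j) (U j)
      rw [← hk] at this
      exact this
  have hSl : ∀ j, Phi R.T n (slow w m j) (U j) = step R θ U (j + 1) := by
    intro j
    show _ = fan R (wave R U j) (U j) θ
    rw [hm j]
    obtain ⟨k, hk⟩ := Nat.exists_eq_add_of_le (hmn j)
    have := R.Phi_lo (m j) k (w j) (U j)
    rw [← hk] at this
    exact this
  refine glimm_functional (m := m) (e := fun j i => |w' j i - (shf (fast w m) j i + slow w m j i)|)
    (by positivity) (aw_nonneg R U) (aw_nonneg R _) (fun j i => abs_nonneg _) ?_ ?_ N ?_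
  · intro j i hi
    rw [← habs1 j, ← habs2 j]
    show |w' j i| ≤ |shf (fast w m) j i| + |slow w m j i|
      + |w' j i - (shf (fast w m) j i + slow w m j i)|
    calc |w' j i| = |(shf (fast w m) j i + slow w m j i)
          + (w' j i - (shf (fast w m) j i + slow w m j i))| := by congr 1; ring
      _ ≤ _ := (abs_add_le _ _).trans (by gcongr; exact abs_add_le _ _)
  · intro j
    have := R.interaction' (shf (fast w m) j) (slow w m j) (w' j) (hfast j) (hslow j)
      (step R θ U j) (by rw [hF, hSl]; exact wave_spec R _ j)
    rw [habs1, habs2] at this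
    exact this
  · refine le_trans ?_ hη1
    gcongr
    exact h.vle N

lemma Good.partial_norm {R : RData g n} {η : ℝ} {U : ℕ → E} (h : Good R η U) (j m : ℕ)
    (hm : m ≤ n) : ‖Phi R.T m (wave R U j) (U j) - U j‖ ≤ R.C * vv n (aw R U j) := by
  refine (R.Phi_sub m _ _).trans ?_
  have h0 := R.hC0
  gcongr
  refine Finset.sum_le_sum_of_subset_of_nonneg ?_ (fun i _ _ => abs_nonneg _)
  exact Finset.range_mono hm

lemma Good.jump {R : RData g n} {η : ℝ} {U : ℕ → E} (h : Good R η U) (j : ℕ) :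
    ‖U (j + 1) - U j‖ ≤ R.C * vv n (aw R U j) := by
  have := h.partial_norm j n le_rfl
  rwa [wave_spec] at this

lemma Good.norm_le {R : RData g n} {η : ℝ} {U : ℕ → E} (h : Good R η U) (j : ℕ) :
    ‖U j‖ ≤ R.C * vv n (AA (aw R U) j) := by
  induction j with
  | zero => rw [h.1, norm_zero]; exact mul_nonneg R.hC0 (vv_nonneg (AA_nonneg (aw_nonneg R U) 0))
  | succ j ih =>
    rw [AA_succ, vv_add, mul_add]
    calc ‖U (j + 1)‖ = ‖U j + (U (j + 1) - U j)‖ := by congr 1; abel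
      _ ≤ _ := (norm_add_le _ _).trans (add_le_add ih (h.jump j))

lemma Good.partial_norm' {R : RData g n} {η : ℝ} {U : ℕ → E} (h : Good R η U) (j m : ℕ)
    (hm : m ≤ n) : ‖Phi R.T m (wave R U j) (U j)‖ ≤ R.C * η := by
  have h1 := h.partial_norm j m hm
  have h2 := h.norm_le j
  have h3 := h.vle (j + 1)
  rw [AA_succ, vv_add] at h3
  calc _ = ‖(Phi R.T m (wave R U j) (U j) - U j) + U j‖ := by congr 1; abel
    _ ≤ R.C * vv n (aw R U j) + R.C * vv n (AA (aw R U) j) :=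
      (norm_add_le _ _).trans (add_le_add h1 h2)
    _ = R.C * (vv n (AA (aw R U) j) + vv n (aw R U j)) := by ring
    _ ≤ _ := mul_le_mul_of_nonneg_left h3 R.hC0

lemma Good.rh {R : RData g n} {η : ℝ} {U : ℕ → E} (h : Good R η U) (hη : R.C * η ≤ R.s0) (j : ℕ) :
    g (U (j + 1)) - g (U j) = ∑ i ∈ Finset.range n, sp R (wave R U j) (U j) i •
      (Phi R.T (i + 1) (wave R U j) (U j) - Phi R.T i (wave R U j) (U j)) := by
  have h1 : ∀ i ∈ Finset.range n, sp R (wave R U j) (U j) i •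
      (Phi R.T (i + 1) (wave R U j) (U j) - Phi R.T i (wave R U j) (U j)) =
      g (Phi R.T (i + 1) (wave R U j) (U j)) - g (Phi R.T i (wave R U j) (U j)) := by
    intro i hi
    have hi' := Finset.mem_range.1 hi
    have hη0 : 0 ≤ η := (vv_nonneg (aw_nonneg R U 0)).trans (h.wle 0)
    refine (R.rh i _ _ hi' ((h.ale j i hi').trans ?_) ((h.partial_norm' j i hi'.le).trans hη)).symm
    nlinarith [R.hC]
  rw [Finset.sum_congr rfl h1,
    Finset.sum_range_sub (fun i => g (Phi R.T i (wave R U j) (U j))), wave_spec]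
  simp [Phi]

/-- the consistency error -/
def MM (g : E → E) (U U' : ℕ → E) (j : ℕ) : E := U' (j + 1) - U (j + 1) + (g (U (j + 1)) - g (U j))

lemma Good.MM_eq {R : RData g n} {η : ℝ} {U : ℕ → E} (h : Good R η U) (hη : R.C * η ≤ R.s0)
    (θ : ℝ) (j : ℕ) :
    MM g U (step R θ U) j = ∑ i ∈ Finset.range n,
      ((if sp R (wave R U j) (U j) i ≤ θ then (1:ℝ) else 0) - (1 - sp R (wave R U j) (U j) i)) •
      (Phi R.T (i + 1) (wave R U j) (U j) - Phi R.T i (wave R U j) (U j)) := by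
  have h1 : U (j + 1) - U j = ∑ i ∈ Finset.range n,
      (Phi R.T (i + 1) (wave R U j) (U j) - Phi R.T i (wave R U j) (U j)) := by
    rw [Finset.sum_range_sub (fun i => (Phi R.T i (wave R U j) (U j))), wave_spec]
    simp [Phi]
  have h2 : step R θ U (j + 1) = U j + ∑ i ∈ Finset.range n,
      (if sp R (wave R U j) (U j) i ≤ θ then (1:ℝ) else 0) •
      (Phi R.T (i + 1) (wave R U j) (U j) - Phi R.T i (wave R U j) (U j)) := by
    show fan R _ _ _ = _
    unfold fan
    congr 1
    refine Finset.sum_congr rfl fun i _ => ?_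
    split_ifs <;> simp
  have h3 : MM g U (step R θ U) j = (step R θ U (j + 1) - U j) - (U (j + 1) - U j)
      + (g (U (j + 1)) - g (U j)) := by unfold MM; abel
  rw [h3, h2, h1, h.rh hη, add_sub_cancel_left, ← Finset.sum_sub_distrib, ← Finset.sum_add_distrib]
  refine Finset.sum_congr rfl fun i _ => ?_
  module

lemma Good.MM_norm {R : RData g n} {η : ℝ} {U : ℕ → E} (h : Good R η U) (hη : R.C * η ≤ R.s0)
    (θ : ℝ) (j : ℕ) : ‖MM g U (step R θ U) j‖ ≤ R.C * vv n (aw R U j) := by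
  rw [h.MM_eq hη]
  refine (norm_sum_le _ _).trans ?_
  rw [vv, Finset.mul_sum]
  refine Finset.sum_le_sum fun i hi => ?_
  have hi' := Finset.mem_range.1 hi
  rw [norm_smul, Real.norm_eq_abs]
  have h1 : |(if sp R (wave R U j) (U j) i ≤ θ then (1:ℝ) else 0)
      - (1 - sp R (wave R U j) (U j) i)| ≤ 1 := by
    have a1 := R.lam_pos i (wave R U j i) (Phi R.T i (wave R U j) (U j)) hi'
    have a2 := R.lam_lt i (wave R U j i) (Phi R.T i (wave R U j) (U j)) hi'
    unfold sp
    rw [abs_le]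
    split_ifs <;> constructor <;> linarith
  have h2 := R.T_sub i (wave R U j i) (Phi R.T i (wave R U j) (U j))
  calc _ ≤ 1 * (R.C * |wave R U j i|) := mul_le_mul h1 h2 (norm_nonneg _) zero_le_one
    _ = _ := one_mul _

lemma Good.step_sub {R : RData g n} {η : ℝ} {U : ℕ → E} (h : Good R η U)
    (θ : ℝ) (j : ℕ) : ‖step R θ U (j + 1) - U (j + 1)‖ ≤ 2 * R.C * vv n (aw R U j) := by
  obtain ⟨m, hm, e⟩ := fan_eq R (wave R U j) (U j) θ
  show ‖fan R _ _ _ - _‖ ≤ _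
  rw [e]
  calc _ = ‖(Phi R.T m (wave R U j) (U j) - U j) - (U (j + 1) - U j)‖ := by congr 1; abel
    _ ≤ _ := (norm_sub_le _ _).trans (add_le_add (h.partial_norm j m hm) (h.jump j))
    _ = _ := by ring

/-- choice of a good sampling value -/
lemma Good.exists_theta {R : RData g n} {η : ℝ} {U : ℕ → E} (h : Good R η U)
    (hη : R.C * η ≤ R.s0) (Nf : ℕ) (z : ℕ → E) :
    ∃ θ : ℝ, ∑ j ∈ Finset.range Nf, inner ℝ (z j) (MM g U (step R θ U) j) ≤ 0 := by
  set μ : Measure ℝ := volume.restrict (Icc 0 1) with hμ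
  haveI : IsProbabilityMeasure μ := ⟨by simp [hμ]⟩
  have hform : ∀ θ : ℝ, ∑ j ∈ Finset.range Nf, inner ℝ (z j) (MM g U (step R θ U) j)
      = ∑ j ∈ Finset.range Nf, ∑ i ∈ Finset.range n,
        (((Ici (sp R (wave R U j) (U j) i)).indicator (fun _ => (1:ℝ)) θ)
          - (1 - sp R (wave R U j) (U j) i)) *
        inner ℝ (z j) (Phi R.T (i + 1) (wave R U j) (U j) - Phi R.T i (wave R U j) (U j)) := by
    intro θ
    refine Finset.sum_congr rfl fun j _ => ?_
    rw [h.MM_eq hη, inner_sum]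
    refine Finset.sum_congr rfl fun i _ => ?_
    rw [inner_smul_right]
    congr 2
  have hIntg : ∀ j i, Integrable (fun θ => (((Ici (sp R (wave R U j) (U j) i)).indicator
      (fun _ => (1:ℝ)) θ) - (1 - sp R (wave R U j) (U j) i)) *
        inner ℝ (z j) (Phi R.T (i + 1) (wave R U j) (U j) - Phi R.T i (wave R U j) (U j))) μ := by
    intro j i
    refine Integrable.mul_const ?_ _
    refine Integrable.sub ?_ (integrable_const _)
    exact (integrable_const _).indicator measurableSet_Ici
  have hzero : ∫ θ, ∑ j ∈ Finset.range Nf, inner ℝ (z j) (MM g U (step R θ U) j) ∂μ = 0 := by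
    simp_rw [hform]
    rw [integral_finsetSum _ (fun j _ => integrable_finsetSum _ fun i _ => hIntg j i)]
    refine Finset.sum_eq_zero fun j _ => ?_
    rw [integral_finsetSum _ (fun i _ => hIntg j i)]
    refine Finset.sum_eq_zero fun i hi => ?_
    have hi' := Finset.mem_range.1 hi
    rw [integral_mul_const, integral_sub ((integrable_const _).indicator measurableSet_Ici)
      (integrable_const _), integral_indicator_const _ measurableSet_Ici]
    have a1 := R.lam_pos i (wave R U j i) (Phi R.T i (wave R U j) (U j)) hi'
    have a2 := R.lam_lt i (wave R U j i) (Phi R.T i (wave R U j) (U j)) hi'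
    have e1 : μ.real (Ici (sp R (wave R U j) (U j) i)) = 1 - sp R (wave R U j) (U j) i := by
      rw [hμ, measureReal_def, Measure.restrict_apply measurableSet_Ici]
      have : Ici (sp R (wave R U j) (U j) i) ∩ Icc 0 1 = Icc (sp R (wave R U j) (U j) i) 1 := by
        ext x
        simp only [mem_inter_iff, mem_Ici, mem_Icc]
        unfold sp
        constructor
        · rintro ⟨h1, h2, h3⟩; exact ⟨h1, h3⟩
        · rintro ⟨h1, h2⟩; exact ⟨h1, by linarith, h2⟩
      rw [this, Real.volume_Icc, ENNReal.toReal_ofReal]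
      unfold sp
      linarith
    rw [e1]
    simp
  have hI : Integrable (fun θ => ∑ j ∈ Finset.range Nf, inner ℝ (z j) (MM g U (step R θ U) j)) μ := by
    simp_rw [hform]
    exact integrable_finsetSum _ (fun j _ => integrable_finsetSum _ fun i _ => hIntg j i)
  obtain ⟨θ, hθ⟩ := exists_le_integral hI
  exact ⟨θ, by rw [hzero] at hθ; exact hθ⟩

/-- one step of the derandomised scheme -/
lemma Good.exists_next {R : RData g n} {η : ℝ} {U : ℕ → E} (h : Good R η U)
    (hη1 : R.C ^ (n + 2) * η ≤ 1 / 4) (hη : R.C * η ≤ R.s0) (hη2 : η ≤ R.s0)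
    (ν Nf : ℕ) (c : ℕ → ℕ → ℝ) (hh : ℝ) (hc : ∀ m j, |c m j| ≤ hh) (S : ℕ → E) :
    ∃ U' : ℕ → E, Good R η U' ∧ (∀ N, ∑ j ∈ Finset.range N, ‖U' j - U j‖ ≤ 2 * R.C * η) ∧
      (∀ N, ∑ j ∈ Finset.range N, ‖MM g U U' j‖ ≤ R.C * η) ∧
      ∑ m ∈ Finset.range ν, ‖S m + ∑ j ∈ Finset.range Nf, c m j • MM g U U' j‖ ^ 2
        ≤ ∑ m ∈ Finset.range ν, ‖S m‖ ^ 2 + ν * (R.C * η * hh) ^ 2 := by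
  have h0 := R.hC0
  have hη0 : 0 ≤ η := (vv_nonneg (aw_nonneg R U 0)).trans (h.wle 0)
  have hh0 : 0 ≤ hh := (abs_nonneg _).trans (hc 0 0)
  obtain ⟨θ, hθ⟩ := h.exists_theta hη Nf (fun j => ∑ m ∈ Finset.range ν, c m j • S m)
  have hM : ∀ N, ∑ j ∈ Finset.range N, ‖MM g U (step R θ U) j‖ ≤ R.C * η := by
    intro N
    calc _ ≤ ∑ j ∈ Finset.range N, R.C * vv n (aw R U j) :=
          Finset.sum_le_sum fun j _ => h.MM_norm hη θ j
      _ = R.C * vv n (AA (aw R U) N) := by rw [vv_AA, Finset.mul_sum]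
      _ ≤ _ := by gcongr; exact h.vle N
  refine ⟨step R θ U, step_good h θ hη1 hη2, ?_, hM, ?_⟩
  · intro N
    cases N with
    | zero => simp; positivity
    | succ N =>
      rw [Finset.sum_range_succ']
      have : ‖step R θ U 0 - U 0‖ = 0 := by rw [h.1]; simp [step]
      rw [this, add_zero]
      calc _ ≤ ∑ j ∈ Finset.range N, 2 * R.C * vv n (aw R U j) :=
            Finset.sum_le_sum fun j _ => h.step_sub θ j
        _ = 2 * R.C * vv n (AA (aw R U) N) := by rw [vv_AA, Finset.mul_sum]
        _ ≤ _ := by gcongr; exact h.vle N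
  · have e1 : ∀ m ∈ Finset.range ν,
        ‖S m + ∑ j ∈ Finset.range Nf, c m j • MM g U (step R θ U) j‖ ^ 2
        ≤ ‖S m‖ ^ 2 + 2 * inner ℝ (S m) (∑ j ∈ Finset.range Nf, c m j • MM g U (step R θ U) j)
          + (R.C * η * hh) ^ 2 := by
      intro m _
      rw [norm_add_sq_real]
      gcongr
      refine (norm_sum_le _ _).trans ?_
      calc _ ≤ ∑ j ∈ Finset.range Nf, hh * ‖MM g U (step R θ U) j‖ :=
            Finset.sum_le_sum fun j _ => by
              rw [norm_smul, Real.norm_eq_abs]; gcongr; exact hc m j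
        _ = hh * ∑ j ∈ Finset.range Nf, ‖MM g U (step R θ U) j‖ := by rw [Finset.mul_sum]
        _ ≤ hh * (R.C * η) := by gcongr; exact hM Nf
        _ = _ := by ring
    refine (Finset.sum_le_sum e1).trans ?_
    rw [Finset.sum_add_distrib, Finset.sum_add_distrib, ← Finset.mul_sum]
    have e2 : ∑ m ∈ Finset.range ν,
        inner ℝ (S m) (∑ j ∈ Finset.range Nf, c m j • MM g U (step R θ U) j)
        = ∑ j ∈ Finset.range Nf, inner ℝ (∑ m ∈ Finset.range ν, c m j • S m)
          (MM g U (step R θ U) j) := by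
      simp_rw [inner_sum, sum_inner, inner_smul_left, inner_smul_right]
      rw [Finset.sum_comm]
      simp
    rw [e2]
    simp only [Finset.sum_const, Finset.card_range, nsmul_eq_mul]
    linarith

/-- Discrete scheme: conclusion. -/
theorem discrete_scheme (R : RData g n) : ∃ δ > (0 : ℝ), ∃ C > (0 : ℝ), ∀ U0 : ℕ → E, U0 0 = 0 →
    (∀ N, ∑ j ∈ Finset.range N, ‖U0 (j + 1) - U0 j‖ ≤ δ) →
    ∀ (ν Nf : ℕ) (c : ℕ → ℕ → ℕ → ℝ) (hh : ℝ), (∀ m l j, |c m l j| ≤ hh) →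
    ∃ U : ℕ → ℕ → E, U 0 = U0 ∧ (∀ k, U k 0 = 0) ∧
      (∀ k N, ∑ j ∈ Finset.range N, ‖U k (j + 1) - U k j‖ ≤ C) ∧
      (∀ k N, ∑ j ∈ Finset.range N, ‖U (k + 1) j - U k j‖ ≤ C) ∧
      (∀ k N, ∑ j ∈ Finset.range N, ‖MM g (U k) (U (k + 1)) j‖ ≤ C) ∧
      (∀ k, ∑ m ∈ Finset.range ν, ‖∑ l ∈ Finset.range k, ∑ j ∈ Finset.range Nf,
        c m l j • MM g (U l) (U (l + 1)) j‖ ^ 2 ≤ k * (ν * (C * hh) ^ 2)) := by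
  have h0 := R.hC0
  have hC1 := R.hC
  have hs0 := R.hs0
  have hCn : 1 ≤ R.C ^ (n + 2) := one_le_pow₀ hC1
  obtain ⟨η, hη0, hη1, hη2⟩ : ∃ η : ℝ, 0 < η ∧ R.C ^ (n + 2) * η ≤ 1 / 4 ∧ R.C * η ≤ R.s0 := by
    refine ⟨min (1 / (4 * R.C ^ (n + 2))) (R.s0 / R.C), by positivity, ?_, ?_⟩
    · calc _ ≤ R.C ^ (n + 2) * (1 / (4 * R.C ^ (n + 2))) := by gcongr; exact min_le_left _ _
        _ = _ := by field_simp
    · calc _ ≤ R.C * (R.s0 / R.C) := by gcongr; exact min_le_right _ _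
        _ = _ := by field_simp
  have hη3 : η ≤ R.s0 := by nlinarith
  have hη4 : η ≤ 1 / 4 := by nlinarith
  refine ⟨η / (2 * R.C), by positivity, 2 * R.C * η, by positivity, ?_⟩
  intro U0 hU0 hTV ν Nf c hh hc
  have hgood : Good R η U0 := by
    refine ⟨hU0, fun N => ?_⟩
    have h1 : vv n (AA (aw R U0) N) ≤ η / 2 := by
      rw [vv_AA]
      calc _ ≤ ∑ j ∈ Finset.range N, R.C * ‖U0 (j + 1) - U0 j‖ := by
            refine Finset.sum_le_sum fun j _ => ?_
            have := R.inv (U0 j) (wave R U0 j) (fun _ => 0)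
            rw [R.Phi_zero, wave_spec] at this
            simpa [vv, aw] using this
        _ = R.C * ∑ j ∈ Finset.range N, ‖U0 (j + 1) - U0 j‖ := by rw [Finset.mul_sum]
        _ ≤ R.C * (η / (2 * R.C)) := by gcongr; exact hTV N
        _ = _ := by field_simp
    have h2 := QQ_le (n := n) (aw_nonneg R U0) N
    have h3 := vv_nonneg (n := n) (AA_nonneg (aw_nonneg R U0) N)
    have h4 : 2 * R.C ^ (n + 2) * QQ n (aw R U0) N ≤ 2 * R.C ^ (n + 2) * (η / 2) ^ 2 := by
      gcongr; exact h2.trans (by gcongr)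
    have h5 : 2 * R.C ^ (n + 2) * (η / 2) ^ 2 = (R.C ^ (n + 2) * η) * η / 2 := by ring
    have h6 : (R.C ^ (n + 2) * η) * η ≤ 1 / 4 * η := by gcongr
    linarith
  have key := fun (p : {U : ℕ → E // Good R η U} × (ℕ → E)) (l : ℕ) =>
    p.1.2.exists_next hη1 hη2 hη3 ν Nf (fun m j => c m l j) hh (fun m j => hc m l j) p.2
  choose nxt hn1 hn2 hn3 hn4 using key
  let st : ℕ → {U : ℕ → E // Good R η U} × (ℕ → E) := fun k => Nat.rec (⟨U0, hgood⟩, fun _ => 0)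
    (fun l p => (⟨nxt p l, hn1 p l⟩, fun m => p.2 m + ∑ j ∈ Finset.range Nf,
      c m l j • MM g p.1.1 (nxt p l) j)) k
  have st1 : ∀ k, (st (k + 1)).1.1 = nxt (st k) k := fun k => rfl
  have st2 : ∀ k m, (st (k + 1)).2 m = (st k).2 m + ∑ j ∈ Finset.range Nf,
      c m k j • MM g (st k).1.1 (st (k + 1)).1.1 j := fun k m => rfl
  have st3 : ∀ k m, (st k).2 m = ∑ l ∈ Finset.range k, ∑ j ∈ Finset.range Nf,
        c m l j • MM g (st l).1.1 (st (l + 1)).1.1 j := by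
    intro k m
    induction k with
    | zero => simp [st]
    | succ k ih => rw [st2, ih, Finset.sum_range_succ]
  refine ⟨fun k => (st k).1.1, rfl, fun k => (st k).1.2.1, ?_, ?_, ?_, ?_⟩
  · intro k N
    calc _ ≤ ∑ j ∈ Finset.range N, R.C * vv n (aw R (st k).1.1 j) :=
          Finset.sum_le_sum fun j _ => (st k).1.2.jump j
      _ = R.C * vv n (AA (aw R (st k).1.1) N) := by rw [vv_AA, Finset.mul_sum]
      _ ≤ R.C * η := by gcongr; exact (st k).1.2.vle N
      _ ≤ _ := by nlinarith
  · intro k N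
    exact hn2 (st k) k N
  · intro k N
    refine (hn3 (st k) k N).trans ?_
    nlinarith
  · intro k
    simp_rw [← st3]
    have hh0 : 0 ≤ hh := (abs_nonneg _).trans (hc 0 0 0)
    have : ∀ k, ∑ m ∈ Finset.range ν, ‖(st k).2 m‖ ^ 2 ≤ k * (ν * (R.C * η * hh) ^ 2) := by
      intro k
      induction k with
      | zero => simp [st]
      | succ k ih =>
        have := hn4 (st k) k
        simp_rw [st2, st1]
        push_cast
        linarith
    refine (this k).trans ?_
    gcongr
    nlinarith

end Glimm

namespace Glimm
open RData

variable {E : Type*} [NormedAddCommGroup E] [InnerProductSpace ℝ E] [FiniteDimensional ℝ E]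

/-- Lipschitz perturbation of a simple eigenvector. -/
lemma eig_perturb (A0 : E →L[ℝ] E) (r : E) (l : ℝ) (φ : E →L[ℝ] ℝ) (hφ : φ r = 1)
    (hA : A0 r = l • r) (hφA : ∀ y, φ (A0 y) = l * φ y)
    (hsimple : ∀ y, A0 y = l • y → φ y = 0 → y = 0) :
    ∃ ε > (0 : ℝ), ∃ K : ℝ, 0 ≤ K ∧ ∃ ρ : (E →L[ℝ] E) → E, ∃ μ : (E →L[ℝ] E) → ℝ,
      ρ A0 = r ∧ μ A0 = l ∧ ∀ B B', ‖B - A0‖ ≤ ε → ‖B' - A0‖ ≤ ε →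
        B (ρ B) = μ B • ρ B ∧ ‖ρ B - ρ B'‖ ≤ K * ‖B - B'‖ ∧ |μ B - μ B'| ≤ K * ‖B - B'‖ := by
  let F : (E →L[ℝ] E) × (E × ℝ) → E × ℝ := fun p => (p.1 p.2.1 - p.2.2 • p.2.1, φ p.2.1 - 1)
  have hFs : ContDiff ℝ 1 F := by
    refine ContDiff.prodMk ?_ ?_
    · refine ContDiff.sub ?_ ?_
      · exact contDiff_fst.clm_apply (contDiff_fst.comp contDiff_snd)
      · exact (contDiff_snd.comp contDiff_snd).smul (contDiff_fst.comp contDiff_snd)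
    · exact (φ.contDiff.comp (contDiff_fst.comp contDiff_snd)).sub contDiff_const
  set u0 : (E →L[ℝ] E) × (E × ℝ) := (A0, (r, l)) with hu0
  have hd : HasStrictFDerivAt F (fderiv ℝ F u0) u0 :=
    hFs.contDiffAt.hasStrictFDerivAt one_ne_zero
  have hF0 : F u0 = 0 := by simp [F, hu0, hA, hφ]
  -- partial derivative
  have hpart : ∀ q : E × ℝ, (fderiv ℝ F u0 ∘L .inr ℝ (E →L[ℝ] E) (E × ℝ)) q
      = (A0 q.1 - (l • q.1 + q.2 • r), φ q.1) := by
    intro q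
    have h1 : HasFDerivAt (fun q : E × ℝ => F (A0, q)) (fderiv ℝ F u0 ∘L .inr ℝ (E →L[ℝ] E) (E × ℝ))
        (r, l) := by
      have h2 : HasFDerivAt (fun q : E × ℝ => (A0, q)) (ContinuousLinearMap.inr ℝ (E →L[ℝ] E) (E × ℝ)) (r, l) :=
        hasFDerivAt_prodMk_right A0 (r, l)
      exact HasFDerivAt.comp (r, l) hd.hasFDerivAt h2
    have h3 : HasFDerivAt (fun q : E × ℝ => F (A0, q))
        ((A0 ∘L ContinuousLinearMap.fst ℝ E ℝ - (l • ContinuousLinearMap.fst ℝ E ℝ +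
          (ContinuousLinearMap.snd ℝ E ℝ).smulRight r)).prod
          (φ ∘L ContinuousLinearMap.fst ℝ E ℝ)) (r, l) := by
      refine HasFDerivAt.prodMk ?_ ?_
      · refine HasFDerivAt.sub ?_ ?_
        · exact (A0.hasFDerivAt.comp (r, l) (hasFDerivAt_fst (𝕜 := ℝ) (p := (r, l))))
        · exact (hasFDerivAt_snd (𝕜 := ℝ) (p := (r, l))).smul
            (hasFDerivAt_fst (𝕜 := ℝ) (p := (r, l)))
      · exact (φ.hasFDerivAt.comp (r, l) (hasFDerivAt_fst (𝕜 := ℝ) (p := (r, l)))).sub_const 1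
    rw [h1.unique h3]
    simp
  have hinj : Function.Injective (fderiv ℝ F u0 ∘L .inr ℝ (E →L[ℝ] E) (E × ℝ)) := by
    rw [injective_iff_map_eq_zero]
    intro q hq
    rw [hpart, Prod.mk_eq_zero] at hq
    obtain ⟨q1, q2⟩ := hq
    have hq2 : q.2 = 0 := by
      have := congrArg φ q1
      rw [map_sub, hφA, map_add, map_smul, map_smul, q2, hφ] at this
      simpa using this
    rw [hq2, zero_smul, add_zero, sub_eq_zero] at q1
    have := hsimple q.1 q1 q2
    exact Prod.ext this hq2
  have hinv : (fderiv ℝ F u0 ∘L .inr ℝ (E →L[ℝ] E) (E × ℝ)).IsInvertible := by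
    let e := LinearEquiv.ofInjectiveEndo
      ((fderiv ℝ F u0 ∘L .inr ℝ (E →L[ℝ] E) (E × ℝ)) : (E × ℝ) →ₗ[ℝ] (E × ℝ)) hinj
    refine ⟨e.toContinuousLinearEquiv, ?_⟩
    ext x <;> rfl
  set ψ := hd.implicitFunctionOfProdDomain hinv with hψ
  have h1 := hd.eventually_apply_implicitFunctionOfProdDomain hinv
  have h2 := (hd.hasStrictFDerivAt_implicitFunctionOfProdDomain hinv)
  have h3 : ψ A0 = (r, l) :=
    (hd.eventually_apply_eq_iff_implicitFunctionOfProdDomain hinv).self_of_nhds.mp rfl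
  obtain ⟨K, s, hs, hK⟩ := h2.exists_lipschitzOnWith
  obtain ⟨ε, hε, hball⟩ := Metric.nhds_basis_closedBall.mem_iff.1 (Filter.inter_mem h1 hs)
  refine ⟨ε, hε, K, K.2, fun B => (ψ B).1, fun B => (ψ B).2, congrArg Prod.fst h3, congrArg Prod.snd h3, ?_⟩
  intro B B' hB hB'
  have m1 := hball (show B ∈ Metric.closedBall A0 ε by rwa [Metric.mem_closedBall, dist_eq_norm])
  have m2 := hball (show B' ∈ Metric.closedBall A0 ε by rwa [Metric.mem_closedBall, dist_eq_norm])
  have e1 : F (B, ψ B) = 0 := by rw [← hF0]; exact m1.1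
  have e2 : ‖ψ B - ψ B'‖ ≤ K * ‖B - B'‖ := by
    have := hK.dist_le_mul B m1.2 B' m2.2
    rwa [dist_eq_norm, dist_eq_norm] at this
  refine ⟨?_, (norm_fst_le (ψ B - ψ B')).trans e2, (norm_snd_le (ψ B - ψ B')).trans e2⟩
  have := congrArg Prod.fst e1
  exact sub_eq_zero.1 this

/-- averaged Jacobian -/
def avgJ (g : E → E) (u v : E) : E →L[ℝ] E := ∫ t in (0:ℝ)..1, fderiv ℝ g (u + t • (v - u))

lemma avgJ_cont {g : E → E} (hg : ContDiff ℝ 2 g) (u v : E) :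
    Continuous fun t : ℝ => fderiv ℝ g (u + t • (v - u)) :=
  (hg.continuous_fderiv (by norm_num)).comp (by fun_prop)

lemma avgJ_apply {g : E → E} (hg : ContDiff ℝ 2 g) (u v : E) : avgJ g u v (v - u) = g v - g u := by
  unfold avgJ
  rw [ContinuousLinearMap.intervalIntegral_apply ((avgJ_cont hg u v).intervalIntegrable _ _)]
  have hd : ∀ t ∈ uIcc (0:ℝ) 1, HasDerivAt (fun t : ℝ => g (u + t • (v - u)))
      (fderiv ℝ g (u + t • (v - u)) (v - u)) t := by
    intro t _
    have h1 : HasDerivAt (fun t : ℝ => u + t • (v - u)) (v - u) t := by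
      simpa using ((hasDerivAt_id t).smul_const (v - u)).const_add u
    have h2 := (hg.differentiable (by norm_num) (u + t • (v - u))).hasFDerivAt
    exact h2.comp_hasDerivAt t h1
  rw [intervalIntegral.integral_eq_sub_of_hasDerivAt hd]
  · simp
  · exact (((avgJ_cont hg u v)).clm_apply continuous_const).intervalIntegrable _ _

lemma avgJ_lip {g : E → E} (hg : ContDiff ℝ 2 g) {L ρ : ℝ} (hL : 0 ≤ L)
    (h : ∀ x y, ‖x‖ ≤ ρ → ‖y‖ ≤ ρ → ‖fderiv ℝ g x - fderiv ℝ g y‖ ≤ L * ‖x - y‖)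
    {u v u' v' : E} (hu : ‖u‖ ≤ ρ) (hv : ‖v‖ ≤ ρ) (hu' : ‖u'‖ ≤ ρ) (hv' : ‖v'‖ ≤ ρ) :
    ‖avgJ g u v - avgJ g u' v'‖ ≤ L * (‖u - u'‖ + ‖v - v'‖) := by
  unfold avgJ
  rw [← intervalIntegral.integral_sub ((avgJ_cont hg u v).intervalIntegrable _ _)
    ((avgJ_cont hg u' v').intervalIntegrable _ _)]
  have := intervalIntegral.norm_integral_le_of_norm_le_const (a := (0:ℝ)) (b := 1)
    (f := fun t => fderiv ℝ g (u + t • (v - u)) - fderiv ℝ g (u' + t • (v' - u')))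
    (C := L * (‖u - u'‖ + ‖v - v'‖)) ?_
  · simpa using this
  intro t ht
  rw [uIoc_of_le zero_le_one] at ht
  have hb : ∀ u v : E, ‖u‖ ≤ ρ → ‖v‖ ≤ ρ → ‖u + t • (v - u)‖ ≤ ρ := by
    intro u v hu hv
    calc ‖u + t • (v - u)‖ = ‖(1 - t) • u + t • v‖ := by congr 1; module
      _ ≤ (1 - t) * ‖u‖ + t * ‖v‖ := by
        refine (norm_add_le _ _).trans ?_
        rw [norm_smul, norm_smul, Real.norm_of_nonneg ht.1.le,
          Real.norm_of_nonneg (by linarith [ht.2])]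
      _ ≤ (1 - t) * ρ + t * ρ := by
        have := ht.2; have := ht.1
        gcongr
      _ = ρ := by ring
  refine (h _ _ (hb u v hu hv) (hb u' v' hu' hv')).trans ?_
  gcongr
  calc ‖u + t • (v - u) - (u' + t • (v' - u'))‖ = ‖(1 - t) • (u - u') + t • (v - v')‖ := by
        congr 1; module
    _ ≤ (1 - t) * ‖u - u'‖ + t * ‖v - v'‖ := by
        refine (norm_add_le _ _).trans ?_
        rw [norm_smul, norm_smul, Real.norm_of_nonneg ht.1.le,
          Real.norm_of_nonneg (by linarith [ht.2])]
    _ ≤ 1 * ‖u - u'‖ + 1 * ‖v - v'‖ := by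
        have := ht.2; have := ht.1
        gcongr; linarith
    _ = _ := by ring

/-- radial retraction -/
def rad (ρ : ℝ) (u : E) : E := (ρ / max ρ ‖u‖) • u

lemma rad_of {ρ : ℝ} (hρ : 0 < ρ) {u : E} (hu : ‖u‖ ≤ ρ) : rad ρ u = u := by
  unfold rad; rw [max_eq_left hu, div_self hρ.ne', one_smul]

lemma rad_norm {ρ : ℝ} (hρ : 0 < ρ) (u : E) : ‖rad ρ u‖ ≤ ρ := by
  unfold rad
  have h : 0 < max ρ ‖u‖ := lt_max_of_lt_left hρ
  rw [norm_smul, Real.norm_of_nonneg (by positivity), div_mul_eq_mul_div, div_le_iff₀ h]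
  gcongr; exact le_max_right _ _

lemma rad_lip {ρ : ℝ} (hρ : 0 < ρ) (u v : E) : ‖rad ρ u - rad ρ v‖ ≤ 2 * ‖u - v‖ := by
  unfold rad
  set a := max ρ ‖u‖ with ha
  set b := max ρ ‖v‖ with hb
  have ha0 : 0 < a := lt_max_of_lt_left hρ
  have hb0 : 0 < b := lt_max_of_lt_left hρ
  have haρ : ρ ≤ a := le_max_left _ _
  have hbv : ‖v‖ ≤ b := le_max_right _ _
  have hab : |b - a| ≤ ‖u - v‖ := by
    rw [ha, hb]
    refine (abs_max_sub_max_le_max _ _ _ _).trans ?_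
    simp only [sub_self, abs_zero]
    refine max_le (norm_nonneg _) ?_
    rw [norm_sub_rev]
    exact abs_norm_sub_norm_le _ _
  have e : (ρ / a) • u - (ρ / b) • v = (ρ / a) • (u - v) + (ρ / a * ((b - a) / b)) • v := by
    have : ρ / b = ρ / a - ρ / a * ((b - a) / b) := by field_simp; ring
    rw [this]; module
  rw [e]
  refine (norm_add_le _ _).trans ?_
  have h1 : ρ / a ≤ 1 := (div_le_one ha0).2 haρ
  have h10 : 0 ≤ ρ / a := by positivity
  rw [norm_smul, norm_smul, Real.norm_of_nonneg h10, norm_mul, Real.norm_of_nonneg h10, norm_div,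
    Real.norm_eq_abs (b - a), Real.norm_of_nonneg hb0.le]
  have h2 : |b - a| / b * ‖v‖ ≤ ‖u - v‖ := by
    rw [div_mul_eq_mul_div, div_le_iff₀ hb0]
    exact mul_le_mul hab hbv (norm_nonneg _) (norm_nonneg _)
  have h3 : 0 ≤ |b - a| / b * ‖v‖ := by positivity
  have n0 := norm_nonneg (u - v)
  nlinarith

theorem exists_RData_of_eig {g : E → E} (hg : ContDiff ℝ 2 g) {n : ℕ} (r : Fin n → E)
    (l : Fin n → ℝ) (hr : ∀ i, r i ≠ 0) (hl : StrictMono l) (hl0 : ∀ i, 0 < l i)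
    (hl1 : ∀ i, l i < 1) (heig : ∀ i, fderiv ℝ g 0 (r i) = l i • r i)
    (hn : Module.finrank ℝ E = n) : Nonempty (RData g n) := by
  set A0 := fderiv ℝ g 0 with hA0
  have hlin : LinearIndependent ℝ r :=
    Module.End.eigenvectors_linearIndependent' (A0 : E →ₗ[ℝ] E) l hl.injective r
      (fun i => ⟨Module.End.mem_eigenspace_iff.2 (heig i), hr i⟩)
  let b := basisOfLinearIndependentOfCardEqFinrank' r hlin (by simp [hn])
  have hb : ∀ i, b i = r i := fun i => by simp [b]
  let co : Fin n → E →L[ℝ] ℝ := fun i => LinearMap.toContinuousLinearMap (b.coord i)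
  have hco : ∀ i y, co i y = b.repr y i := fun i y => rfl
  have hcor : ∀ i j, co i (r j) = if j = i then 1 else 0 := by
    intro i j
    rw [hco, ← hb j, b.repr_self, Finsupp.single_apply]
  have hsum : ∀ y, ∑ i, co i y • r i = y := by
    intro y
    have := b.sum_repr y
    simp_rw [hb] at this
    exact this
  have hcoA : ∀ i y, co i (A0 y) = l i * co i y := by
    intro i y
    nth_rw 1 [← hsum y]
    simp only [map_sum, map_smul, heig, hcor, smul_eq_mul]
    simp [mul_comm]
  have key := fun i => eig_perturb A0 (r i) (l i) (co i) (by simp [hcor]) (heig i) (hcoA i) (by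
    intro y hy1 hy2
    rw [← hsum y]
    refine Finset.sum_eq_zero fun j _ => ?_
    by_cases hij : j = i
    · rw [hij, hy2, zero_smul]
    · have h1 := hcoA j y
      rw [hy1, map_smul, smul_eq_mul] at h1
      have h2 : (l i - l j) * co j y = 0 := by linarith
      rcases mul_eq_zero.1 h2 with h3 | h3
      · exact absurd (hl.injective (sub_eq_zero.1 h3)).symm hij
      · rw [h3, zero_smul])
  choose ε hε K hK ψ μ hψ hμ hpert using key
  -- Lipschitz Jacobian
  obtain ⟨L1, ρ1, hL1, hρ1, hLip⟩ : ∃ L1 ρ1 : ℝ, 0 ≤ L1 ∧ 0 < ρ1 ∧ ∀ x y, ‖x‖ ≤ ρ1 → ‖y‖ ≤ ρ1 →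
      ‖fderiv ℝ g x - fderiv ℝ g y‖ ≤ L1 * ‖x - y‖ := by
    have h1 : ContDiffAt ℝ 1 (fderiv ℝ g) 0 :=
      (hg.fderiv_right (m := 1) (by norm_num)).contDiffAt
    obtain ⟨L1, s, hs, hL⟩ := h1.exists_lipschitzOnWith
    obtain ⟨ρ1, hρ1, hball⟩ := Metric.nhds_basis_closedBall.mem_iff.1 hs
    refine ⟨L1, ρ1, L1.2, hρ1, fun x y hx hy => ?_⟩
    have := hL.dist_le_mul x (hball (by simpa using hx)) y (hball (by simpa using hy))
    rwa [dist_eq_norm, dist_eq_norm] at this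
  have hJ0 : avgJ g 0 0 = A0 := by simp [avgJ, hA0]
  set KK : ℝ := ∑ i, K i with hKK
  have hKi : ∀ i, K i ≤ KK := fun i => Finset.single_le_sum (fun i _ => hK i) (Finset.mem_univ i)
  have hKK0 : 0 ≤ KK := Finset.sum_nonneg fun i _ => hK i
  set BB : ℝ := ∑ i, ‖r i‖ with hBB
  have hBB0 : 0 ≤ BB := Finset.sum_nonneg fun i _ => norm_nonneg _
  refine exists_RData (g := g) (n := n) (r := fun i => if h : i < n then r ⟨i, h⟩ else 0)
    (l := fun i => if h : i < n then l ⟨i, h⟩ else 0) (B := BB) ?_ ?_ ?_ ?_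
    (fun i => if h : i < n then co ⟨i, h⟩ else 0) ?_ ?_ (L := KK * (L1 * 2)) (by positivity) ?_
  · intro i
    split_ifs with h
    · exact Finset.single_le_sum (f := fun i => ‖r i‖) (fun i _ => norm_nonneg _)
        (Finset.mem_univ _)
    · simpa using hBB0
  · intro i hi; simp [hi, hl0]
  · intro i hi; simp [hi, hl1]
  · intro i j hij hj
    simp only [hj, hij.trans hj, dif_pos]
    exact hl (by simpa using hij)
  · intro y
    rw [Finset.sum_range]
    simp [hsum]
  · intro c i hi
    rw [Finset.sum_range]
    simp [hi, hcor]
  · intro η hη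
    -- choose the radius
    obtain ⟨ρ, hρ, hρρ1, hρε, hρη⟩ : ∃ ρ > (0:ℝ), ρ ≤ ρ1 ∧ (∀ i, L1 * (2 * ρ) ≤ ε i) ∧
        KK * (L1 * (2 * ρ)) ≤ η := by
      have t1 : Tendsto (fun ρ : ℝ => L1 * (2 * ρ)) (𝓝[>] 0) (𝓝 0) := by
        have : Continuous fun ρ : ℝ => L1 * (2 * ρ) := by fun_prop
        simpa using (this.tendsto 0).mono_left nhdsWithin_le_nhds
      have t2 : Tendsto (fun ρ : ℝ => KK * (L1 * (2 * ρ))) (𝓝[>] 0) (𝓝 0) := by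
        simpa using t1.const_mul KK
      have a1 : ∀ᶠ ρ in 𝓝[>] (0:ℝ), ∀ i, L1 * (2 * ρ) ≤ ε i :=
        Filter.eventually_all.2 fun i => (t1.eventually (eventually_le_nhds (hε i)))
      have a2 := t2.eventually (eventually_le_nhds hη)
      have a3 : ∀ᶠ ρ in 𝓝[>] (0:ℝ), ρ ≤ ρ1 := nhdsWithin_le_nhds (eventually_le_nhds hρ1)
      obtain ⟨ρ, ⟨⟨h1, h2⟩, h3⟩, h4⟩ := (((a1.and a2).and a3).and self_mem_nhdsWithin).exists
      exact ⟨ρ, h4, h3, h1, h2⟩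
    have hrn : ∀ u : E, ‖rad ρ u‖ ≤ ρ1 := fun u => (rad_norm hρ u).trans hρρ1
    have hJ : ∀ u v u' v' : E, ‖avgJ g (rad ρ u) (rad ρ v) - avgJ g (rad ρ u') (rad ρ v')‖
        ≤ (L1 * 2) * (‖u - u'‖ + ‖v - v'‖) := by
      intro u v u' v'
      refine (avgJ_lip hg hL1 hLip (hrn u) (hrn v) (hrn u') (hrn v')).trans ?_
      calc _ ≤ L1 * (2 * ‖u - u'‖ + 2 * ‖v - v'‖) := by
            gcongr
            · exact rad_lip hρ _ _
            · exact rad_lip hρ _ _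
        _ = _ := by ring
    have hJA : ∀ u v : E, ‖avgJ g (rad ρ u) (rad ρ v) - A0‖ ≤ L1 * (2 * ρ) := by
      intro u v
      rw [← hJ0]
      refine (avgJ_lip hg hL1 hLip (hrn u) (hrn v) (by simpa using hρ1.le)
        (by simpa using hρ1.le)).trans ?_
      rw [sub_zero, sub_zero]
      gcongr
      linarith [rad_norm hρ u, rad_norm hρ v]
    refine ⟨ρ, hρ, fun i u v => if h : i < n then ψ ⟨i, h⟩ (avgJ g (rad ρ u) (rad ρ v)) else 0,
      fun i u v => if h : i < n then μ ⟨i, h⟩ (avgJ g (rad ρ u) (rad ρ v)) else 0, ?_, ?_, ?_, ?_⟩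
    · intro i u v u' v'
      dsimp only
      split_ifs with h
      · refine (hpert ⟨i, h⟩ _ _ ((hJA u v).trans (hρε _)) ((hJA u' v').trans (hρε _))).2.1.trans ?_
        rw [mul_assoc]
        exact mul_le_mul (hKi _) (hJ u v u' v') (norm_nonneg _) hKK0
      · simp; positivity
    · intro i u v
      dsimp only
      split_ifs with h
      · rw [← hψ]
        refine (hpert ⟨i, h⟩ _ _ ((hJA u v).trans (hρε _)) (by simpa using (hε _).le)).2.1.trans ?_
        exact (mul_le_mul (hKi _) (hJA u v) (norm_nonneg _) hKK0).trans hρη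
      · simpa using hη.le
    · intro i u v h
      simp only [h, dif_pos]
      rw [← hμ]
      refine (hpert ⟨i, h⟩ _ _ ((hJA u v).trans (hρε _)) (by simpa using (hε _).le)).2.2.trans ?_
      exact (mul_le_mul (hKi _) (hJA u v) (norm_nonneg _) hKK0).trans hρη
    · intro i u v s h hu hv hv2
      simp only [h, dif_pos] at hv2 ⊢
      have h1 := hJA u v
      have h2 := (hpert ⟨i, h⟩ _ _ ((hJA u v).trans (hρε _)) ((hJA u v).trans (hρε _))).1
      rw [rad_of hρ hu, rad_of hρ hv] at hv2 h2 ⊢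
      rw [← avgJ_apply hg u v]
      have h3 : v - u = s • ψ ⟨i, h⟩ (avgJ g u v) := by nth_rw 1 [hv2]; abel
      rw [h3, map_smul, h2, smul_comm]

end Glimm

namespace Glimm

variable {E : Type*} [NormedAddCommGroup E]

/-- `v` is dominated by a bounded monotone function. -/
def BVdom (v : ℝ → E) (C : ℝ) : Prop :=
  ∃ W : ℝ → ℝ, Monotone W ∧ (∀ x, 0 ≤ W x ∧ W x ≤ C) ∧
    ∀ x y, x ≤ y → ‖v y - v x‖ ≤ W y - W x

theorem BVdom.of_eVariationOn {v : ℝ → E} {C : ℝ} (hC : 0 ≤ C)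
    (h : eVariationOn v univ ≤ ENNReal.ofReal C) : BVdom v C := by
  have hfin : ∀ s, eVariationOn v s ≠ ⊤ := fun s =>
    ((eVariationOn.mono v (subset_univ s)).trans_lt (h.trans_lt ENNReal.ofReal_lt_top)).ne
  have key : ∀ x y, x ≤ y → ‖v y - v x‖ ≤
      (eVariationOn v (Iic y)).toReal - (eVariationOn v (Iic x)).toReal := by
    intro x y hxy
    have h1 : eVariationOn v (Iic x) + eVariationOn v (Icc x y) ≤ eVariationOn v (Iic y) := by
      refine (eVariationOn.add_le_union v ?_).trans (eVariationOn.mono v ?_)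
      · intro a ha b hb; exact le_trans ha hb.1
      · rintro a (ha | ha)
        · exact le_trans ha hxy
        · exact ha.2
    have h2 : edist (v y) (v x) ≤ eVariationOn v (Icc x y) :=
      eVariationOn.edist_le v ⟨hxy, le_rfl⟩ ⟨le_rfl, hxy⟩
    have h3 : (eVariationOn v (Iic x)).toReal + (edist (v y) (v x)).toReal
        ≤ (eVariationOn v (Iic y)).toReal := by
      rw [← ENNReal.toReal_add (hfin _) (edist_ne_top _ _)]
      exact ENNReal.toReal_mono (hfin _) ((add_le_add le_rfl h2).trans h1)
    rw [edist_dist, ENNReal.toReal_ofReal dist_nonneg, dist_eq_norm] at h3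
    linarith
  refine ⟨fun x => (eVariationOn v (Iic x)).toReal, ?_, ?_, key⟩
  · intro x y hxy
    have := (norm_nonneg _).trans (key x y hxy)
    simpa using this
  · intro x
    refine ⟨ENNReal.toReal_nonneg, ?_⟩
    exact ENNReal.toReal_le_of_le_ofReal hC ((eVariationOn.mono v (subset_univ _)).trans h)

theorem BVdom.countable {v : ℝ → E} {C : ℝ} (h : BVdom v C) :
    {x | ¬ ContinuousAt v x}.Countable := by
  obtain ⟨W, hW, -, hv⟩ := h
  refine hW.countable_not_continuousAt.mono ?_
  intro x hx hc
  apply hx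
  rw [Metric.continuousAt_iff] at hc ⊢
  intro ε hε
  obtain ⟨δ, hδ, h⟩ := hc ε hε
  refine ⟨δ, hδ, fun {y} hy => lt_of_le_of_lt ?_ (h hy)⟩
  rw [dist_eq_norm, Real.dist_eq]
  rcases le_total x y with hxy | hxy
  · exact (hv x y hxy).trans (le_abs_self _)
  · rw [norm_sub_rev, abs_sub_comm]
    exact (hv y x hxy).trans (le_abs_self _)

theorem BVdom.norm_sub_le {v : ℝ → E} {C : ℝ} (h : BVdom v C) (x y : ℝ) : ‖v y - v x‖ ≤ C := by
  obtain ⟨W, hW, hb, hv⟩ := h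
  rcases le_total x y with hxy | hxy
  · linarith [hv x y hxy, (hb x).1, (hb y).2]
  · rw [norm_sub_rev]
    linarith [hv y x hxy, (hb y).1, (hb x).2]

theorem BVdom.norm_le {v : ℝ → E} {C : ℝ} (h : BVdom v C) (hi : Integrable v) (x : ℝ) :
    ‖v x‖ ≤ C := by
  by_contra hlt
  push Not at hlt
  have h1 : ∀ y, ‖v x‖ - C ≤ ‖v y‖ := by
    intro y
    have := h.norm_sub_le y x
    have h2 := norm_sub_norm_le (v x) (v y)
    linarith
  have h2 : Integrable (fun _ : ℝ => ‖v x‖ - C) := by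
    refine hi.norm.mono' aestronglyMeasurable_const (Eventually.of_forall fun y => ?_)
    rw [Real.norm_of_nonneg (by linarith)]
    exact h1 y
  rw [integrable_const_iff] at h2
  rcases h2 with h2 | h2
  · linarith
  · have := h2.measure_univ_lt_top
    simp at this

/-- translation-type estimate for BV functions -/
theorem BVdom.lintegral_le {v : ℝ → E} {C : ℝ} (h : BVdom v C) {d : ℝ} (hd : 0 ≤ d)
    (p : ℝ → ℝ) (hp : ∀ x, x - d ≤ p x ∧ p x ≤ x) (a b : ℝ) (hab : a ≤ b) :
    ∫⁻ x in Ioc a b, ‖v x - v (p x)‖ₑ ≤ ENNReal.ofReal (d * C) := by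
  obtain ⟨W, hW, hb, hv⟩ := h
  have hWi : ∀ a b, IntervalIntegrable W volume a b := fun a b =>
    hW.intervalIntegrable
  have hWi' : ∀ a b, IntervalIntegrable (fun x => W (x - d)) volume a b := fun a b =>
    Monotone.intervalIntegrable (fun x y hxy => hW (by linarith))
  have h1 : ∫⁻ x in Ioc a b, ‖v x - v (p x)‖ₑ ≤
      ∫⁻ x in Ioc a b, ENNReal.ofReal (W x - W (x - d)) := by
    refine lintegral_mono fun x => ?_
    rw [← ofReal_norm]
    refine ENNReal.ofReal_le_ofReal ((hv _ _ (hp x).2).trans ?_)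
    have := hW (hp x).1
    linarith
  refine h1.trans ?_
  rw [← ofReal_integral_eq_lintegral_ofReal]
  · refine ENNReal.ofReal_le_ofReal ?_
    rw [← intervalIntegral.integral_of_le hab, intervalIntegral.integral_sub (hWi _ _) (hWi' _ _),
      intervalIntegral.integral_comp_sub_right (fun x => W x)]
    rw [intervalIntegral.integral_interval_sub_interval_comm (hWi _ _) (hWi _ _) (hWi _ _)]
    have e1 : ∫ x in a..(a - d), W x ≤ 0 := by
      rw [intervalIntegral.integral_symm]
      have : 0 ≤ ∫ x in (a-d)..a, W x :=
        intervalIntegral.integral_nonneg (by linarith) (fun x _ => (hb x).1)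
      linarith
    have e2 : - ∫ x in b..(b - d), W x ≤ d * C := by
      rw [← intervalIntegral.integral_symm]
      have : ∫ x in (b-d)..b, W x ≤ ∫ x in (b-d)..b, C :=
        intervalIntegral.integral_mono_on (by linarith) (hWi _ _) (by simp) (fun x _ => (hb x).2)
      simpa using this
    have e3 : 0 ≤ ∫ x in (a-d)..a, W x :=
        intervalIntegral.integral_nonneg (by linarith) (fun x _ => (hb x).1)
    rw [intervalIntegral.integral_symm] at e3
    linarith
  · exact ((hWi a b).sub (hWi' a b)).1
  · refine Eventually.of_forall fun x => ?_
    have := hW (show x - d ≤ x by linarith)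
    simp; linarith

/-- integral of a step function -/
theorem lintegral_step (a : ℕ → E) (ha : a 0 = 0) {C : ℝ} (hC : 0 ≤ C)
    (hs : ∀ N, ∑ j ∈ Finset.range N, ‖a j‖ ≤ C) {h : ℝ} (hh : 0 < h) (R : ℝ) :
    ∫⁻ x : ℝ, ‖a ⌊(x + R) / h⌋₊‖ₑ ≤ ENNReal.ofReal (h * C) := by
  have h0 : ∀ x, ‖a ⌊(x + R) / h⌋₊‖ₑ =
      (⋃ j : ℕ, Ico (-R + j * h) (-R + (j + 1) * h)).indicator
        (fun x => ‖a ⌊(x + R) / h⌋₊‖ₑ) x := by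
    intro x
    by_cases hx : x ∈ ⋃ j : ℕ, Ico (-R + j * h) (-R + (j + 1) * h)
    · rw [indicator_of_mem hx]
    · rw [indicator_of_notMem hx]
      have : ⌊(x + R) / h⌋₊ = 0 := by
        rw [Nat.floor_eq_zero]
        by_contra hge
        push Not at hge
        apply hx
        rw [mem_iUnion]
        have hnn : 0 ≤ (x + R) / h := by linarith
        refine ⟨⌊(x + R) / h⌋₊, ?_, ?_⟩
        · have := Nat.floor_le hnn
          rw [le_div_iff₀ hh] at this; linarith
        · have := Nat.lt_floor_add_one ((x + R) / h)
          rw [div_lt_iff₀ hh] at this; linarith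
      rw [this, ha]; simp
  rw [lintegral_congr h0, lintegral_indicator (MeasurableSet.iUnion fun _ => measurableSet_Ico)]
  refine (lintegral_iUnion_le _ _).trans ?_
  have h1 : ∀ j : ℕ, ∫⁻ x in Ico (-R + j * h) (-R + (j + 1) * h), ‖a ⌊(x + R) / h⌋₊‖ₑ =
      ENNReal.ofReal (h * ‖a j‖) := by
    intro j
    rw [setLIntegral_congr_fun (g := fun _ => ‖a j‖ₑ) measurableSet_Ico]
    · rw [setLIntegral_const, Real.volume_Ico, ← ofReal_norm,
        ← ENNReal.ofReal_mul (norm_nonneg _)]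
      congr 1; ring
    · intro x hx
      have : ⌊(x + R) / h⌋₊ = j := by
        rw [Nat.floor_eq_iff]
        · constructor
          · rw [le_div_iff₀ hh]; linarith [hx.1]
          · rw [div_lt_iff₀ hh]; linarith [hx.2]
        · have : (0:ℝ) ≤ j * h := by positivity
          have := hx.1
          apply div_nonneg _ hh.le; linarith
      simp only [this]
  simp only [h1]
  refine ENNReal.tsum_le_of_sum_range_le fun N => ?_
  rw [← ENNReal.ofReal_sum_of_nonneg (fun _ _ => by positivity), ← Finset.mul_sum]
  exact ENNReal.ofReal_le_ofReal (by gcongr; exact hs N)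

theorem exists_test_family : ∃ χ : ℕ → ℝ × ℝ → ℝ, (∀ m, Measurable (χ m)) ∧
    (∀ m p, |χ m p| ≤ 1) ∧ ∀ φ : ℝ × ℝ → ℝ, Continuous φ → HasCompactSupport φ →
      (∀ p, |φ p| ≤ 1) → ∃ T : ℕ, ∀ ε > 0, ∃ m, (∀ p, |φ p - χ m p| ≤ ε) ∧
        ∀ p, p ∉ Metric.closedBall (0 : ℝ × ℝ) T → φ p = 0 ∧ χ m p = 0 := by
  classical
  have hcpt : ∀ T : ℕ, CompactSpace (Metric.closedBall (0 : ℝ × ℝ) T) := fun T =>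
    isCompact_iff_compactSpace.1 (isCompact_closedBall _ _)
  let χ0 : ℕ → ℕ → ℝ × ℝ → ℝ := fun T m p =>
    if h : p ∈ Metric.closedBall (0 : ℝ × ℝ) T then
      max (-1) (min 1 (TopologicalSpace.denseSeq C(Metric.closedBall (0 : ℝ × ℝ) T, ℝ) m ⟨p, h⟩))
    else 0
  refine ⟨fun i => χ0 i.unpair.1 i.unpair.2, ?_, ?_, ?_⟩
  · intro i
    refine Measurable.dite (s := Metric.closedBall (0 : ℝ × ℝ) (i.unpair.1 : ℕ)) (f := fun q =>
      max (-1) (min 1 (TopologicalSpace.denseSeq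
        C(Metric.closedBall (0 : ℝ × ℝ) (i.unpair.1 : ℕ), ℝ) i.unpair.2 q)))
      (g := fun _ => 0) ?_ measurable_const measurableSet_closedBall
    exact (by fun_prop : Continuous _).measurable
  · intro i p
    simp only [χ0]
    split_ifs with h
    · rw [abs_le]
      exact ⟨le_max_left _ _, max_le (by norm_num) (min_le_left _ _)⟩
    · simp
  · intro φ hφ hc hb
    obtain ⟨T0, hT0⟩ := hc.isCompact.isBounded.subset_closedBall (0 : ℝ × ℝ)
    obtain ⟨T, hT⟩ := exists_nat_ge T0
    have := hcpt T
    have hz : ∀ p, p ∉ Metric.closedBall (0 : ℝ × ℝ) T → φ p = 0 := fun p hp => by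
      by_contra hne
      exact hp (Metric.closedBall_subset_closedBall hT (hT0 (subset_tsupport _ hne)))
    refine ⟨T, fun ε hε => ?_⟩
    let ψ : C(Metric.closedBall (0 : ℝ × ℝ) T, ℝ) := ⟨fun q => φ q, by fun_prop⟩
    obtain ⟨m, hm⟩ := (TopologicalSpace.denseRange_denseSeq
      C(Metric.closedBall (0 : ℝ × ℝ) T, ℝ)).exists_dist_lt ψ hε
    refine ⟨Nat.pair T m, ?_, ?_⟩
    · intro p
      simp only [Nat.unpair_pair, χ0]
      split_ifs with h
      · have h1 := ContinuousMap.dist_apply_le_dist (f := ψ) (g := TopologicalSpace.denseSeq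
          C(Metric.closedBall (0 : ℝ × ℝ) T, ℝ) m) ⟨p, h⟩
        rw [Real.dist_eq] at h1
        have h2 := (abs_le.1 (hb p))
        have h3 : φ p = max (-1) (min 1 (ψ ⟨p, h⟩)) := by
          change φ p = max (-1) (min 1 (φ p))
          rw [min_eq_right h2.2, max_eq_right h2.1]
        rw [h3]
        refine (abs_max_sub_max_le_max _ _ _ _).trans ?_
        refine max_le (by simp [hε.le]) ((abs_min_sub_min_le_max _ _ _ _).trans ?_)
        exact max_le (by simp [hε.le]) (h1.trans hm.le)
      · simp [hz p h, hε.le]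
    · intro p hp
      refine ⟨hz p hp, ?_⟩
      simp only [Nat.unpair_pair, χ0]
      rw [dif_neg hp]

end Glimm

namespace Glimm

variable {E : Type*} [NormedAddCommGroup E]

theorem floor_near {N : ℝ} (hN : 0 < N) (x : ℝ) :
    x - 1 / N ≤ (⌊x * N⌋ : ℝ) / N ∧ (⌊x * N⌋ : ℝ) / N ≤ x := by
  constructor
  · have := Int.lt_floor_add_one (x * N)
    rw [sub_le_iff_le_add, ← add_div, le_div_iff₀ hN]; linarith
  · rw [div_le_iff₀ hN]; exact Int.floor_le _

theorem tri_enorm (a b c d : E) : ‖a - d‖ₑ ≤ ‖a - b‖ₑ + (‖b - c‖ₑ + ‖d - c‖ₑ) := by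
  rw [← enorm_sub_rev c d]
  calc ‖a - d‖ₑ = ‖(a - b) + ((b - c) + (c - d))‖ₑ := by congr 1; abel
    _ ≤ _ := (enorm_add_le _ _).trans (add_le_add le_rfl (enorm_add_le _ _))

variable [MeasurableSpace E] [BorelSpace E]

theorem msub [SecondCountableTopology E] {α : Type*} [MeasurableSpace α] {f g : α → E}
    (hf : Measurable f) (hg : Measurable g) : Measurable (fun x => ‖f x - g x‖ₑ) :=
  (hf.sub hg).enorm

theorem space_cauchy [SecondCountableTopology E] {v : ℕ → ℝ → E} {C : ℝ} (hC : 0 ≤ C)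
    (hm : ∀ ν, Measurable (v ν))
    (hBV : ∀ ν, BVdom (v ν) C) (hc : ∀ q : ℚ, CauchySeq fun k => v k q) (X : ℕ) {ε : ℝ}
    (hε : 0 < ε) : ∀ᶠ N in atTop, ∀ ν ≥ N, ∀ μ ≥ N,
      ∫⁻ x in Ioc (-X : ℝ) X, ‖v ν x - v μ x‖ₑ ≤ ENNReal.ofReal ε := by
  obtain ⟨n, hn⟩ := exists_nat_gt (C / (ε / 3))
  have hn0 : (0 : ℝ) < n := lt_of_le_of_lt (by positivity) hn
  have hCn : 1 / n * C ≤ ε / 3 := by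
    rw [div_lt_iff₀ (by positivity)] at hn
    rw [one_div, inv_mul_le_iff₀ hn0]; exact hn.le
  let p : ℝ → ℝ := fun x => (⌊x * n⌋ : ℝ) / n
  have hp : ∀ x, x - 1 / n ≤ p x ∧ p x ≤ x := fun x => floor_near hn0 x
  have hpm : Measurable p := by
    have : Measurable fun x : ℝ => ⌊x * n⌋ := Int.measurable_floor.comp (measurable_id.mul_const _)
    exact (measurable_from_top.comp this).div_const _
  set η : ℝ := ε / 3 / (2 * X + 1) with hη
  have hη0 : 0 < η := by positivity
  have hfin : ∀ᶠ N in atTop, ∀ k ∈ Finset.Icc (-(X * n : ℤ)) (X * n), ∀ ν ≥ N, ∀ μ ≥ N,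
      ‖v ν ((k : ℝ) / n) - v μ ((k : ℝ) / n)‖ ≤ η := by
    rw [Filter.eventually_all_finset]
    intro k _
    have := hc ((k : ℚ) / n)
    rw [Metric.cauchySeq_iff] at this
    obtain ⟨N, hN⟩ := this η hη0
    filter_upwards [eventually_ge_atTop N] with M hM ν hν μ hμ
    have := hN ν (hM.trans hν) μ (hM.trans hμ)
    rw [dist_eq_norm] at this
    push_cast at this
    exact this.le
  filter_upwards [hfin] with N hN ν hν μ hμ
  have hXX : (-X : ℝ) ≤ X := by have : (0:ℝ) ≤ X := by positivity
                                linarith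
  calc ∫⁻ x in Ioc (-X : ℝ) X, ‖v ν x - v μ x‖ₑ
      ≤ ∫⁻ x in Ioc (-X : ℝ) X, (‖v ν x - v ν (p x)‖ₑ +
          (ENNReal.ofReal η + ‖v μ x - v μ (p x)‖ₑ)) := by
        refine setLIntegral_mono' measurableSet_Ioc fun x hx => ?_
        refine (tri_enorm _ (v ν (p x)) (v μ (p x)) _).trans ?_
        gcongr
        rw [← ofReal_norm]
        refine ENNReal.ofReal_le_ofReal (hN _ ?_ ν hν μ hμ)
        rw [Finset.mem_Icc]
        constructor
        · rw [Int.le_floor]; push_cast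
          have := hx.1; nlinarith
        · have : ((⌊x * n⌋ : ℤ) : ℝ) ≤ ((X * n : ℤ) : ℝ) := by
            push_cast
            refine (Int.floor_le _).trans ?_
            have := hx.2; nlinarith
          exact_mod_cast this
    _ = (∫⁻ x in Ioc (-X : ℝ) X, ‖v ν x - v ν (p x)‖ₑ) + (ENNReal.ofReal (η * (2 * X)) +
          ∫⁻ x in Ioc (-X : ℝ) X, ‖v μ x - v μ (p x)‖ₑ) := by
        rw [lintegral_add_left (msub (g := fun x => v ν (p x)) (hm ν) ((hm ν).comp hpm)),
          lintegral_add_left measurable_const, setLIntegral_const, Real.volume_Ioc,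
          ← ENNReal.ofReal_mul hη0.le]
        congr 4; ring
    _ ≤ ENNReal.ofReal (ε / 3) + (ENNReal.ofReal (ε / 3) + ENNReal.ofReal (ε / 3)) := by
        gcongr
        · exact ((hBV ν).lintegral_le (by positivity) p hp _ _ hXX).trans
            (ENNReal.ofReal_le_ofReal hCn)
        · rw [hη, div_mul_eq_mul_div, div_le_iff₀ (by positivity)]
          nlinarith
        · exact ((hBV μ).lintegral_le (by positivity) p hp _ _ hXX).trans
            (ENNReal.ofReal_le_ofReal hCn)
    _ = ENNReal.ofReal ε := by
        rw [← ENNReal.ofReal_add (by positivity) (by positivity),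
          ← ENNReal.ofReal_add (by positivity) (by positivity)]
        congr 1; ring

theorem time_cauchy [SecondCountableTopology E] {u : ℕ → ℝ → ℝ → E} {C : ℝ} (hC : 0 ≤ C)
    (hm : ∀ ν t, Measurable (u ν t))
    (hBV : ∀ ν t, BVdom (u ν t) C) (h : ℕ → ℝ) (hh : Tendsto h atTop (𝓝 0)) (hh0 : ∀ ν, 0 ≤ h ν)
    (hL : ∀ ν s t, ∫⁻ x, ‖u ν t x - u ν s x‖ₑ ≤ ENNReal.ofReal (C * (|t - s| + h ν)))
    (hc : ∀ q q' : ℚ, CauchySeq fun k => u k q q') (X : ℕ) {ε : ℝ}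
    (hε : 0 < ε) : ∀ᶠ N in atTop, ∀ ν ≥ N, ∀ μ ≥ N, ∀ t : ℝ, |t| ≤ X →
      ∫⁻ x in Ioc (-X : ℝ) X, ‖u ν t x - u μ t x‖ₑ ≤ ENNReal.ofReal ε := by
  obtain ⟨n, hn⟩ := exists_nat_gt (C / (ε / 6))
  have hn0 : (0 : ℝ) < n := lt_of_le_of_lt (by positivity) hn
  have hCn : C * (1 / n) ≤ ε / 6 := by
    rw [div_lt_iff₀ (by positivity)] at hn
    rw [mul_comm, one_div, inv_mul_le_iff₀ hn0]; exact hn.le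
  let p : ℝ → ℝ := fun x => (⌊x * n⌋ : ℝ) / n
  have hp : ∀ x, x - 1 / n ≤ p x ∧ p x ≤ x := fun x => floor_near hn0 x
  have hfin : ∀ᶠ N in atTop, ∀ k ∈ Finset.Icc (-(X * n : ℤ)) (X * n), ∀ ν ≥ N, ∀ μ ≥ N,
      ∫⁻ x in Ioc (-X : ℝ) X, ‖u ν ((k : ℝ) / n) x - u μ ((k : ℝ) / n) x‖ₑ
        ≤ ENNReal.ofReal (ε / 3) := by
    rw [Filter.eventually_all_finset]
    intro k _
    refine space_cauchy hC (fun ν => hm ν _) (fun ν => hBV ν _) (fun q => ?_) X (by positivity)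
    have := hc ((k : ℚ) / n) q
    push_cast at this
    exact this
  have hsm : ∀ᶠ N in atTop, ∀ ν ≥ N, C * h ν ≤ ε / 6 := by
    have : Tendsto (fun ν => C * h ν) atTop (𝓝 0) := by simpa using hh.const_mul C
    have := (this.eventually (ge_mem_nhds (show (0:ℝ) < ε / 6 by positivity)))
    exact eventually_forall_ge_atTop.2 this
  filter_upwards [hfin, hsm] with N hN hN2 ν hν μ hμ t ht
  have hdist : ∀ ν ≥ N, ∫⁻ x in Ioc (-X : ℝ) X, ‖u ν t x - u ν (p t) x‖ₑ
      ≤ ENNReal.ofReal (ε / 3) := by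
    intro ν hν
    refine (setLIntegral_le_lintegral _ _).trans ((hL ν (p t) t).trans ?_)
    refine ENNReal.ofReal_le_ofReal ?_
    have h1 : |t - p t| ≤ 1 / n := by
      rw [abs_le]; constructor <;> linarith [(hp t).1, (hp t).2]
    have := hN2 ν hν
    have : C * |t - p t| ≤ C * (1 / n) := by gcongr
    linarith
  have hk : ⌊t * n⌋ ∈ Finset.Icc (-(X * n : ℤ)) (X * n) := by
    rw [abs_le] at ht
    rw [Finset.mem_Icc]
    constructor
    · rw [Int.le_floor]; push_cast
      have := ht.1; nlinarith
    · have : ((⌊t * n⌋ : ℤ) : ℝ) ≤ ((X * n : ℤ) : ℝ) := by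
        push_cast
        refine (Int.floor_le _).trans ?_
        have := ht.2; nlinarith
      exact_mod_cast this
  calc ∫⁻ x in Ioc (-X : ℝ) X, ‖u ν t x - u μ t x‖ₑ
      ≤ ∫⁻ x in Ioc (-X : ℝ) X, (‖u ν t x - u ν (p t) x‖ₑ +
          (‖u ν (p t) x - u μ (p t) x‖ₑ + ‖u μ t x - u μ (p t) x‖ₑ)) := by
        refine lintegral_mono fun x => tri_enorm _ _ _ _
    _ = _ := by
        rw [lintegral_add_left (msub (hm ν t) (hm ν _)),
          lintegral_add_left (msub (hm ν _) (hm μ _))]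
    _ ≤ ENNReal.ofReal (ε / 3) + (ENNReal.ofReal (ε / 3) + ENNReal.ofReal (ε / 3)) := by
        gcongr
        · exact hdist ν hν
        · exact hN _ hk ν hν μ hμ
        · exact hdist μ hμ
    _ = ENNReal.ofReal ε := by
        rw [← ENNReal.ofReal_add (by positivity) (by positivity),
          ← ENNReal.ofReal_add (by positivity) (by positivity)]
        congr 1; ring

theorem compactness [ProperSpace E] [SecondCountableTopology E] {u : ℕ → ℝ → ℝ → E} {C : ℝ}
    (hC : 0 ≤ C) (hm : ∀ ν, Measurable (Function.uncurry (u ν)))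
    (hb : ∀ ν t x, ‖u ν t x‖ ≤ C)
    (hBV : ∀ ν t, BVdom (u ν t) C) (h : ℕ → ℝ) (hh : Tendsto h atTop (𝓝 0)) (hh0 : ∀ ν, 0 ≤ h ν)
    (hL : ∀ ν s t, ∫⁻ x, ‖u ν t x - u ν s x‖ₑ ≤ ENNReal.ofReal (C * (|t - s| + h ν))) :
    ∃ σ : ℕ → ℕ, StrictMono σ ∧ ∃ w : ℝ → ℝ → E, Measurable (Function.uncurry w) ∧
      ∀ t, ∀ᵐ x : ℝ, Tendsto (fun k => u (σ k) t x) atTop (𝓝 (w t x)) := by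
  have hm' : ∀ ν t, Measurable (u ν t) := fun ν t => (hm ν).comp measurable_prodMk_left
  -- diagonal extraction
  obtain ⟨a, -, τ, hτ, hτa⟩ := (isCompact_univ_pi (fun _ : ℚ × ℚ =>
      isCompact_closedBall (0 : E) C)).tendsto_subseq
      (x := fun ν (q : ℚ × ℚ) => u ν q.1 q.2) (fun ν q _ => by simpa using hb ν _ _)
  have hc : ∀ q q' : ℚ, CauchySeq fun k => u (τ k) q q' := fun q q' =>
    (tendsto_pi_nhds.1 hτa (q, q')).cauchySeq
  have key := fun X : ℕ => time_cauchy hC (u := fun k => u (τ k)) (fun ν t => hm' _ t)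
    (fun ν t => hBV _ t) (fun k => h (τ k)) (hh.comp hτ.tendsto_atTop) (fun k => hh0 _)
    (fun ν s t => hL _ s t) hc X (ε := (1 / 2) ^ X) (by positivity)
  obtain ⟨ρ, hρ, hfast⟩ := Filter.extraction_forall_of_eventually key
  refine ⟨τ ∘ ρ, hτ.comp hρ, fun t x => limUnder atTop (fun k => u (τ (ρ k)) t x), ?_, ?_⟩
  · have : StronglyMeasurable (fun p : ℝ × ℝ => limUnder atTop (fun k => u (τ (ρ k)) p.1 p.2)) :=
      StronglyMeasurable.limUnder (fun k => (hm (τ (ρ k))).stronglyMeasurable)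
    exact this.measurable
  · intro t
    obtain ⟨K0, hK0⟩ := exists_nat_ge |t|
    have hK : ∀ K : ℕ, K0 ≤ K → ∀ᵐ x : ℝ, x ∈ Ioc (-K : ℝ) K →
        CauchySeq (fun k => u (τ (ρ k)) t x) := by
      intro K hKK
      rw [← ae_restrict_iff' measurableSet_Ioc]
      have hfin : ∫⁻ x in Ioc (-K : ℝ) K, ∑' k : ℕ,
          ‖u (τ (ρ (k + K))) t x - u (τ (ρ (k + 1 + K))) t x‖ₑ ≠ ⊤ := by
        rw [lintegral_tsum (fun k => (msub (hm' _ t) (hm' _ t)).aemeasurable)]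
        refine ne_top_of_le_ne_top (b := ∑' k : ℕ, (2⁻¹ : ENNReal) ^ k) ?_
          (ENNReal.tsum_le_tsum fun k => ?_)
        · rw [ENNReal.tsum_geometric]; simp
        · have hkK : (K : ℝ) ≤ ((k + K : ℕ) : ℝ) := by push_cast; linarith [(Nat.cast_nonneg k : (0:ℝ) ≤ k)]
          have h1 := hfast (k + K) (ρ (k + K)) le_rfl (ρ (k + 1 + K))
            (hρ.monotone (by omega)) t (hK0.trans (le_trans (by exact_mod_cast hKK) hkK))
          refine (lintegral_mono_set (Ioc_subset_Ioc (by linarith) hkK)).trans (h1.trans ?_)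
          rw [ENNReal.ofReal_pow (by norm_num), show (1 / 2 : ℝ) = (2 : ℝ)⁻¹ by norm_num,
            ENNReal.ofReal_inv_of_pos (by norm_num), ENNReal.ofReal_ofNat]
          exact pow_le_pow_right_of_le_one' (by simp) (by omega)
      filter_upwards [ae_lt_top (Measurable.tsum fun k =>
        msub (hm' _ t) (hm' _ t)) hfin] with x hx
      have : CauchySeq (fun k => u (τ (ρ (k + K))) t x) := by
        refine cauchySeq_of_edist_le_of_tsum_ne_top _ (fun k => ?_) hx.ne
        rw [edist_eq_enorm_sub]
      exact (cauchySeq_shift K).1 this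
    have hall : ∀ᵐ x : ℝ, ∀ K : ℕ, K0 ≤ K → x ∈ Ioc (-K : ℝ) K →
        CauchySeq (fun k => u (τ (ρ k)) t x) := by
      rw [ae_all_iff]; intro K
      by_cases hKK : K0 ≤ K
      · filter_upwards [hK K hKK] with x hx _ using hx
      · filter_upwards with x hx using absurd hx hKK
    filter_upwards [hall] with x hx
    obtain ⟨K1, hK1⟩ := exists_nat_gt |x|
    have hcs := hx (max K0 K1) (le_max_left _ _) (by
      have h1 : (K1 : ℝ) ≤ ((max K0 K1 : ℕ) : ℝ) := by exact_mod_cast le_max_right _ _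
      rw [abs_lt] at hK1
      exact ⟨by linarith, by linarith⟩)
    exact hcs.tendsto_limUnder

end Glimm

namespace Glimm

variable {E : Type*} [NormedAddCommGroup E]

/-- the piecewise constant approximation -/
def uh (U : ℕ → ℕ → E) (h R : ℝ) (t x : ℝ) : E := U ⌊t / h⌋₊ ⌊(x + R) / h⌋₊

/-- shifted residual -/
def aM (g : E → E) (U : ℕ → ℕ → E) (k : ℕ) : ℕ → E
  | 0 => 0
  | j + 1 => MM g (U k) (U (k + 1)) j

/-- piecewise constant residual -/
def mh (g : E → E) (U : ℕ → ℕ → E) (h R : ℝ) (p : ℝ × ℝ) : E :=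
  if 0 ≤ p.1 then aM g U ⌊p.1 / h⌋₊ ⌊(p.2 + R) / h⌋₊ else 0

theorem sum_aM (g : E → E) (U : ℕ → ℕ → E) (k : ℕ) {C : ℝ} (hC : 0 ≤ C)
    (h : ∀ N, ∑ j ∈ Finset.range N, ‖MM g (U k) (U (k + 1)) j‖ ≤ C) (N : ℕ) :
    ∑ j ∈ Finset.range N, ‖aM g U k j‖ ≤ C := by
  cases N with
  | zero => simpa using hC
  | succ N => rw [Finset.sum_range_succ']; simpa [aM] using h N

theorem sum_time (U : ℕ → ℕ → E) {C : ℝ}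
    (h : ∀ k N, ∑ j ∈ Finset.range N, ‖U (k + 1) j - U k j‖ ≤ C) (k m N : ℕ) :
    ∑ j ∈ Finset.range N, ‖U (k + m) j - U k j‖ ≤ m * C := by
  induction m with
  | zero => simp
  | succ m ih =>
    have : ∑ j ∈ Finset.range N, ‖U (k + (m + 1)) j - U k j‖ ≤
        ∑ j ∈ Finset.range N, (‖U (k + m + 1) j - U (k + m) j‖ + ‖U (k + m) j - U k j‖) := by
      refine Finset.sum_le_sum fun j _ => ?_
      rw [← sub_add_sub_cancel (U (k + (m + 1)) j) (U (k + m) j)]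
      exact norm_add_le _ _
    rw [Finset.sum_add_distrib] at this
    have := h (k + m) N
    push_cast; linarith

theorem floor_diff {h : ℝ} (hh : 0 < h) (s t : ℝ) (hst : s ≤ t) :
    ((⌊t / h⌋₊ : ℝ) - ⌊s / h⌋₊) * h ≤ (t - s) + h := by
  have h1 : (⌊t / h⌋₊ : ℝ) * h - ⌊s / h⌋₊ * h ≤ (t - s) + h := by
    have h2 : s < (⌊s / h⌋₊ + 1) * h := by
      have := Nat.lt_floor_add_one (s / h)
      rwa [div_lt_iff₀ hh] at this
    rcases le_or_gt 0 (t / h) with ht | ht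
    · have h3 := Nat.floor_le ht
      rw [le_div_iff₀ hh] at h3
      linarith
    · rw [Nat.floor_of_nonpos ht.le]
      have : (0:ℝ) ≤ ⌊s / h⌋₊ * h := by positivity
      push_cast; linarith
  linarith

theorem lint_time_aux (U : ℕ → ℕ → E) (h0 : ∀ k, U k 0 = 0) {C : ℝ} (hC : 0 ≤ C)
    (hU : ∀ k N, ∑ j ∈ Finset.range N, ‖U (k + 1) j - U k j‖ ≤ C) {h : ℝ} (hh : 0 < h) (R : ℝ)
    (s t : ℝ) (hst : s ≤ t) :
    ∫⁻ x, ‖uh U h R t x - uh U h R s x‖ₑ ≤ ENNReal.ofReal (C * ((t - s) + h)) := by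
  obtain ⟨m, hm⟩ := Nat.exists_eq_add_of_le
    (Nat.floor_mono (div_le_div_of_nonneg_right hst hh.le) : ⌊s / h⌋₊ ≤ ⌊t / h⌋₊)
  have h1 := lintegral_step (fun j => U ⌊t / h⌋₊ j - U ⌊s / h⌋₊ j) (by simp [h0]) (C := m * C)
    (by positivity) (by intro N; rw [hm]; exact sum_time U hU _ _ _) hh R
  refine h1.trans (ENNReal.ofReal_le_ofReal ?_)
  have h2 := floor_diff hh s t hst
  rw [hm] at h2
  push_cast at h2
  nlinarith

theorem lint_time (U : ℕ → ℕ → E) (h0 : ∀ k, U k 0 = 0) {C : ℝ} (hC : 0 ≤ C)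
    (hU : ∀ k N, ∑ j ∈ Finset.range N, ‖U (k + 1) j - U k j‖ ≤ C) {h : ℝ} (hh : 0 < h) (R : ℝ)
    (s t : ℝ) :
    ∫⁻ x, ‖uh U h R t x - uh U h R s x‖ₑ ≤ ENNReal.ofReal (C * (|t - s| + h)) := by
  rcases le_total s t with hst | hst
  · rw [abs_of_nonneg (by linarith)]
    exact lint_time_aux U h0 hC hU hh R s t hst
  · rw [abs_sub_comm, abs_of_nonneg (by linarith)]
    simp_rw [enorm_sub_rev (uh U h R t _)]
    exact lint_time_aux U h0 hC hU hh R t s hst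

theorem uh_BV (U : ℕ → ℕ → E) {C : ℝ}
    (hU : ∀ k N, ∑ j ∈ Finset.range N, ‖U k (j + 1) - U k j‖ ≤ C) {h : ℝ} (hh : 0 < h) (R : ℝ)
    (t : ℝ) : BVdom (uh U h R t) C := by
  refine ⟨fun x => ∑ j ∈ Finset.range ⌊(x + R) / h⌋₊, ‖U ⌊t / h⌋₊ (j + 1) - U ⌊t / h⌋₊ j‖,
    ?_, ?_, ?_⟩
  · intro x y hxy
    refine Finset.sum_le_sum_of_subset_of_nonneg ?_ (fun _ _ _ => norm_nonneg _)
    rw [Finset.range_subset_range]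
    exact Nat.floor_mono (div_le_div_of_nonneg_right (by linarith) hh.le)
  · intro x
    exact ⟨Finset.sum_nonneg fun _ _ => norm_nonneg _, hU _ _⟩
  · intro x y hxy
    have hle : ⌊(x + R) / h⌋₊ ≤ ⌊(y + R) / h⌋₊ :=
      Nat.floor_mono (div_le_div_of_nonneg_right (by linarith) hh.le)
    rw [← Finset.sum_Ico_eq_sub _ hle]
    unfold uh
    rw [← Finset.sum_Ico_sub (fun j => U ⌊t / h⌋₊ j) hle]
    exact norm_sum_le _ _

theorem norm_le_of_TV (U : ℕ → E) (h0 : U 0 = 0) {C : ℝ}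
    (hU : ∀ N, ∑ j ∈ Finset.range N, ‖U (j + 1) - U j‖ ≤ C) (j : ℕ) : ‖U j‖ ≤ C := by
  have : U j = ∑ i ∈ Finset.range j, (U (i + 1) - U i) := by
    rw [Finset.sum_range_sub, h0, sub_zero]
  rw [this]
  exact (norm_sum_le _ _).trans (hU j)

theorem uh_identity (g : E → E) (U : ℕ → ℕ → E) (h0 : ∀ k, U k 0 = 0) {h : ℝ} (hh : 0 < h) (R : ℝ)
    (t x : ℝ) (ht : 0 ≤ t) :
    uh U h R (t + h) x - uh U h R t x + (g (uh U h R t x) - g (uh U h R t (x - h)))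
      = mh g U h R (t, x) := by
  have e1 : ⌊(t + h) / h⌋₊ = ⌊t / h⌋₊ + 1 := by
    rw [add_div, div_self hh.ne', Nat.floor_add_one (by positivity)]
  have e2 : ⌊(x - h + R) / h⌋₊ = ⌊(x + R) / h⌋₊ - 1 := by
    rw [show (x - h + R) / h = (x + R) / h - 1 by field_simp; ring, Nat.floor_sub_one]
  simp only [uh, mh, if_pos ht, e1, e2]
  rcases hj : ⌊(x + R) / h⌋₊ with _ | j
  · simp [aM, h0]
  · simp [aM, MM]

variable [MeasurableSpace E] [BorelSpace E]

theorem measurable_floor2 (f : ℕ → ℕ → E) (h R : ℝ) :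
    Measurable fun p : ℝ × ℝ => f ⌊p.1 / h⌋₊ ⌊(p.2 + R) / h⌋₊ := by
  have h1 : Measurable fun p : ℝ × ℝ => ⌊p.1 / h⌋₊ :=
    Nat.measurable_floor.comp (measurable_fst.div_const _)
  have h2 : Measurable fun p : ℝ × ℝ => ⌊(p.2 + R) / h⌋₊ :=
    Nat.measurable_floor.comp ((measurable_snd.add_const _).div_const _)
  exact (measurable_of_countable (fun q : ℕ × ℕ => f q.1 q.2)).comp (h1.prodMk h2)

theorem uh_measurable (U : ℕ → ℕ → E) (h R : ℝ) : Measurable (Function.uncurry (uh U h R)) :=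
  measurable_floor2 U h R

theorem mh_measurable (g : E → E) (U : ℕ → ℕ → E) (h R : ℝ) : Measurable (mh g U h R) :=
  Measurable.ite (measurableSet_le measurable_const measurable_fst)
    (measurable_floor2 (aM g U) h R) measurable_const

theorem mh_lint (g : E → E) (U : ℕ → ℕ → E) {C : ℝ} (hC : 0 ≤ C)
    (hM : ∀ k N, ∑ j ∈ Finset.range N, ‖MM g (U k) (U (k + 1)) j‖ ≤ C) {h : ℝ} (hh : 0 < h) (R : ℝ)
    {T : ℝ} (hT : 0 ≤ T) :
    ∫⁻ p : ℝ × ℝ in Iic T ×ˢ univ, ‖mh g U h R p‖ₑ ≤ ENNReal.ofReal (T * (h * C)) := by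
  rw [← lintegral_indicator (measurableSet_Iic.prod MeasurableSet.univ), Measure.volume_eq_prod,
    lintegral_prod _ (((mh_measurable g U h R).enorm.indicator
      (measurableSet_Iic.prod MeasurableSet.univ)).aemeasurable)]
  calc _ ≤ ∫⁻ t : ℝ, (Icc 0 T).indicator (fun _ => ENNReal.ofReal (h * C)) t := by
        refine lintegral_mono fun t => ?_
        by_cases ht : t ∈ Icc 0 T
        · rw [indicator_of_mem ht]
          refine le_trans (lintegral_mono fun x => ?_) (lintegral_step (aM g U ⌊t / h⌋₊) rfl hC
            (sum_aM g U _ hC (hM _)) hh R)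
          refine (indicator_le_self _ _ _).trans ?_
          simp [mh, ht.1]
        · rw [indicator_of_notMem ht]
          refine le_of_eq ?_
          rw [lintegral_eq_zero_of_ae_eq_zero]
          refine Eventually.of_forall fun x => ?_
          by_cases h1 : t ≤ T
          · have : ¬ 0 ≤ t := fun h => ht ⟨h, h1⟩
            simp [mh, this, indicator]
          · simp [h1, indicator]
    _ = ENNReal.ofReal (T * (h * C)) := by
        rw [lintegral_indicator measurableSet_Icc, setLIntegral_const, Real.volume_Icc, mul_comm,
          sub_zero, ← ENNReal.ofReal_mul hT]

theorem not_mem_ball {T : ℝ} {p : ℝ × ℝ} (h : T < p.1 ∨ T < p.2 ∨ p.2 < -T) :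
    p ∉ Metric.closedBall (0 : ℝ × ℝ) T := by
  intro hp
  rw [mem_closedBall_zero_iff, Prod.norm_def, max_le_iff, Real.norm_eq_abs, Real.norm_eq_abs,
    abs_le, abs_le] at hp
  rcases h with h | h | h <;> linarith [hp.1.2, hp.2.1, hp.2.2]

variable [NormedSpace ℝ E]

theorem test_lint (g : E → E) (U : ℕ → ℕ → E) {C : ℝ} (hC : 0 ≤ C)
    (hM : ∀ k N, ∑ j ∈ Finset.range N, ‖MM g (U k) (U (k + 1)) j‖ ≤ C) {h : ℝ} (hh : 0 < h) (R : ℝ)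
    {T : ℝ} (hT : 0 ≤ T) {ψ : ℝ × ℝ → ℝ} {ε : ℝ} (hε : 0 ≤ ε) (hψ : ∀ p, |ψ p| ≤ ε)
    (hz : ∀ p, p ∉ Metric.closedBall (0 : ℝ × ℝ) T → ψ p = 0) :
    ∫⁻ p : ℝ × ℝ, ‖ψ (p.1 + h, p.2) • mh g U h R p‖ₑ ≤ ENNReal.ofReal (ε * (T * (h * C))) := by
  calc _ ≤ ∫⁻ p : ℝ × ℝ, (Iic T ×ˢ univ).indicator
        (fun p => ENNReal.ofReal ε * ‖mh g U h R p‖ₑ) p := by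
        refine lintegral_mono fun p => ?_
        by_cases hp : p ∈ Iic T ×ˢ (univ : Set ℝ)
        · rw [indicator_of_mem hp]
          simp only [enorm_smul]
          gcongr
          rw [← ofReal_norm]
          exact ENNReal.ofReal_le_ofReal (hψ _)
        · rw [indicator_of_notMem hp]
          have : T < p.1 := by simpa using hp
          rw [hz _ (not_mem_ball (Or.inl (by simp; linarith)))]
          simp
    _ = ENNReal.ofReal ε * ∫⁻ p : ℝ × ℝ in Iic T ×ˢ univ, ‖mh g U h R p‖ₑ := by
        rw [lintegral_indicator (measurableSet_Iic.prod MeasurableSet.univ),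
          lintegral_const_mul _ (mh_measurable g U h R).enorm]
    _ ≤ _ := by
        rw [ENNReal.ofReal_mul hε]
        gcongr
        exact mh_lint g U hC hM hh R hT

/-- space-time cell -/
def cell (h R : ℝ) (l j : ℕ) : Set (ℝ × ℝ) :=
  Ico (l * h) ((l + 1) * h) ×ˢ Ico (-R + (j + 1) * h) (-R + (j + 2) * h)

theorem cell_meas (h R : ℝ) (l j : ℕ) : MeasurableSet (cell h R l j) :=
  measurableSet_Ico.prod measurableSet_Ico

theorem cell_vol {h : ℝ} (hh : 0 < h) (R : ℝ) (l j : ℕ) :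
    volume (cell h R l j) = ENNReal.ofReal (h * h) := by
  rw [cell, Measure.volume_eq_prod, Measure.prod_prod, Real.volume_Ico, Real.volume_Ico,
    ENNReal.ofReal_mul hh.le]
  congr 2 <;> ring

theorem mem_cell {h : ℝ} (hh : 0 < h) (R : ℝ) (l j : ℕ) (p : ℝ × ℝ) :
    p ∈ cell h R l j ↔ 0 ≤ p.1 ∧ ⌊p.1 / h⌋₊ = l ∧ ⌊(p.2 + R) / h⌋₊ = j + 1 := by
  have e2 : ⌊(p.2 + R) / h⌋₊ = j + 1 ↔ p.2 ∈ Ico (-R + (j + 1) * h) (-R + (j + 2) * h) := by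
    rw [Nat.floor_eq_iff' (by omega), le_div_iff₀ hh, div_lt_iff₀ hh, mem_Ico]
    push_cast
    constructor <;> rintro ⟨h1, h2⟩ <;> constructor <;> linarith
  have e1 : 0 ≤ p.1 ∧ ⌊p.1 / h⌋₊ = l ↔ p.1 ∈ Ico (l * h) ((l + 1) * h) := by
    constructor
    · rintro ⟨h1, h2⟩
      rwa [Nat.floor_eq_iff (by positivity), le_div_iff₀ hh, div_lt_iff₀ hh] at h2
    · intro hp
      have : (0:ℝ) ≤ l * h := by positivity
      have h0 : 0 ≤ p.1 := this.trans hp.1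
      refine ⟨h0, ?_⟩
      rwa [Nat.floor_eq_iff (by positivity), le_div_iff₀ hh, div_lt_iff₀ hh]
  rw [← and_assoc, e1, e2]; rfl

/-- cell coefficient -/
def cc (χ : ℝ × ℝ → ℝ) (h R : ℝ) (l j : ℕ) : ℝ :=
  h⁻¹ * ∫ p in cell h R l j, χ (p.1 + h, p.2)

theorem cc_le {χ : ℝ × ℝ → ℝ} (hχ : ∀ p, |χ p| ≤ 1) {h : ℝ} (hh : 0 < h) (R : ℝ) (l j : ℕ) :
    |cc χ h R l j| ≤ h := by
  have h1 : ‖∫ p in cell h R l j, χ (p.1 + h, p.2)‖ ≤ 1 * volume.real (cell h R l j) :=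
    norm_setIntegral_le_of_norm_le_const (by rw [cell_vol hh]; exact ENNReal.ofReal_lt_top)
      (fun p _ => hχ _)
  rw [Measure.real, cell_vol hh, ENNReal.toReal_ofReal (by positivity), one_mul,
    Real.norm_eq_abs] at h1
  rw [cc, abs_mul, abs_of_pos (inv_pos.2 hh), inv_mul_le_iff₀ hh]
  exact h1

theorem test_sum [CompleteSpace E] (g : E → E) (U : ℕ → ℕ → E) {h : ℝ} (hh : 0 < h) (R : ℝ)
    {χ : ℝ × ℝ → ℝ} (hm : Measurable χ) (hχ : ∀ p, |χ p| ≤ 1) {T : ℝ}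
    (hz : ∀ p, p ∉ Metric.closedBall (0 : ℝ × ℝ) T → χ p = 0) (K Nf : ℕ) (hK : T ≤ K * h)
    (hN : T + R ≤ Nf * h) :
    h⁻¹ • ∫ p : ℝ × ℝ, χ (p.1 + h, p.2) • mh g U h R p =
      ∑ l ∈ Finset.range K, ∑ j ∈ Finset.range Nf, cc χ h R l j • MM g (U l) (U (l + 1)) j := by
  have hpt : ∀ p : ℝ × ℝ, χ (p.1 + h, p.2) • mh g U h R p =
      ∑ l ∈ Finset.range K, ∑ j ∈ Finset.range Nf,
        ((cell h R l j).indicator (fun p => χ (p.1 + h, p.2)) p) • MM g (U l) (U (l + 1)) j := by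
    intro p
    by_cases hc : χ (p.1 + h, p.2) = 0
    · rw [hc, zero_smul, eq_comm]
      refine Finset.sum_eq_zero fun l _ => Finset.sum_eq_zero fun j _ => ?_
      simp [indicator, hc]
    · have hin : ¬ (T < p.1 + h ∨ T < p.2 ∨ p.2 < -T) := fun h' => hc (hz _ (not_mem_ball h'))
      push Not at hin
      obtain ⟨i1, i2, i3⟩ := hin
      by_cases hp : 0 ≤ p.1
      · simp only [mh, if_pos hp]
        have hl : ⌊p.1 / h⌋₊ < K := by
          rw [Nat.floor_lt (by positivity), div_lt_iff₀ hh]; linarith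
        rcases hj : ⌊(p.2 + R) / h⌋₊ with _ | j
        · simp only [aM, smul_zero]
          rw [eq_comm]
          refine Finset.sum_eq_zero fun l _ => Finset.sum_eq_zero fun j _ => ?_
          rw [indicator_of_notMem, zero_smul]
          rw [mem_cell hh, hj]; omega
        · have hjN : j < Nf := by
            have h1 : ((j + 1 : ℕ) : ℝ) ≤ (p.2 + R) / h := by
              rw [← hj]
              refine Nat.floor_le ?_
              by_contra hneg
              push Not at hneg
              rw [Nat.floor_of_nonpos hneg.le] at hj
              omega
            rw [le_div_iff₀ hh] at h1
            have h2 : ((j + 1 : ℕ) : ℝ) * h ≤ Nf * h := by linarith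
            have h3 : ((j + 1 : ℕ) : ℝ) ≤ Nf := le_of_mul_le_mul_right h2 hh
            have : j + 1 ≤ Nf := by exact_mod_cast h3
            omega
          rw [Finset.sum_eq_single_of_mem _ (Finset.mem_range.2 hl),
            Finset.sum_eq_single_of_mem _ (Finset.mem_range.2 hjN)]
          · rw [indicator_of_mem ((mem_cell hh _ _ _ _).2 ⟨hp, rfl, hj⟩)]
            rfl
          · intro j' _ hne
            rw [indicator_of_notMem, zero_smul]
            rw [mem_cell hh, hj]; omega
          · intro l' _ hne
            refine Finset.sum_eq_zero fun j' _ => ?_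
            rw [indicator_of_notMem, zero_smul]
            rw [mem_cell hh]; intro h'; exact hne h'.2.1.symm
      · simp only [mh, if_neg hp, smul_zero]
        rw [eq_comm]
        refine Finset.sum_eq_zero fun l _ => Finset.sum_eq_zero fun j _ => ?_
        rw [indicator_of_notMem, zero_smul]
        rw [mem_cell hh]; tauto
  have hmχ : Measurable fun p : ℝ × ℝ => χ (p.1 + h, p.2) :=
    hm.comp ((measurable_fst.add_const _).prodMk measurable_snd)
  have hIntg : ∀ l j, Integrable ((cell h R l j).indicator (fun p => χ (p.1 + h, p.2))) := by
    intro l j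
    rw [integrable_indicator_iff (cell_meas _ _ _ _)]
    refine Measure.integrableOn_of_bounded (M := 1) ?_ hmχ.aestronglyMeasurable
      (Eventually.of_forall fun p => hχ _)
    rw [cell_vol hh]; exact ENNReal.ofReal_ne_top
  simp_rw [hpt]
  rw [integral_finsetSum _ (fun l _ => integrable_finsetSum _ fun j _ => (hIntg l j).smul_const _)]
  rw [Finset.smul_sum]
  refine Finset.sum_congr rfl fun l _ => ?_
  rw [integral_finsetSum _ (fun j _ => (hIntg l j).smul_const _), Finset.smul_sum]
  refine Finset.sum_congr rfl fun j _ => ?_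
  rw [integral_smul_const, integral_indicator (cell_meas _ _ _ _), smul_smul]
  rfl

end Glimm

namespace Glimm

variable {E : Type*} [NormedAddCommGroup E] [InnerProductSpace ℝ E] [FiniteDimensional ℝ E]
  [MeasurableSpace E] [BorelSpace E]

/-- mesh size -/
def hs (ν : ℕ) : ℝ := 1 / ((ν : ℝ) + 1) ^ 4

theorem hs_pos (ν : ℕ) : 0 < hs ν := by unfold hs; positivity

theorem hs_le (ν : ℕ) : hs ν ≤ 1 / ((ν : ℝ) + 1) := by
  unfold hs
  have : (0:ℝ) ≤ ν := Nat.cast_nonneg ν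
  gcongr
  exact le_self_pow₀ (by linarith) (by norm_num)

theorem hs_tendsto : Tendsto hs atTop (𝓝 0) :=
  squeeze_zero (fun ν => (hs_pos ν).le) hs_le tendsto_one_div_add_atTop_nhds_zero_nat

theorem hs_K (ν : ℕ) : (((ν + 1) ^ 5 : ℕ) : ℝ) * hs ν = ν + 1 := by
  unfold hs; push_cast; field_simp

theorem discrete_init_TV {ubar : ℝ → E} {δ : ℝ} (hδ : 0 ≤ δ) (hi : Integrable ubar)
    (hv : eVariationOn ubar univ ≤ ENNReal.ofReal δ) (h R : ℝ) (hh : 0 < h) (N : ℕ) :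
    ∑ j ∈ Finset.range N, ‖(if j + 1 = 0 then (0 : E) else ubar ((j + 1 : ℕ) * h - R)) -
      (if j = 0 then (0 : E) else ubar (j * h - R))‖ ≤ 2 * δ := by
  have hBV := BVdom.of_eVariationOn hδ hv
  have hb := hBV.norm_le hi
  cases N with
  | zero => simpa using hδ
  | succ N =>
    rw [Finset.sum_range_succ']
    have h1 : ∑ j ∈ Finset.range N, ‖ubar ((j + 1 + 1 : ℕ) * h - R) - ubar ((j + 1 : ℕ) * h - R)‖
        ≤ δ := by
      obtain ⟨W, hW, hWb, hWv⟩ := hBV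
      calc _ ≤ ∑ j ∈ Finset.range N, (W ((j + 1 + 1 : ℕ) * h - R) - W ((j + 1 : ℕ) * h - R)) := by
            refine Finset.sum_le_sum fun j _ => hWv _ _ ?_
            push_cast; nlinarith
        _ = W ((N + 1 : ℕ) * h - R) - W ((0 + 1 : ℕ) * h - R) :=
            Finset.sum_range_sub (fun j => W ((j + 1 : ℕ) * h - R)) N
        _ ≤ δ := by linarith [(hWb ((N + 1 : ℕ) * h - R)).2, (hWb ((0 + 1 : ℕ) * h - R)).1]
    have h2 := hb ((0 + 1 : ℕ) * h - R)
    simp only [Nat.add_eq_zero_iff, one_ne_zero, and_false, if_false, if_true, sub_zero] at *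
    linarith

theorem approx {g : E → E} {n : ℕ} (Rd : RData g n) : ∃ δ > (0 : ℝ), ∃ C > (0 : ℝ),
    ∀ ubar : ℝ → E, Integrable ubar → eVariationOn ubar univ ≤ ENNReal.ofReal δ →
    ∃ (u : ℕ → ℝ → ℝ → E) (M : ℕ → ℝ × ℝ → E),
      (∀ ν, Measurable (Function.uncurry (u ν))) ∧ (∀ ν t x, ‖u ν t x‖ ≤ C) ∧
      (∀ ν t, BVdom (u ν t) C) ∧
      (∀ ν s t, ∫⁻ x, ‖u ν t x - u ν s x‖ₑ ≤ ENNReal.ofReal (C * (|t - s| + hs ν))) ∧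
      (∀ x, ContinuousAt ubar x → Tendsto (fun ν => u ν 0 x) atTop (𝓝 (ubar x))) ∧
      (∀ ν t x, 0 ≤ t → u ν (t + hs ν) x - u ν t x + (g (u ν t x) - g (u ν t (x - hs ν)))
        = M ν (t, x)) ∧
      (∀ φ : ℝ × ℝ → ℝ, Continuous φ → HasCompactSupport φ → (∀ p, |φ p| ≤ 1) →
        Tendsto (fun ν => (hs ν)⁻¹ • ∫ p : ℝ × ℝ, φ (p.1 + hs ν, p.2) • M ν p) atTop (𝓝 0)) := by
  obtain ⟨δ, hδ, C, hC, hd⟩ := discrete_scheme Rd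
  obtain ⟨χ, hχm, hχb, hχd⟩ := exists_test_family
  refine ⟨δ / 2, by positivity, C, hC, fun ubar hi hv => ?_⟩
  have hU := fun ν : ℕ => hd (fun j => if j = 0 then 0 else ubar (j * hs ν - (ν + 1))) (by simp)
    (fun N => (discrete_init_TV (by positivity) hi hv (hs ν) (ν + 1) (hs_pos ν) N).trans
      (by linarith)) ν (2 * (ν + 1) ^ 5) (fun m l j => cc (χ m) (hs ν) (ν + 1) l j) (hs ν)
      (fun m l j => cc_le (hχb m) (hs_pos ν) _ _ _)
  choose U hU0 hUz hTV hT hMM hG using hU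
  refine ⟨fun ν => uh (U ν) (hs ν) (ν + 1), fun ν => mh g (U ν) (hs ν) (ν + 1),
    fun ν => uh_measurable _ _ _, fun ν t x => norm_le_of_TV _ (hUz ν _) (hTV ν _) _,
    fun ν t => uh_BV _ (hTV ν) (hs_pos ν) _ _,
    fun ν s t => lint_time _ (hUz ν) hC.le (hT ν) (hs_pos ν) _ s t, ?_,
    fun ν t x ht => uh_identity g _ (hUz ν) (hs_pos ν) _ t x ht, ?_⟩
  · intro x hx
    have hfl : ∀ᶠ ν : ℕ in atTop, uh (U ν) (hs ν) (ν + 1) 0 x =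
        ubar (⌊(x + (ν + 1)) / hs ν⌋₊ * hs ν - (ν + 1)) ∧
        |(⌊(x + (ν + 1)) / hs ν⌋₊ * hs ν - (ν + 1)) - x| ≤ hs ν := by
      obtain ⟨ν0, hν0⟩ := exists_nat_gt (|x|)
      filter_upwards [eventually_ge_atTop ν0] with ν hν
      have h1 : (ν0 : ℝ) ≤ ν := by exact_mod_cast hν
      have h2 := neg_abs_le x
      have h3 : 1 ≤ x + (ν + 1) := by linarith
      have h5 : hs ν ≤ 1 := by
        refine (hs_le ν).trans ?_
        rw [div_le_one (by positivity)]
        have : (0:ℝ) ≤ ν := Nat.cast_nonneg ν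
        linarith
      have h4 : 1 ≤ (x + (ν + 1)) / hs ν := by
        rw [le_div_iff₀ (hs_pos ν)]; linarith
      have h6 : ⌊(x + (ν + 1)) / hs ν⌋₊ ≠ 0 := by
        have := (Nat.one_le_floor_iff _).2 h4
        omega
      constructor
      · simp [uh, hU0, h6]
      · have f1 := Nat.floor_le (show 0 ≤ (x + (ν + 1)) / hs ν by linarith)
        have f2 := Nat.lt_floor_add_one ((x + (ν + 1)) / hs ν)
        rw [le_div_iff₀ (hs_pos ν)] at f1
        rw [div_lt_iff₀ (hs_pos ν)] at f2
        rw [abs_le]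
        constructor <;> linarith [hs_pos ν]
    have hp : Tendsto (fun ν : ℕ => (⌊(x + (ν + 1)) / hs ν⌋₊ * hs ν - (ν + 1) : ℝ)) atTop (𝓝 x) := by
      rw [tendsto_iff_dist_tendsto_zero]
      refine squeeze_zero' (Eventually.of_forall fun _ => dist_nonneg) ?_ hs_tendsto
      filter_upwards [hfl] with ν hν
      rw [Real.dist_eq]; exact hν.2
    refine (hx.tendsto.comp hp).congr' ?_
    filter_upwards [hfl] with ν hν
    exact hν.1.symm
  · intro φ hφ hcφ hbφ
    obtain ⟨T, hT'⟩ := hχd φ hφ hcφ hbφ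
    rw [Metric.tendsto_atTop']
    intro ε hε
    obtain ⟨m, hm1, hm2⟩ := hT' (ε / 2 / ((T + 1) * C)) (by positivity)
    -- the greedy part
    have hS : Tendsto (fun ν : ℕ => C * (1 / ((ν : ℝ) + 1))) atTop (𝓝 0) := by
      simpa using tendsto_one_div_add_atTop_nhds_zero_nat.const_mul C
    have hev := hS.eventually (gt_mem_nhds (show (0:ℝ) < ε / 2 by positivity))
    obtain ⟨ν0, hν0⟩ := (hev.and ((eventually_gt_atTop m).and (eventually_ge_atTop T))).exists_forall_of_atTop
    refine ⟨ν0, fun ν hν => ?_⟩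
    obtain ⟨hsm, hmν, hTν⟩ := hν0 ν hν.le
    have hTν' : (T : ℝ) ≤ ν := by exact_mod_cast hTν
    have hh := hs_pos ν
    have lin1 := test_lint g (U ν) hC.le (hMM ν) hh (ν + 1) (T := T) (by positivity) (ψ := χ m)
      zero_le_one (hχb m) (fun p hp => (hm2 p hp).2)
    have lin2 := test_lint g (U ν) hC.le (hMM ν) hh (ν + 1) (T := T) (by positivity)
      (ψ := fun p => φ p - χ m p) (ε := ε / 2 / ((T + 1) * C)) (by positivity) hm1
      (fun p hp => by simp [hm2 p hp])
    have hmsh : Measurable fun p : ℝ × ℝ => (p.1 + hs ν, p.2) :=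
      (measurable_fst.add_const _).prodMk measurable_snd
    have hM := mh_measurable g (U ν) (hs ν) (ν + 1)
    have int1 : Integrable fun p : ℝ × ℝ => χ m (p.1 + hs ν, p.2) • mh g (U ν) (hs ν) (ν + 1) p :=
      ⟨(((hχm m).comp hmsh).smul hM).aestronglyMeasurable, lin1.trans_lt ENNReal.ofReal_lt_top⟩
    have int2 : Integrable fun p : ℝ × ℝ => (φ (p.1 + hs ν, p.2) - χ m (p.1 + hs ν, p.2)) •
        mh g (U ν) (hs ν) (ν + 1) p :=
      ⟨((((hφ.measurable).comp hmsh).sub ((hχm m).comp hmsh)).smul hM).aestronglyMeasurable,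
        lin2.trans_lt ENNReal.ofReal_lt_top⟩
    have hsplit : ∫ p : ℝ × ℝ, φ (p.1 + hs ν, p.2) • mh g (U ν) (hs ν) (ν + 1) p =
        (∫ p : ℝ × ℝ, χ m (p.1 + hs ν, p.2) • mh g (U ν) (hs ν) (ν + 1) p) +
        ∫ p : ℝ × ℝ, (φ (p.1 + hs ν, p.2) - χ m (p.1 + hs ν, p.2)) •
          mh g (U ν) (hs ν) (ν + 1) p := by
      rw [← integral_add int1 int2]
      refine integral_congr_ae (Eventually.of_forall fun p => ?_)
      simp only [sub_smul]; abel
    rw [dist_zero_right, hsplit, smul_add]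
    have b2 : ‖(hs ν)⁻¹ • ∫ p : ℝ × ℝ, (φ (p.1 + hs ν, p.2) - χ m (p.1 + hs ν, p.2)) •
          mh g (U ν) (hs ν) (ν + 1) p‖ ≤ ε / 2 := by
      have b3 : ‖∫ p : ℝ × ℝ, (φ (p.1 + hs ν, p.2) - χ m (p.1 + hs ν, p.2)) •
          mh g (U ν) (hs ν) (ν + 1) p‖ ≤ ε / 2 / ((T + 1) * C) * (T * (hs ν * C)) := by
        have := (enorm_integral_le_lintegral_enorm _).trans lin2
        rw [← ofReal_norm] at this
        exact (ENNReal.ofReal_le_ofReal_iff (by positivity)).1 this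
      rw [norm_smul, norm_inv, Real.norm_of_nonneg hh.le, inv_mul_le_iff₀ hh]
      refine b3.trans ?_
      have : ε / 2 / ((T + 1) * C) * (T * (hs ν * C)) = hs ν * (ε / 2) * (T / (T + 1)) := by
        field_simp
      rw [this]
      refine mul_le_of_le_one_right (by positivity) ?_
      rw [div_le_one (by positivity)]; linarith
    have b1 : ‖(hs ν)⁻¹ • ∫ p : ℝ × ℝ, χ m (p.1 + hs ν, p.2) • mh g (U ν) (hs ν) (ν + 1) p‖
        < ε / 2 := by
      rw [test_sum g (U ν) hh _ (hχm m) (hχb m) (fun p hp => (hm2 p hp).2) ((ν + 1) ^ 5)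
        (2 * (ν + 1) ^ 5) (by rw [hs_K]; linarith)
        (by push_cast; have := hs_K ν; push_cast at this; rw [mul_assoc, this]; linarith)]
      refine lt_of_le_of_lt ?_ hsm
      have hg1 := (Finset.single_le_sum (f := fun m => ‖∑ l ∈ Finset.range ((ν + 1) ^ 5),
        ∑ j ∈ Finset.range (2 * (ν + 1) ^ 5), cc (χ m) (hs ν) (ν + 1) l j •
          MM g (U ν l) (U ν (l + 1)) j‖ ^ 2) (fun i _ => by positivity)
          (Finset.mem_range.2 hmν)).trans (hG ν ((ν + 1) ^ 5))
      refine le_of_sq_le_sq (hg1.trans ?_) (by positivity)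
      have : (((ν + 1) ^ 5 : ℕ) : ℝ) * (ν * (C * hs ν) ^ 2) = (C ^ 2) * (ν * (hs ν * (ν + 1))) := by
        rw [← hs_K]; ring
      rw [this, mul_pow]
      gcongr
      unfold hs
      rw [div_pow, one_pow, ← mul_assoc, mul_one_div, div_mul_eq_mul_div,
        div_le_div_iff₀ (by positivity) (by positivity)]
      have hν0 : (0:ℝ) ≤ ν := Nat.cast_nonneg ν
      have : (1:ℝ) * (ν + 1) ^ 4 = (ν + 1) * (ν + 1) * (ν + 1) ^ 2 := by ring
      rw [this]
      gcongr
      linarith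
    calc _ ≤ _ := norm_add_le _ _
      _ < ε := by linarith

end Glimm

namespace Glimm

variable {E : Type*} [NormedAddCommGroup E] [InnerProductSpace ℝ E] [FiniteDimensional ℝ E]
  [MeasurableSpace E] [BorelSpace E]

theorem integrable_test {ψ : ℝ × ℝ → ℝ} (hψ : Continuous ψ) (hc : HasCompactSupport ψ)
    {v : ℝ × ℝ → E} (hv : Measurable v) {C : ℝ} (hb : ∀ p, ‖v p‖ ≤ C) :
    Integrable fun p => ψ p • v p := by
  have h1 : Integrable ψ := hψ.integrable_of_hasCompactSupport hc
  refine (h1.norm.mul_const C).mono' (hψ.measurable.smul hv).aestronglyMeasurable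
    (Eventually.of_forall fun p => ?_)
  rw [norm_smul]
  gcongr
  exact hb p

theorem shift_integral {φ : ℝ × ℝ → ℝ} (hφ : Continuous φ) (hc : HasCompactSupport φ)
    {g : E → E} (hg : Continuous g) {u : ℝ → ℝ → E} (hu : Measurable (Function.uncurry u)) {C : ℝ}
    (hb : ∀ t x, ‖u t x‖ ≤ C) {G : ℝ} (hG : ∀ t x, ‖g (u t x)‖ ≤ G) {h : ℝ} {M : ℝ × ℝ → E}
    (hM : ∀ t x, 0 ≤ t → u (t + h) x - u t x + (g (u t x) - g (u t (x - h))) = M (t, x))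
    (hz : ∀ t x, t < 0 → φ (t + h, x) = 0) :
    ∫ p : ℝ × ℝ, ((h⁻¹ * (φ (p.1 + h, p.2) - φ p)) • u p.1 p.2 +
      (h⁻¹ * (φ (p.1 + h, p.2 + h) - φ (p.1 + h, p.2))) • g (u p.1 p.2)) =
      - (h⁻¹ • ∫ p : ℝ × ℝ, φ (p.1 + h, p.2) • M p) := by
  have hcs : ∀ a : ℝ × ℝ, HasCompactSupport fun p : ℝ × ℝ => φ (p + a) := fun a =>
    hc.comp_homeomorph (Homeomorph.addRight a)
  have hmu : Measurable fun p : ℝ × ℝ => u p.1 p.2 := hu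
  have hmg : Measurable fun p : ℝ × ℝ => g (u p.1 p.2) := hg.measurable.comp hmu
  have hsm : ∀ a : ℝ × ℝ, Measurable fun p : ℝ × ℝ => p + a := fun a => measurable_add_const a
  have I1 : Integrable fun p : ℝ × ℝ => φ (p + (h, 0)) • u (p + (h, 0)).1 (p + (h, 0)).2 :=
    integrable_test (by fun_prop) (hcs _) (hmu.comp (hsm _)) (fun p => hb _ _)
  have I2 : Integrable fun p : ℝ × ℝ => φ (p + (h, 0)) • u p.1 p.2 :=
    integrable_test (by fun_prop) (hcs _) hmu (fun p => hb _ _)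
  have I3 : Integrable fun p : ℝ × ℝ => φ (p + (h, 0)) • g (u p.1 p.2) :=
    integrable_test (by fun_prop) (hcs _) hmg (fun p => hG _ _)
  have I4 : Integrable fun p : ℝ × ℝ =>
      φ (p + (h, 0)) • g (u (p + (0, -h)).1 (p + (0, -h)).2) :=
    integrable_test (by fun_prop) (hcs _) (hmg.comp (hsm _)) (fun p => hG _ _)
  have J1 : Integrable fun p : ℝ × ℝ => φ p • u p.1 p.2 :=
    integrable_test hφ hc hmu (fun p => hb _ _)
  have J4 : Integrable fun p : ℝ × ℝ => φ (p + (h, h)) • g (u p.1 p.2) :=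
    integrable_test (by fun_prop) (hcs _) hmg (fun p => hG _ _)
  have E1 : ∫ p : ℝ × ℝ, φ (p + (h, 0)) • u (p + (h, 0)).1 (p + (h, 0)).2 =
      ∫ p : ℝ × ℝ, φ p • u p.1 p.2 :=
    integral_add_right_eq_self (fun p : ℝ × ℝ => φ p • u p.1 p.2) (h, 0)
  have E4 : ∫ p : ℝ × ℝ, φ (p + (h, h)) • g (u p.1 p.2) =
      ∫ p : ℝ × ℝ, φ (p + (h, 0)) • g (u (p + (0, -h)).1 (p + (0, -h)).2) := by
    refine Eq.trans ?_ (integral_add_right_eq_self (fun p : ℝ × ℝ =>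
      φ (p + (h, 0)) • g (u (p + (0, -h)).1 (p + (0, -h)).2)) ((0, h) : ℝ × ℝ))
    refine integral_congr_ae (Eventually.of_forall fun p => ?_)
    simp [add_assoc]
  have EM : ∫ p : ℝ × ℝ, φ (p.1 + h, p.2) • M p =
      ∫ p : ℝ × ℝ, ((φ (p + (h, 0)) • u (p + (h, 0)).1 (p + (h, 0)).2 - φ (p + (h, 0)) • u p.1 p.2) +
        (φ (p + (h, 0)) • g (u p.1 p.2) -
          φ (p + (h, 0)) • g (u (p + (0, -h)).1 (p + (0, -h)).2))) := by
    refine integral_congr_ae (Eventually.of_forall fun p => ?_)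
    obtain ⟨t, x⟩ := p
    simp only [Prod.mk_add_mk, add_zero]
    by_cases ht : 0 ≤ t
    · rw [← hM t x ht, ← sub_eq_add_neg]
      simp only [smul_add, smul_sub]
    · rw [hz t x (by linarith)]; simp
  have EL : ∫ p : ℝ × ℝ, ((h⁻¹ * (φ (p.1 + h, p.2) - φ p)) • u p.1 p.2 +
      (h⁻¹ * (φ (p.1 + h, p.2 + h) - φ (p.1 + h, p.2))) • g (u p.1 p.2)) =
      ∫ p : ℝ × ℝ, h⁻¹ • ((φ (p + (h, 0)) • u p.1 p.2 - φ p • u p.1 p.2) +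
        (φ (p + (h, h)) • g (u p.1 p.2) - φ (p + (h, 0)) • g (u p.1 p.2))) := by
    refine integral_congr_ae (Eventually.of_forall fun p => ?_)
    obtain ⟨t, x⟩ := p
    simp only [Prod.mk_add_mk, add_zero]
    module
  have S1 : Integrable fun p : ℝ × ℝ => φ (p + (h, 0)) • u p.1 p.2 - φ p • u p.1 p.2 := I2.sub J1
  have S2 : Integrable fun p : ℝ × ℝ =>
    φ (p + (h, h)) • g (u p.1 p.2) - φ (p + (h, 0)) • g (u p.1 p.2) := J4.sub I3
  have S3 : Integrable fun p : ℝ × ℝ => φ (p + (h, 0)) • u (p + (h, 0)).1 (p + (h, 0)).2 -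
    φ (p + (h, 0)) • u p.1 p.2 := I1.sub I2
  have S4 : Integrable fun p : ℝ × ℝ => φ (p + (h, 0)) • g (u p.1 p.2) -
    φ (p + (h, 0)) • g (u (p + (0, -h)).1 (p + (0, -h)).2) := I3.sub I4
  rw [EL, EM, integral_smul, integral_add S1 S2, integral_sub I2 J1,
    integral_sub J4 I3, integral_add S3 S4, integral_sub I1 I2,
    integral_sub I3 I4, E1, E4]
  module

theorem quot_tendsto {φ : ℝ × ℝ → ℝ} {p : ℝ × ℝ} (hφ : DifferentiableAt ℝ φ p) {h : ℕ → ℝ}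
    (h0 : ∀ k, 0 < h k) (hh : Tendsto h atTop (𝓝 0)) (v : ℝ × ℝ) :
    Tendsto (fun k => (h k)⁻¹ * (φ (p + h k • v) - φ p)) atTop (𝓝 (fderiv ℝ φ p v)) := by
  have := hφ.hasFDerivAt.lim v (c := fun k => (h k)⁻¹) (l := atTop) (by
    have h1 : Tendsto h atTop (𝓝[>] 0) :=
      tendsto_nhdsWithin_iff.2 ⟨hh, Eventually.of_forall h0⟩
    refine (tendsto_inv_nhdsGT_zero.comp h1).congr fun k => ?_
    simp [abs_of_pos (h0 k)])
  simpa using this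

theorem weak_limit {φ : ℝ × ℝ → ℝ} (hφ : ContDiff ℝ 1 φ) (hc : HasCompactSupport φ)
    {g : E → E} (hg : Continuous g) {u : ℕ → ℝ → ℝ → E}
    (hu : ∀ k, Measurable (Function.uncurry (u k))) {C : ℝ}
    (hb : ∀ k t x, ‖u k t x‖ ≤ C) {G : ℝ} (hG : ∀ k t x, ‖g (u k t x)‖ ≤ G) {h : ℕ → ℝ}
    (h0 : ∀ k, 0 < h k) (h1 : ∀ k, h k ≤ 1) (hh : Tendsto h atTop (𝓝 0)) {w : ℝ → ℝ → E}
    (hw : ∀ᵐ p : ℝ × ℝ, Tendsto (fun k => u k p.1 p.2) atTop (𝓝 (w p.1 p.2))) :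
    Tendsto (fun k => ∫ p : ℝ × ℝ, (((h k)⁻¹ * (φ (p.1 + h k, p.2) - φ p)) • u k p.1 p.2 +
      ((h k)⁻¹ * (φ (p.1 + h k, p.2 + h k) - φ (p.1 + h k, p.2))) • g (u k p.1 p.2))) atTop
      (𝓝 (∫ p : ℝ × ℝ, (fderiv ℝ φ p (1, 0) • w p.1 p.2 + fderiv ℝ φ p (0, 1) • g (w p.1 p.2)))) := by
  obtain ⟨L, hL⟩ := ContDiff.lipschitzWith_of_hasCompactSupport hc hφ (by simp)
  obtain ⟨T, hT⟩ := hc.isCompact.isBounded.subset_closedBall (0 : ℝ × ℝ)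
  have hz : ∀ p : ℝ × ℝ, T < ‖p‖ → φ p = 0 := fun p hp => by
    by_contra hne
    have := hT (subset_tsupport _ hne)
    rw [mem_closedBall_zero_iff] at this
    linarith
  have hC0 : 0 ≤ C := (norm_nonneg _).trans (hb 0 0 0)
  have hG0 : 0 ≤ G := (norm_nonneg _).trans (hG 0 0 0)
  have hLq : ∀ k (p q : ℝ × ℝ), ‖p - q‖ ≤ h k → |(h k)⁻¹ * (φ p - φ q)| ≤ L := by
    intro k p q hpq
    have := hL.dist_le_mul p q
    rw [dist_eq_norm, dist_eq_norm, Real.norm_eq_abs] at this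
    rw [abs_mul, abs_of_pos (inv_pos.2 (h0 k)), inv_mul_le_iff₀ (h0 k), mul_comm]
    exact this.trans (by gcongr)
  have hLq' : ∀ k (p q : ℝ × ℝ), ‖p - q‖ ≤ h k → |(h k)⁻¹ * (φ p - φ q)| ≤ L := hLq
  refine tendsto_integral_of_dominated_convergence
    ((Metric.closedBall (0 : ℝ × ℝ) (T + 1)).indicator fun _ => L * C + L * G) ?_ ?_ ?_ ?_
  · intro k
    have m1 : Measurable φ := hφ.continuous.measurable
    have m2 : Measurable fun p : ℝ × ℝ => u k p.1 p.2 := hu k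
    have m3 : Measurable fun p : ℝ × ℝ => g (u k p.1 p.2) := hg.measurable.comp m2
    have m4 : Measurable fun p : ℝ × ℝ => φ (p.1 + h k, p.2) :=
      m1.comp ((measurable_fst.add_const _).prodMk measurable_snd)
    have m5 : Measurable fun p : ℝ × ℝ => φ (p.1 + h k, p.2 + h k) :=
      m1.comp ((measurable_fst.add_const _).prodMk (measurable_snd.add_const _))
    exact ((((m4.sub m1).const_mul _).smul m2).add
      (((m5.sub m4).const_mul _).smul m3)).aestronglyMeasurable
  · rw [integrable_indicator_iff measurableSet_closedBall]
    exact integrableOn_const (measure_closedBall_lt_top).ne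
  · intro k
    refine Eventually.of_forall fun p => ?_
    by_cases hp : p ∈ Metric.closedBall (0 : ℝ × ℝ) (T + 1)
    · rw [indicator_of_mem hp]
      refine (norm_add_le _ _).trans ?_
      rw [norm_smul, norm_smul, Real.norm_eq_abs, Real.norm_eq_abs]
      have hk := (h0 k).le
      have q1 := hLq k (p.1 + h k, p.2) p (by
        rw [Prod.norm_def]; simp [abs_of_nonneg hk, hk])
      have q2 := hLq k (p.1 + h k, p.2 + h k) (p.1 + h k, p.2) (by
        rw [Prod.norm_def]; simp [abs_of_nonneg hk, hk])
      gcongr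
      · exact hb _ _ _
      · exact hG _ _ _
    · rw [indicator_of_notMem hp]
      rw [mem_closedBall_zero_iff, not_le] at hp
      have hk := (h0 k).le
      have z0 : φ p = 0 := hz p (by linarith)
      have zz : ∀ a : ℝ × ℝ, ‖a‖ ≤ 1 → φ (p + a) = 0 := by
        intro a ha
        refine hz _ ?_
        have : ‖p‖ ≤ ‖p + a‖ + ‖a‖ := by
          simpa using norm_sub_le (p + a) a
        linarith
      have z1 : φ (p.1 + h k, p.2) = 0 := by
        have := zz (h k, 0) (by rw [Prod.norm_def]; simp [abs_of_nonneg hk, h1 k])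
        simpa [Prod.add_def] using this
      have z2 : φ (p.1 + h k, p.2 + h k) = 0 := by
        have := zz (h k, h k) (by rw [Prod.norm_def]; simp [abs_of_nonneg hk, h1 k])
        simpa [Prod.add_def] using this
      rw [z0, z1, z2]; simp
  · filter_upwards [hw] with p hp
    have hd : DifferentiableAt ℝ φ p := hφ.differentiable (by simp) p
    have q1 := quot_tendsto hd h0 hh (1, 0)
    have q2 := quot_tendsto hd h0 hh (1, 1)
    refine Tendsto.add (Tendsto.smul ?_ hp) (Tendsto.smul ?_ ((hg.tendsto _).comp hp))
    · refine q1.congr fun k => ?_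
      simp [Prod.add_def]
    · have := q2.sub q1
      rw [← map_sub] at this
      simp only [Prod.mk_sub_mk, sub_self, sub_zero] at this
      refine this.congr fun k => ?_
      simp [Prod.add_def]; ring

theorem part2 {g : E → E} (hg : Continuous g) {n : ℕ} (Rd : RData g n) : ∃ δ > (0 : ℝ),
    ∀ ubar : ℝ → E, Integrable ubar → eVariationOn ubar univ ≤ ENNReal.ofReal δ →
    ∃ (w : ℝ → ℝ → E) (C : ℝ), w 0 = ubar ∧ Measurable (Function.uncurry w) ∧
      (∀ t, Integrable (w t)) ∧
      (∀ s t, ∫⁻ x, ‖w t x - w s x‖ₑ ≤ ENNReal.ofReal (C * |t - s|)) ∧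
      (∀ φ : ℝ × ℝ → ℝ, ContDiff ℝ 1 φ → HasCompactSupport φ →
        tsupport φ ⊆ Ioi (0 : ℝ) ×ˢ univ →
        ∫ p : ℝ × ℝ, (fderiv ℝ φ p (1, 0) • w p.1 p.2 + fderiv ℝ φ p (0, 1) • g (w p.1 p.2)) = 0) := by
  obtain ⟨δ, hδ, C, hC, hap⟩ := approx Rd
  refine ⟨δ, hδ, fun ubar hi hv => ?_⟩
  obtain ⟨u, M, hum, hub, huBV, huL, hu0, hid, htest⟩ := hap ubar hi hv
  obtain ⟨σ, hσ, w0, hw0m, hw0⟩ := compactness hC.le hum hub huBV hs hs_tendsto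
    (fun ν => (hs_pos ν).le) huL
  have hcount := (BVdom.of_eVariationOn hδ.le hv).countable
  have hubarm : Measurable ubar := measurable_of_countable_not_continuousAt hcount
  set w : ℝ → ℝ → E := fun t x => if t = 0 then ubar x else w0 t x with hw
  have hwm : Measurable (Function.uncurry w) :=
    Measurable.ite (measurableSet_eq_fun measurable_fst measurable_const)
      (hubarm.comp measurable_snd) hw0m
  have hwt : ∀ t, Measurable (w t) := fun t => hwm.comp measurable_prodMk_left
  have hum' : ∀ ν t, Measurable (u ν t) := fun ν t => (hum ν).comp measurable_prodMk_left
  have hconv : ∀ t, ∀ᵐ x : ℝ, Tendsto (fun k => u (σ k) t x) atTop (𝓝 (w t x)) := by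
    intro t
    by_cases ht : t = 0
    · subst ht
      filter_upwards [hcount.ae_notMem volume] with x hx
      have hx' : ContinuousAt ubar x := by simpa using hx
      simp only [hw, if_true]
      exact (hu0 x hx').comp hσ.tendsto_atTop
    · filter_upwards [hw0 t] with x hx
      simpa [hw, ht] using hx
  have hwL : ∀ s t, ∫⁻ x, ‖w t x - w s x‖ₑ ≤ ENNReal.ofReal (C * |t - s|) := by
    intro s t
    calc ∫⁻ x, ‖w t x - w s x‖ₑ
        = ∫⁻ x, liminf (fun k => ‖u (σ k) t x - u (σ k) s x‖ₑ) atTop := by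
          refine lintegral_congr_ae ?_
          filter_upwards [hconv t, hconv s] with x h1 h2
          exact ((h1.sub h2).enorm).liminf_eq.symm
      _ ≤ liminf (fun k => ∫⁻ x, ‖u (σ k) t x - u (σ k) s x‖ₑ) atTop :=
          lintegral_liminf_le (fun k => msub (hum' _ _) (hum' _ _))
      _ ≤ liminf (fun k => ENNReal.ofReal (C * (|t - s| + hs (σ k)))) atTop :=
          liminf_le_liminf (Eventually.of_forall fun k => huL _ _ _)
      _ = ENNReal.ofReal (C * |t - s|) := by
          refine Tendsto.liminf_eq (ENNReal.tendsto_ofReal ?_)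
          have := ((hs_tendsto.comp hσ.tendsto_atTop).const_add |t - s|).const_mul C
          simpa using this
  refine ⟨w, C, by funext x; simp [hw], hwm, ?_, hwL, ?_⟩
  · intro t
    have h1 : Integrable (fun x => w t x - w 0 x) :=
      ⟨((hwt t).sub (hwt 0)).aestronglyMeasurable,
        (hwL 0 t).trans_lt ENNReal.ofReal_lt_top⟩
    have h2 : Integrable (w 0) := by
      have : w 0 = ubar := by funext x; simp [hw]
      rw [this]; exact hi
    have := h1.add h2
    refine this.congr (Eventually.of_forall fun x => ?_)
    simp
  · intro φ hφ hc hsupp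
    have hae : ∀ᵐ p : ℝ × ℝ, Tendsto (fun k => u (σ k) p.1 p.2) atTop (𝓝 (w p.1 p.2)) := by
      have hms : MeasurableSet {p : ℝ × ℝ | Tendsto (fun k => ‖u (σ k) p.1 p.2 - w p.1 p.2‖)
          atTop (𝓝 0)} :=
        measurableSet_tendsto _ (fun k => ((hum (σ k)).sub hwm).norm)
      have := (Measure.ae_prod_mem_iff_ae_ae_mem (μ := (volume : Measure ℝ))
        (ν := (volume : Measure ℝ)) hms).2 (Eventually.of_forall fun t => by
          filter_upwards [hconv t] with x hx
          exact tendsto_iff_norm_sub_tendsto_zero.1 hx)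
      rw [Measure.volume_eq_prod]
      filter_upwards [this] with p hp
      exact tendsto_iff_norm_sub_tendsto_zero.2 hp
    obtain ⟨G, hG⟩ := (isCompact_closedBall (0 : E) C).exists_bound_of_continuousOn hg.continuousOn
    have hG' : ∀ ν t x, ‖g (u ν t x)‖ ≤ G := fun ν t x => hG _ (by simpa using hub ν t x)
    have hs1 : ∀ ν, hs ν ≤ 1 := fun ν => (hs_le ν).trans (by
      rw [div_le_one (by positivity)]
      have : (0:ℝ) ≤ ν := Nat.cast_nonneg ν
      linarith)
    have hhσ : Tendsto (fun k => hs (σ k)) atTop (𝓝 0) := hs_tendsto.comp hσ.tendsto_atTop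
    have lim1 := weak_limit hφ hc hg (fun k => hum (σ k)) (fun k => hub (σ k))
      (fun k => hG' (σ k)) (fun k => hs_pos (σ k)) (fun k => hs1 (σ k)) hhσ hae
    obtain ⟨t0, ht0, ht0'⟩ := hc.isCompact.exists_forall_le' (f := fun p : ℝ × ℝ => p.1)
      continuous_fst.continuousOn (a := 0) (fun p hp => (hsupp hp).1)
    have hev : ∀ᶠ k in atTop, hs (σ k) < t0 := hhσ.eventually (gt_mem_nhds ht0)
    obtain ⟨B, hB⟩ := hc.exists_bound_of_continuous hφ.continuous
    have hB0 : 0 ≤ B := (norm_nonneg _).trans (hB 0)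
    have lim2 : Tendsto (fun ν => (hs ν)⁻¹ • ∫ p : ℝ × ℝ, φ (p.1 + hs ν, p.2) • M ν p) atTop
        (𝓝 0) := by
      have := (htest (fun p => (B + 1)⁻¹ * φ p) (hφ.continuous.const_mul _)
        (hc.mul_left (f := fun _ => (B + 1)⁻¹)) (fun p => by
          rw [abs_mul, abs_of_pos (by positivity), inv_mul_le_iff₀ (by positivity)]
          have := hB p
          rw [Real.norm_eq_abs] at this
          linarith)).const_smul (B + 1)
      rw [smul_zero] at this
      refine this.congr fun ν => ?_
      simp_rw [mul_smul]
      rw [integral_smul, smul_comm, smul_smul (B + 1), mul_inv_cancel₀ (by positivity), one_smul]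
    have lim3 : Tendsto (fun k => ∫ p : ℝ × ℝ,
        (((hs (σ k))⁻¹ * (φ (p.1 + hs (σ k), p.2) - φ p)) • u (σ k) p.1 p.2 +
        ((hs (σ k))⁻¹ * (φ (p.1 + hs (σ k), p.2 + hs (σ k)) - φ (p.1 + hs (σ k), p.2))) •
          g (u (σ k) p.1 p.2))) atTop (𝓝 0) := by
      have := (lim2.comp hσ.tendsto_atTop).neg
      rw [neg_zero] at this
      refine this.congr' ?_
      filter_upwards [hev] with k hk
      refine (shift_integral hφ.continuous hc hg (hum (σ k)) (hub (σ k)) (hG' (σ k))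
        (hid (σ k)) (fun t x ht => ?_)).symm
      by_contra hne
      have := ht0' _ (subset_tsupport _ hne)
      simp at this
      linarith
    exact tendsto_nhds_unique lim1 lim3

end Glimm

namespace Glimm

variable {E : Type*} [NormedAddCommGroup E] [InnerProductSpace ℝ E] [FiniteDimensional ℝ E]
  [MeasurableSpace E] [BorelSpace E]

theorem translation_tendsto {F : ℝ → E} (hF : Integrable F) (a : ℝ) :
    Tendsto (fun b : ℝ => ∫ x, ‖F (x + b) - F (x + a)‖) (𝓝 a) (𝓝 0) := by
  let G : ℝ → C(ℝ, ℝ) := fun b => ⟨fun x => x + b, by fun_prop⟩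
  have hG : Continuous G :=
    ContinuousMap.continuous_of_continuous_uncurry _ (by
      change Continuous fun p : ℝ × ℝ => p.2 + p.1
      fun_prop)
  have hm : ∀ b, MeasurePreserving (G b) volume volume := fun b => measurePreserving_add_right _ b
  have h := Filter.Tendsto.compMeasurePreservingLp (p := 1) (E := E)
    (tendsto_const_nhds (x := hF.toL1 F)) (hG.tendsto a) hm (hm a) (by simp)
  rw [tendsto_iff_norm_sub_tendsto_zero] at h
  refine h.congr fun b => ?_
  rw [L1.norm_eq_integral_norm]
  refine integral_congr_ae ?_
  have e : ∀ b, (Lp.compMeasurePreserving (G b) (hm b) (hF.toL1 F) : ℝ → E) =ᵐ[volume]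
      fun x => F (x + b) := fun b => by
    refine (Lp.coeFn_compMeasurePreserving _ (hm b)).trans ?_
    exact (hm b).quasiMeasurePreserving.ae_eq_comp hF.coeFn_toL1
  filter_upwards [Lp.coeFn_sub (Lp.compMeasurePreserving (G b) (hm b) (hF.toL1 F))
    (Lp.compMeasurePreserving (G a) (hm a) (hF.toL1 F)), e a, e b] with x h1 h2 h3
  rw [h1, Pi.sub_apply, h2, h3]

/-- The linear change of variables `(t, x) ↦ (2 c t, x + c t)`. -/
def chg (c : ℝ) (hc : c ≠ 0) : (ℝ × ℝ) ≃L[ℝ] (ℝ × ℝ) :=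
  LinearEquiv.toContinuousLinearEquiv
    { toFun := fun p => (2 * c * p.1, p.2 + c * p.1)
      invFun := fun p => (p.1 / (2 * c), p.2 - p.1 / 2)
      map_add' := fun p q => by ext <;> simp <;> ring
      map_smul' := fun a p => by ext <;> simp <;> ring
      left_inv := fun p => by ext <;> simp <;> field_simp <;> ring
      right_inv := fun p => by ext <;> simp <;> field_simp <;> ring }

theorem chg_apply (c : ℝ) (hc : c ≠ 0) (p : ℝ × ℝ) :
    chg c hc p = (2 * c * p.1, p.2 + c * p.1) := rfl

theorem chg_symm_apply (c : ℝ) (hc : c ≠ 0) (p : ℝ × ℝ) :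
    (chg c hc).symm p = (p.1 / (2 * c), p.2 - p.1 / 2) := rfl

theorem integral_chg (c : ℝ) (hc : c ≠ 0) (F : ℝ × ℝ → E) (hF : ∫ p, F p = 0) :
    ∫ p, F (chg c hc p) = 0 := by
  have h1 := integral_map_equiv (μ := (volume : Measure (ℝ × ℝ)))
    (chg c hc).toHomeomorph.toMeasurableEquiv F
  have hd : LinearMap.det ((chg c hc).toLinearEquiv : (ℝ × ℝ) →ₗ[ℝ] (ℝ × ℝ)) ≠ 0 :=
    (LinearEquiv.isUnit_det' _).ne_zero
  have h2 := Measure.map_linearMap_addHaar_eq_smul_addHaar (volume : Measure (ℝ × ℝ)) hd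
  have h3 : Measure.map (chg c hc).toHomeomorph.toMeasurableEquiv (volume : Measure (ℝ × ℝ)) = _ :=
    h2
  rw [h3, integral_smul_measure, hF, smul_zero] at h1
  exact h1.symm

theorem ptime_eq {φ : ℝ × ℝ → ℝ} {p : ℝ × ℝ} (hφ : DifferentiableAt ℝ φ p) :
    ptime φ p = fderiv ℝ φ p (1, 0) := by
  have h1 : HasDerivAt (fun s : ℝ => (s, p.2)) ((1 : ℝ), (0 : ℝ)) p.1 :=
    (hasDerivAt_id _).prodMk (hasDerivAt_const _ _)
  exact (HasFDerivAt.comp_hasDerivAt p.1 (f := fun s : ℝ => (s, p.2)) hφ.hasFDerivAt h1).deriv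

theorem pspace_eq {φ : ℝ × ℝ → ℝ} {p : ℝ × ℝ} (hφ : DifferentiableAt ℝ φ p) :
    pspace φ p = fderiv ℝ φ p (0, 1) := by
  have h1 : HasDerivAt (fun s : ℝ => (p.1, s)) ((0 : ℝ), (1 : ℝ)) p.2 :=
    (hasDerivAt_const _ _).prodMk (hasDerivAt_id _)
  exact (HasFDerivAt.comp_hasDerivAt p.2 (f := fun s : ℝ => (p.1, s)) hφ.hasFDerivAt h1).deriv

theorem weak_chg {f : E → E} {c : ℝ} (hc : 0 < c) {w : ℝ → ℝ → E}
    (hw : ∀ φ : ℝ × ℝ → ℝ, ContDiff ℝ 1 φ → HasCompactSupport φ →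
      tsupport φ ⊆ Ioi (0 : ℝ) ×ˢ univ →
      ∫ p : ℝ × ℝ, (fderiv ℝ φ p (1, 0) • w p.1 p.2 +
        fderiv ℝ φ p (0, 1) • ((2 * c)⁻¹ • (f (w p.1 p.2) + c • w p.1 p.2))) = 0)
    {φ : ℝ × ℝ → ℝ} (hφ : ContDiff ℝ 1 φ) (hcs : HasCompactSupport φ)
    (hs : tsupport φ ⊆ Ioi (0 : ℝ) ×ˢ univ) :
    ∫ p : ℝ × ℝ, (ptime φ p • w (2 * c * p.1) (p.2 + c * p.1) +
      pspace φ p • f (w (2 * c * p.1) (p.2 + c * p.1))) = 0 := by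
  have hc0 : c ≠ 0 := hc.ne'
  set e := chg c hc0 with he
  have h := hw (φ ∘ e.symm) (hφ.comp e.symm.contDiff)
    (hcs.comp_homeomorph e.symm.toHomeomorph) (by
      have : tsupport (φ ∘ e.symm) = e.symm ⁻¹' tsupport φ :=
        tsupport_comp_eq_preimage φ e.symm.toHomeomorph
      rw [this]
      intro p hp
      have h1 := (hs hp).1
      rw [he, chg_symm_apply] at h1
      have h2 : 0 < p.1 / (2 * c) := h1
      refine ⟨?_, trivial⟩
      have h3 : 0 < p.1 / (2 * c) * (2 * c) := by positivity
      rwa [div_mul_cancel₀ _ (by positivity)] at h3)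
  have h2 := integral_chg c hc0 _ h
  have hd : Differentiable ℝ φ := hφ.differentiable (by simp)
  have h3 : ∀ p, fderiv ℝ (φ ∘ e.symm) (e p) = (fderiv ℝ φ p).comp (e.symm : (ℝ × ℝ) →L[ℝ] (ℝ × ℝ)) := by
    intro p
    have := e.symm.comp_right_fderiv (f := φ) (x := e p)
    rw [e.symm_apply_apply] at this
    exact this
  have e1 : e.symm ((1 : ℝ), (0 : ℝ)) = (2 * c)⁻¹ • ((1 : ℝ), (0 : ℝ)) - (2 : ℝ)⁻¹ • ((0 : ℝ), (1 : ℝ)) := by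
    rw [he, chg_symm_apply]; ext <;> simp
  have e2 : e.symm ((0 : ℝ), (1 : ℝ)) = ((0 : ℝ), (1 : ℝ)) := by
    rw [he, chg_symm_apply]; ext <;> simp
  have h4 : ∫ p : ℝ × ℝ, (2 * c)⁻¹ • (ptime φ p • w (2 * c * p.1) (p.2 + c * p.1) +
      pspace φ p • f (w (2 * c * p.1) (p.2 + c * p.1))) = 0 := by
    rw [← h2]
    refine integral_congr_ae (Eventually.of_forall fun p => ?_)
    have h5 : chg c hc0 p = e p := rfl
    simp only [h5, h3, ContinuousLinearMap.comp_apply, ContinuousLinearEquiv.coe_coe, e1, e2,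
      map_sub, map_smul, ptime_eq (hd p), pspace_eq (hd p)]
    rw [← h5, chg_apply]
    simp only [smul_eq_mul, smul_add, smul_smul, sub_smul]
    rw [show fderiv ℝ φ p (0, 1) * ((2 * c)⁻¹ * c) = 2⁻¹ * fderiv ℝ φ p (0, 1) by field_simp,
      mul_comm (fderiv ℝ φ p (0, 1)) (2 * c)⁻¹]
    abel
  rw [integral_smul] at h4
  exact (smul_eq_zero.1 h4).resolve_left (by positivity)

theorem continuity_chg {c C : ℝ} {w : ℝ → ℝ → E} (hm : Measurable (Function.uncurry w))
    (hi : ∀ t, Integrable (w t))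
    (hl : ∀ s t, ∫⁻ x, ‖w t x - w s x‖ₑ ≤ ENNReal.ofReal (C * |t - s|)) (t : ℝ) :
    Tendsto (fun s => ∫ x : ℝ, ‖w (2 * c * s) (x + c * s) - w (2 * c * t) (x + c * t)‖) (𝓝 t)
      (𝓝 0) := by
  have hi' : ∀ s a, Integrable fun x => w s (x + a) := fun s a => (hi s).comp_add_right a
  have hS : ∀ s t a b, Integrable fun x => w s (x + a) - w t (x + b) :=
    fun s t a b => (hi' s a).sub (hi' t b)
  have hS0 : ∀ s t, Integrable fun x => w s x - w t x := fun s t => (hi s).sub (hi t)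
  have h1 : ∀ s, ∫ x : ℝ, ‖w (2 * c * s) (x + c * s) - w (2 * c * t) (x + c * s)‖ ≤
      |C| * |2 * c * s - 2 * c * t| := by
    intro s
    rw [integral_add_right_eq_self (fun x => ‖w (2 * c * s) x - w (2 * c * t) x‖) (c * s),
      integral_norm_eq_lintegral_enorm (hS0 _ _).aestronglyMeasurable]
    refine ENNReal.toReal_le_of_le_ofReal (by positivity) ((hl _ _).trans ?_)
    exact ENNReal.ofReal_le_ofReal (mul_le_mul_of_nonneg_right (le_abs_self _) (abs_nonneg _))
  have h2 := (translation_tendsto (hi (2 * c * t)) (c * t)).comp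
    (show Tendsto (fun s : ℝ => c * s) (𝓝 t) (𝓝 (c * t)) from
      (show Continuous fun s : ℝ => c * s by fun_prop).tendsto t)
  have h3 : Tendsto (fun s : ℝ => |C| * |2 * c * s - 2 * c * t|) (𝓝 t) (𝓝 0) := by
    have : Continuous fun s : ℝ => |C| * |2 * c * s - 2 * c * t| := by fun_prop
    simpa using this.tendsto t
  have h4 := h3.add h2
  rw [add_zero] at h4
  refine squeeze_zero (fun s => integral_nonneg fun x => norm_nonneg _) (fun s => ?_) h4
  refine le_trans ?_ (add_le_add_left (h1 s) _)
  simp only [Function.comp]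
  rw [← integral_add (hS _ _ _ _).norm (hS _ _ _ _).norm]
  refine integral_mono (hS _ _ _ _).norm
    ((hS _ _ _ _).norm.add (hS _ _ _ _).norm) fun x => ?_
  exact norm_sub_le_norm_sub_add_norm_sub _ _ _

end Glimm

/-- **Glimm's global existence theorem.**
Let `u_t + f(u)_x = 0` be strictly hyperbolic (eigenvalues `λ₁(u) < ⋯ < λₙ(u)` with
eigenvectors `rᵢ(u) ≠ 0`), with each characteristic field either genuinely nonlinear
(`∇λᵢ·rᵢ > 0` everywhere) or linearly degenerate (`∇λᵢ·rᵢ = 0` everywhere).  Then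
there is `δ > 0` such that for every initial datum `ū ∈ L¹(ℝ;ℝⁿ)` of bounded
variation with `Tot.Var.{ū} ≤ δ`, the Cauchy problem has a weak solution defined
for all `t ≥ 0` with `u(0,·) = ū`. -/
theorem glimm_global_existence
    {n : ℕ} (f : EuclideanSpace ℝ (Fin n) → EuclideanSpace ℝ (Fin n))
    (hf : ContDiff ℝ 2 f)
    (lam : Fin n → EuclideanSpace ℝ (Fin n) → ℝ)
    (r : Fin n → EuclideanSpace ℝ (Fin n) → EuclideanSpace ℝ (Fin n))
    (hlam : ∀ i, ContDiff ℝ 1 (lam i)) (hr : ∀ i, ContDiff ℝ 1 (r i))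
    (hrne : ∀ i v, r i v ≠ 0)
    (hstrict : ∀ v, StrictMono fun i => lam i v)
    (heig : ∀ i v, fderiv ℝ f v (r i v) = lam i v • r i v)
    (hGNLorLD : ∀ i, (∀ v, 0 < fderiv ℝ (lam i) v (r i v)) ∨
      (∀ v, fderiv ℝ (lam i) v (r i v) = 0)) :
    ∃ δ > (0 : ℝ), ∀ ubar : ℝ → EuclideanSpace ℝ (Fin n),
      Integrable ubar →
      eVariationOn ubar Set.univ ≤ ENNReal.ofReal δ →
      ∃ u : ℝ → ℝ → EuclideanSpace ℝ (Fin n),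
        u 0 = ubar ∧ IsWeakSolution f u := by
  set c : ℝ := ∑ i, |lam i 0| + 1 with hcdef
  have hc : 0 < c := by positivity
  have hlc : ∀ i, |lam i 0| < c := fun i => by
    have := Finset.single_le_sum (f := fun i => |lam i 0|) (fun i _ => abs_nonneg _)
      (Finset.mem_univ i)
    linarith
  let g : EuclideanSpace ℝ (Fin n) → EuclideanSpace ℝ (Fin n) :=
    fun v => (2 * c)⁻¹ • (f v + c • v)
  have hg : ContDiff ℝ 2 g := (hf.add (contDiff_id.const_smul c)).const_smul _
  have hdf : HasFDerivAt f (fderiv ℝ f 0) 0 := (hf.differentiable (by simp) 0).hasFDerivAt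
  have hdg : fderiv ℝ g 0 = (2 * c)⁻¹ • (fderiv ℝ f 0 + c • ContinuousLinearMap.id ℝ _) :=
    ((hdf.add ((hasFDerivAt_id 0).const_smul c)).const_smul (2 * c)⁻¹).fderiv
  obtain ⟨Rd⟩ := Glimm.exists_RData_of_eig hg (fun i => r i 0)
    (fun i => (2 * c)⁻¹ * (lam i 0 + c)) (fun i => hrne i 0)
    (fun i j hij => by
      have := hstrict 0 hij
      simp only at this ⊢
      gcongr)
    (fun i => by
      have := (abs_lt.1 (hlc i)).1
      have h2 : 0 < lam i 0 + c := by linarith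
      positivity)
    (fun i => by
      have := (abs_lt.1 (hlc i)).2
      rw [inv_mul_lt_iff₀ (by positivity)]
      linarith)
    (fun i => by
      rw [hdg]
      simp only [smul_apply, add_apply, heig,
        ContinuousLinearMap.id_apply, mul_smul, add_smul])
    finrank_euclideanSpace_fin
  obtain ⟨δ, hδ, H⟩ := Glimm.part2 hg.continuous Rd
  refine ⟨δ, hδ, fun ubar hub htv => ?_⟩
  obtain ⟨w, C, hw0, hwm, hwi, hwl, hww⟩ := H ubar hub htv
  refine ⟨fun t x => w (2 * c * t) (x + c * t), ?_, ?_, ?_, ?_, ?_⟩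
  · funext x; simp [hw0]
  · exact hwm.comp (Glimm.chg c hc.ne').continuous.measurable
  · exact fun t _ => (hwi _).comp_add_right _
  · exact fun t _ => (Glimm.continuity_chg hwm hwi hwl t).mono_left nhdsWithin_le_nhds
  · exact fun φ h1 h2 h3 => Glimm.weak_chg hc hww h1 h2 h3
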